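/- arXiv:1406.0168 — 2 statements merged into one kernel-verified Lean document; each statement's English description precedes it below -/
import Mathlib

section
/- Let N > 13 be a real number and C₀, C₁, C₂ > 0. Let T > 0, let f : [0,T) × ℝ² × ℝ² → [0,∞) be measurable with f ≤ C₀ almost everywhere and sup_{0 ≤ t < T} ∫_{ℝ²}∫_{ℝ²} p_0 f(t,x,p) dp dx ≤ C₁, and let K : [0,T) × ℝ² → [0,∞) be measurable with sup_{0 ≤ t < T} ( ∫_{ℝ²} K(t,x)² dx )^{1/2} ≤ C₂. Define W_{S,1}(t,x) = ∫₀ᵗ ∫_{|y−x| ≤ t−s} ∫_{ℝ²} K(s,y) f(s,y,p) / ( p_0 √((t−s)² − |y−x|²) ) dp dy ds (the integral dominating the Glassey–Schaeffer term K_{S,1} in two dimensions). Then there exist constants C > 0 and k ≥ 0, depending only on N, C₀, C₁ and C₂ (not on T), such that ‖W_{S,1}‖_{L¹_t([0,T); L^{N+2}_x)}^{N+2} ≤ C (1+T)^k ‖f p_0^N‖_{L^∞_t([0,T); L¹_x L¹_p)}^{(N−4)/(2(N−1))}. -/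
open MeasureTheory Set
open scoped NNReal ENNReal

/-- `p₀ = √(1 + |p|²)` for `p ∈ ℝ²`. -/
noncomputable def pZero (p : EuclideanSpace ℝ (Fin 2)) : ℝ := Real.sqrt (1 + ‖p‖ ^ 2)

/-- The integral
`W_{S,1}(t,x) = ∫₀ᵗ∫_{|y−x|≤t−s}∫ K(s,y) f(s,y,p)/(p₀√((t−s)²−|y−x|²)) dp dy ds`
dominating the Glassey–Schaeffer term `K_{S,1}` in two dimensions. -/
noncomputable def WS1 (K : ℝ → EuclideanSpace ℝ (Fin 2) → ℝ)
    (f : ℝ → EuclideanSpace ℝ (Fin 2) → EuclideanSpace ℝ (Fin 2) → ℝ)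
    (t : ℝ) (x : EuclideanSpace ℝ (Fin 2)) : ℝ≥0∞ :=
  ∫⁻ s in Ioc (0 : ℝ) t, ∫⁻ y in {y | dist y x ≤ t - s},
    ∫⁻ p, ENNReal.ofReal (K s y * f s y p /
      (pZero p * Real.sqrt ((t - s) ^ 2 - dist y x ^ 2)))

/-- The `N`-th moment `∫∫ f(t,x,p) p₀^N dp dx` of `f` at time `t`. -/
noncomputable def momentN (f : ℝ → EuclideanSpace ℝ (Fin 2) → EuclideanSpace ℝ (Fin 2) → ℝ)
    (N : ℝ) (t : ℝ) : ℝ≥0∞ :=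
  ∫⁻ x, ∫⁻ p, ENNReal.ofReal (f t x p * pZero p ^ N)

namespace KS

abbrev E2 := EuclideanSpace ℝ (Fin 2)

theorem powInt_zero {β : ℝ} (h1 : β < 1) {ℓ : ℝ} (hℓ : 0 < ℓ) :
    ∫⁻ a in Ioc 0 ℓ, (ENNReal.ofReal |a|) ^ (-β) = ENNReal.ofReal (ℓ ^ (1 - β) / (1 - β)) := by
  have e1 : ∫⁻ a in Ioc 0 ℓ, (ENNReal.ofReal |a|) ^ (-β)
      = ∫⁻ a in Ioc 0 ℓ, ENNReal.ofReal (a ^ (-β)) := by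
    refine setLIntegral_congr_fun measurableSet_Ioc fun a ha => ?_
    rw [abs_of_pos ha.1, ENNReal.ofReal_rpow_of_pos ha.1]
  have hi : IntervalIntegrable (fun a : ℝ => a ^ (-β)) volume 0 ℓ :=
    intervalIntegral.intervalIntegrable_rpow' (by linarith)
  rw [e1, ← ofReal_integral_eq_lintegral_ofReal]
  · rw [← intervalIntegral.integral_of_le hℓ.le, integral_rpow (Or.inl (by linarith))]
    rw [Real.zero_rpow (by linarith)]
    congr 1
    rw [show -β + 1 = 1 - β by ring]; simp
  · exact (intervalIntegrable_iff_integrableOn_Ioc_of_le hℓ.le).1 hi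
  · refine (ae_restrict_iff' measurableSet_Ioc).2 (Filter.Eventually.of_forall fun a ha => ?_)
    exact Real.rpow_nonneg ha.1.le _

theorem powInt_sym {β : ℝ} (h1 : β < 1) {ℓ : ℝ} (hℓ : 0 < ℓ) (c : ℝ) :
    ∫⁻ a in Icc (c - ℓ) (c + ℓ), (ENNReal.ofReal |a - c|) ^ (-β)
      ≤ ENNReal.ofReal (2 * (ℓ ^ (1 - β) / (1 - β))) := by
  have hnn : 0 ≤ ℓ ^ (1 - β) / (1 - β) := div_nonneg (Real.rpow_nonneg hℓ.le _) (by linarith)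
  have e0 : ∫⁻ a in Icc (c - ℓ) (c + ℓ), (ENNReal.ofReal |a - c|) ^ (-β)
      = ∫⁻ a in Icc (-ℓ) ℓ, (ENNReal.ofReal |a|) ^ (-β) := by
    rw [← lintegral_indicator measurableSet_Icc, ← lintegral_indicator measurableSet_Icc,
      ← lintegral_sub_right_eq_self (fun a => (Icc (-ℓ) ℓ).indicator (fun a : ℝ => (ENNReal.ofReal |a|) ^ (-β)) a) c]
    congr 1; ext a
    simp only [indicator]
    congr 1
    simp only [mem_Icc, eq_iff_iff]
    constructor <;> rintro ⟨h, h'⟩ <;> constructor <;> linarith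
  have e1 : ∫⁻ a in Icc (-ℓ) 0, (ENNReal.ofReal |a|) ^ (-β)
      = ∫⁻ a in Ioc 0 ℓ, (ENNReal.ofReal |a|) ^ (-β) := by
    rw [setLIntegral_congr (Ico_ae_eq_Icc (μ := volume)).symm,
      ← lintegral_indicator measurableSet_Ico, ← lintegral_indicator measurableSet_Ioc,
      ← lintegral_neg_eq_self]
    congr 1; ext a
    simp only [indicator, abs_neg]
    congr 1
    simp only [mem_Ico, mem_Ioc, eq_iff_iff]
    constructor <;> rintro ⟨h, h'⟩ <;> constructor <;> linarith
  rw [e0]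
  calc _ ≤ ∫⁻ a in Icc (-ℓ) 0 ∪ Ioc 0 ℓ, (ENNReal.ofReal |a|) ^ (-β) := by
        refine lintegral_mono_set fun a ha => ?_
        by_cases h : a ≤ 0
        · exact Or.inl ⟨ha.1, h⟩
        · exact Or.inr ⟨not_le.1 h, ha.2⟩
    _ ≤ _ := lintegral_union_le _ _ _
    _ = _ := by
        rw [e1, powInt_zero h1 hℓ, ← ENNReal.ofReal_add hnn hnn]; congr 1; ring

theorem powInt {β : ℝ} (h0 : 0 ≤ β) (h1 : β < 1) {ℓ : ℝ} (hℓ : 0 < ℓ) {I : Set ℝ}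
    (hv : volume I ≤ ENNReal.ofReal ℓ) (c : ℝ) :
    ∫⁻ a in I, (ENNReal.ofReal |a - c|) ^ (-β)
      ≤ ENNReal.ofReal ((2 / (1 - β) + 1) * ℓ ^ (1 - β)) := by
  calc _ ≤ ∫⁻ a in Icc (c - ℓ) (c + ℓ) ∪ (I \ Icc (c - ℓ) (c + ℓ)),
        (ENNReal.ofReal |a - c|) ^ (-β) := by
        refine lintegral_mono_set fun a ha => ?_
        by_cases h : a ∈ Icc (c - ℓ) (c + ℓ)
        · exact Or.inl h
        · exact Or.inr ⟨ha, h⟩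
    _ ≤ _ := lintegral_union_le _ _ _
    _ ≤ ENNReal.ofReal (2 * (ℓ ^ (1 - β) / (1 - β))) + ENNReal.ofReal (ℓ ^ (1 - β)) := by
        gcongr
        · exact powInt_sym h1 hℓ c
        · calc _ ≤ ∫⁻ a in I \ Icc (c - ℓ) (c + ℓ), ENNReal.ofReal (ℓ ^ (-β)) := by
                refine setLIntegral_mono measurable_const fun a ha => ?_
                have : ℓ ≤ |a - c| := by
                  by_contra h
                  push Not at h
                  have := abs_lt.1 h
                  exact ha.2 ⟨by linarith, by linarith⟩
                rw [ENNReal.ofReal_rpow_of_pos (by linarith)]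
                exact ENNReal.ofReal_le_ofReal
                  (Real.rpow_le_rpow_of_nonpos hℓ this (by linarith))
            _ = ENNReal.ofReal (ℓ ^ (-β)) * volume (I \ Icc (c - ℓ) (c + ℓ)) := by simp
            _ ≤ ENNReal.ofReal (ℓ ^ (-β)) * ENNReal.ofReal ℓ := by
                gcongr; exact (measure_mono sdiff_subset).trans hv
            _ = _ := by
                rw [← ENNReal.ofReal_mul (Real.rpow_nonneg hℓ.le _)]
                congr 1
                rw [show 1 - β = -β + 1 by ring, Real.rpow_add_one hℓ.ne']
    _ = _ := by
        rw [← ENNReal.ofReal_add]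
        · congr 1; ring
        · have : 0 < 1 - β := by linarith
          positivity
        · positivity

theorem exists_coord (n : E2) (hn : ‖n‖ = 1) : ∃ Φ : E2 → ℝ × ℝ, MeasurePreserving Φ ∧
    (∀ z, (Φ z).1 = inner ℝ n z) ∧ (∀ z, ‖z‖ ^ 2 = (Φ z).1 ^ 2 + (Φ z).2 ^ 2) := by
  have ho : Orthonormal ℝ (({0} : Set (Fin 2)).domRestrict (fun _ : Fin 2 => n)) := by
    constructor
    · intro i; exact hn
    · intro i j hij
      exact absurd (Subsingleton.elim i j) hij
  obtain ⟨b, hb⟩ := ho.exists_orthonormalBasis_extension_of_card_eq (by simp)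
  refine ⟨fun z => MeasurableEquiv.finTwoArrow (WithLp.ofLp (b.repr z)), ?_, ?_, ?_⟩
  · exact (volume_preserving_finTwoArrow ℝ).comp
      ((PiLp.volume_preserving_ofLp (Fin 2)).comp b.measurePreserving_repr)
  · intro z
    have := hb 0 (by simp)
    simp [MeasurableEquiv.finTwoArrow, MeasurableEquiv.piFinTwo, b.repr_apply_apply, this]
  · intro z
    rw [← b.repr.norm_map z, EuclideanSpace.norm_sq_eq]
    simp [MeasurableEquiv.finTwoArrow, MeasurableEquiv.piFinTwo]

def annu (δ τ : ℝ) : Set E2 := {z | δ * τ / 2 < τ ^ 2 - ‖z‖ ^ 2 ∧ τ ^ 2 - ‖z‖ ^ 2 < 2 * δ * τ}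

theorem isOpen_annu (δ τ : ℝ) : IsOpen (annu δ τ) := by
  unfold annu
  rw [ofPred_and]
  apply IsOpen.inter
  · exact isOpen_lt (by fun_prop) (by fun_prop)
  · exact isOpen_lt (by fun_prop) (by fun_prop)

theorem measurableSet_annu (δ τ : ℝ) : MeasurableSet (annu δ τ) := (isOpen_annu δ τ).measurableSet

theorem slice_vol {δ τ a : ℝ} (hδ : 0 < δ) (hτ : 0 < τ) :
    volume {b : ℝ | δ * τ / 2 < τ ^ 2 - (a ^ 2 + b ^ 2) ∧ τ ^ 2 - (a ^ 2 + b ^ 2) < 2 * δ * τ}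
      ≤ (Ioo (-τ) τ).indicator (fun a => ENNReal.ofReal (4 * δ * τ / Real.sqrt (τ ^ 2 - a ^ 2))) a := by
  have hδτ := mul_pos hδ hτ
  by_cases ha : a ∈ Ioo (-τ) τ
  · rw [indicator_of_mem ha]
    have hB : 0 < τ ^ 2 - a ^ 2 := by nlinarith [ha.1, ha.2]
    set B := τ ^ 2 - a ^ 2 with hBdef
    set s := Real.sqrt B with hs
    have hs0 : 0 < s := Real.sqrt_pos.2 hB
    have hss : s ^ 2 = B := Real.sq_sqrt hB.le
    set w := 2 * δ * τ / s with hw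
    have hw0 : 0 < w := by positivity
    have hws : w * s = 2 * δ * τ := by rw [hw]; field_simp
    calc _ ≤ volume (Icc (-s) (-s + w) ∪ Icc (s - w) s) := by
          refine measure_mono fun b hb => ?_
          simp only [mem_ofPred_eq] at hb
          obtain ⟨hb1, hb2⟩ := hb
          have h1 : b ^ 2 < s ^ 2 := by rw [hss]; nlinarith
          have h2 : s ^ 2 - w * s < b ^ 2 := by rw [hss, hws]; linarith
          have hb' := abs_lt_of_sq_lt_sq h1 hs0.le
          rw [abs_lt] at hb'
          by_cases hb0 : 0 ≤ b
          · right
            refine ⟨?_, hb'.2.le⟩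
            by_contra hcon
            push Not at hcon
            nlinarith
          · left
            push Not at hb0
            refine ⟨hb'.1.le, ?_⟩
            by_contra hcon
            push Not at hcon
            nlinarith
      _ ≤ _ := measure_union_le _ _
      _ = _ := by
          rw [Real.volume_Icc, Real.volume_Icc, ← ENNReal.ofReal_add (by linarith) (by linarith)]
          congr 1
          rw [hw]; ring
  · rw [indicator_of_notMem ha]
    rw [nonpos_iff_eq_zero]
    convert measure_empty (μ := (volume : Measure ℝ))
    ext b
    simp only [mem_ofPred_eq, mem_empty_iff_false, iff_false, not_and]
    intro h1
    exfalso
    apply ha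
    have : a ^ 2 < τ ^ 2 := by nlinarith [sq_nonneg b]
    exact abs_lt.1 (abs_lt_of_sq_lt_sq this hτ.le)

theorem slice {δ τ : ℝ} (hδ : 0 < δ) (hτ : 0 < τ) (n : E2) (hn : ‖n‖ = 1) (ψ : ℝ → ℝ≥0∞)
    (hψ : Measurable ψ) :
    ∫⁻ z in annu δ τ, ψ (inner ℝ n z)
      ≤ ∫⁻ a in Ioo (-τ) τ, ψ a * ENNReal.ofReal (4 * δ * τ / Real.sqrt (τ ^ 2 - a ^ 2)) := by
  obtain ⟨Φ, hΦ, h1, h2⟩ := exists_coord n hn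
  set S : Set (ℝ × ℝ) := {q | δ * τ / 2 < τ ^ 2 - (q.1 ^ 2 + q.2 ^ 2) ∧
    τ ^ 2 - (q.1 ^ 2 + q.2 ^ 2) < 2 * δ * τ} with hS
  have hSm : MeasurableSet S := by
    rw [hS, ofPred_and]
    apply MeasurableSet.inter
    · exact measurableSet_lt (by fun_prop) (by fun_prop)
    · exact measurableSet_lt (by fun_prop) (by fun_prop)
  have hm0 : Measurable (S.indicator (fun q : ℝ × ℝ => ψ q.1)) :=
    (hψ.comp measurable_fst).indicator hSm
  have e1 : ∫⁻ z in annu δ τ, ψ (inner ℝ n z)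
      = ∫⁻ q : ℝ × ℝ, S.indicator (fun q => ψ q.1) q := by
    rw [← hΦ.lintegral_comp hm0,
      ← lintegral_indicator (measurableSet_annu δ τ)]
    congr 1; ext z
    simp only [indicator, annu, hS, mem_ofPred_eq, h2 z, h1 z]
  rw [e1, Measure.volume_eq_prod, lintegral_prod _ hm0.aemeasurable,
    ← lintegral_indicator measurableSet_Ioo]
  refine lintegral_mono fun a => ?_
  calc ∫⁻ b, S.indicator (fun q => ψ q.1) (a, b)
      = ∫⁻ b, ψ a * ({b : ℝ | δ * τ / 2 < τ ^ 2 - (a ^ 2 + b ^ 2) ∧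
          τ ^ 2 - (a ^ 2 + b ^ 2) < 2 * δ * τ}).indicator 1 b := by
        congr 1; ext b
        simp only [indicator, hS, mem_ofPred_eq]
        split_ifs <;> simp
    _ = ψ a * volume {b : ℝ | δ * τ / 2 < τ ^ 2 - (a ^ 2 + b ^ 2) ∧
          τ ^ 2 - (a ^ 2 + b ^ 2) < 2 * δ * τ} := by
        have hm : MeasurableSet {b : ℝ | δ * τ / 2 < τ ^ 2 - (a ^ 2 + b ^ 2) ∧
          τ ^ 2 - (a ^ 2 + b ^ 2) < 2 * δ * τ} := hSm.preimage (measurable_prodMk_left (x := a))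
        rw [lintegral_const_mul _ (measurable_one.indicator hm), lintegral_indicator_one hm]
    _ ≤ _ := by
        refine (mul_le_mul_right (slice_vol hδ hτ) _).trans ?_
        simp only [indicator]
        split_ifs <;> simp

end KS

namespace KS

theorem inv_sqrt_bound {τ a : ℝ} (hτ : 0 < τ) (ha : a ∈ Ioo (-τ) τ) {c : ℝ} (hc : 0 ≤ c) :
    ENNReal.ofReal (c * τ / Real.sqrt (τ ^ 2 - a ^ 2)) ≤ ENNReal.ofReal (c * √τ) *
      ((ENNReal.ofReal |a - τ|) ^ (-(1/2) : ℝ) + (ENNReal.ofReal |a - (-τ)|) ^ (-(1/2) : ℝ)) := by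
  have key : ∀ w : ℝ, 0 < w → w * τ ≤ τ ^ 2 - a ^ 2 →
      ENNReal.ofReal (c * τ / Real.sqrt (τ ^ 2 - a ^ 2)) ≤ ENNReal.ofReal (c * √τ) *
        (ENNReal.ofReal w) ^ (-(1/2) : ℝ) := by
    intro w hw hle
    rw [ENNReal.ofReal_rpow_of_pos hw, ← ENNReal.ofReal_mul (by positivity)]
    apply ENNReal.ofReal_le_ofReal
    rw [Real.rpow_neg hw.le, ← Real.sqrt_eq_rpow, ← div_eq_mul_inv]
    have h1 : √w * √τ ≤ √(τ ^ 2 - a ^ 2) := by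
      rw [← Real.sqrt_mul hw.le]; exact Real.sqrt_le_sqrt hle
    have hw' := Real.sqrt_pos.2 hw
    have hτ' := Real.sqrt_pos.2 hτ
    rw [div_le_div_iff₀ (lt_of_lt_of_le (by positivity) h1) hw']
    calc c * τ * √w = c * √τ * (√w * √τ) := by
          nth_rewrite 1 [← Real.mul_self_sqrt hτ.le]; ring
      _ ≤ _ := by gcongr
  obtain ⟨h1, h2⟩ := ha
  by_cases h : 0 ≤ a
  · refine (key |a - τ| (abs_pos.2 (by linarith)) ?_).trans ?_
    · rw [abs_of_neg (by linarith)]; nlinarith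
    · gcongr; exact le_self_add
  · push Not at h
    refine (key |a - (-τ)| (abs_pos.2 (by linarith)) ?_).trans ?_
    · rw [abs_of_pos (by linarith)]; nlinarith
    · gcongr; exact le_add_self

theorem strip_set {δ τ : ℝ} (hδ : 0 < δ) (hτ : 0 < τ) (n : E2) (hn : ‖n‖ = 1) {I : Set ℝ}
    (hI : MeasurableSet I) {ℓ : ℝ} (hℓ : 0 < ℓ) (hv : volume I ≤ ENNReal.ofReal ℓ) :
    volume (annu δ τ ∩ {z | inner ℝ n z ∈ I}) ≤ ENNReal.ofReal (40 * δ * √(τ * ℓ)) := by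
  have hm : MeasurableSet {z : E2 | inner ℝ n z ∈ I} := by
    have : Measurable (fun z : E2 => (inner ℝ n z : ℝ)) := by fun_prop
    exact this hI
  have mA : ∀ c : ℝ, Measurable fun a : ℝ => (ENNReal.ofReal |a - c|) ^ (-(1/2) : ℝ) := by
    intro c
    fun_prop
  have mB : ∀ c d : ℝ, Measurable fun a : ℝ => (ENNReal.ofReal |a - c|) ^ (-(1/2) : ℝ) +
      (ENNReal.ofReal |a - d|) ^ (-(1/2) : ℝ) := fun c d => (mA c).add (mA d)
  calc volume (annu δ τ ∩ {z | inner ℝ n z ∈ I})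
      = ∫⁻ z in annu δ τ, I.indicator 1 (inner ℝ n z) := by
        rw [← lintegral_indicator (measurableSet_annu δ τ), ← lintegral_indicator_one
          ((measurableSet_annu δ τ).inter hm)]
        congr 1; ext z
        simp only [indicator, mem_inter_iff, mem_ofPred_eq]
        split_ifs <;> simp_all
    _ ≤ ∫⁻ a in Ioo (-τ) τ, I.indicator 1 a *
        ENNReal.ofReal (4 * δ * τ / Real.sqrt (τ ^ 2 - a ^ 2)) :=
        slice hδ hτ n hn _ (measurable_one.indicator hI)
    _ ≤ ∫⁻ a in Ioo (-τ) τ, I.indicator (fun a => ENNReal.ofReal (4 * δ * √τ) *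
      ((ENNReal.ofReal |a - τ|) ^ (-(1/2) : ℝ) + (ENNReal.ofReal |a - (-τ)|) ^ (-(1/2) : ℝ))) a := by
        refine setLIntegral_mono' measurableSet_Ioo fun a ha => ?_
        simp only [indicator]
        split_ifs
        · simpa using inv_sqrt_bound hτ ha (c := 4 * δ) (by positivity)
        · simp
    _ ≤ ∫⁻ a, I.indicator (fun a => ENNReal.ofReal (4 * δ * √τ) *
      ((ENNReal.ofReal |a - τ|) ^ (-(1/2) : ℝ) + (ENNReal.ofReal |a - (-τ)|) ^ (-(1/2) : ℝ))) a :=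
        setLIntegral_le_lintegral _ _
    _ = ENNReal.ofReal (4 * δ * √τ) * ((∫⁻ a in I, (ENNReal.ofReal |a - τ|) ^ (-(1/2) : ℝ))
        + ∫⁻ a in I, (ENNReal.ofReal |a - (-τ)|) ^ (-(1/2) : ℝ)) := by
        rw [lintegral_indicator hI, lintegral_const_mul _ (mB τ (-τ)),
          lintegral_add_left (mA _)]
    _ ≤ ENNReal.ofReal (4 * δ * √τ) * (ENNReal.ofReal (5 * √ℓ) + ENNReal.ofReal (5 * √ℓ)) := by
        have h := fun c => powInt (β := 1/2) (by norm_num) (by norm_num) hℓ hv c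
        norm_num [← Real.sqrt_eq_rpow] at h
        gcongr
        · simpa using h τ
        · simpa using h (-τ)
    _ = _ := by
        rw [← ENNReal.ofReal_add (by positivity) (by positivity), ← ENNReal.ofReal_mul (by positivity),
          Real.sqrt_mul hτ.le]
        congr 1; ring

theorem strip {δ τ : ℝ} (hδ : 0 < δ) (hτ : 0 < τ) (n : E2) (hn : ‖n‖ = 1) (c : ℝ) {ℓ : ℝ}
    (hℓ : 0 < ℓ) :
    volume (annu δ τ ∩ {z | |inner ℝ n z - c| ≤ ℓ}) ≤ ENNReal.ofReal (60 * δ * √(τ * ℓ)) := by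
  have h := strip_set hδ hτ n hn (I := Icc (c - ℓ) (c + ℓ)) measurableSet_Icc (ℓ := 2 * ℓ)
    (by positivity) (by rw [Real.volume_Icc]; apply ENNReal.ofReal_le_ofReal; linarith)
  calc _ ≤ _ := measure_mono (by
        rintro z ⟨h1, h2⟩
        refine ⟨h1, ?_⟩
        simp only [mem_ofPred_eq] at h2 ⊢
        rw [abs_le] at h2
        exact ⟨by linarith, by linarith⟩)
    _ ≤ _ := h
    _ ≤ _ := by
        apply ENNReal.ofReal_le_ofReal
        rw [show τ * (2 * ℓ) = 2 * (τ * ℓ) by ring, Real.sqrt_mul (by norm_num)]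
        have : √2 ≤ 3/2 := by rw [Real.sqrt_le_left (by norm_num)]; norm_num
        have h0 : 0 ≤ δ * √(τ * ℓ) := by positivity
        nlinarith

theorem exists_unit : ∃ n : E2, ‖n‖ = 1 := ⟨EuclideanSpace.single 0 1, by simp⟩

theorem annu_norm_lt {δ τ : ℝ} (hδ : 0 < δ) (hτ : 0 < τ) {z : E2} (hz : z ∈ annu δ τ) : ‖z‖ < τ := by
  have := hz.1
  have h := mul_pos hδ hτ
  nlinarith [norm_nonneg z]

theorem area {δ τ : ℝ} (hδ : 0 < δ) (hτ : 0 < τ) :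
    volume (annu δ τ) ≤ ENNReal.ofReal (60 * δ * τ) := by
  obtain ⟨n, hn⟩ := exists_unit
  have h := strip hδ hτ n hn 0 hτ
  rw [Real.sqrt_mul_self hτ.le] at h
  refine le_trans (measure_mono ?_) h
  intro z hz
  refine ⟨hz, ?_⟩
  have h1 := abs_real_inner_le_norm n z
  have h2 := annu_norm_lt hδ hτ hz
  rw [hn] at h1
  simp only [mem_ofPred_eq, sub_zero]
  linarith

theorem trans_weight {δ τ : ℝ} (hδ : 0 < δ) (hτ : 0 < τ) {a : ℝ} (ha : |a| ≤ τ / 2) :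
    ENNReal.ofReal (4 * δ * τ / Real.sqrt (τ ^ 2 - a ^ 2)) ≤ ENNReal.ofReal (8 * δ) := by
  apply ENNReal.ofReal_le_ofReal
  have h : τ / 2 ≤ √(τ ^ 2 - a ^ 2) := by
    apply Real.le_sqrt_of_sq_le
    have := abs_le.1 ha
    nlinarith
  rw [div_le_iff₀ (by linarith)]
  nlinarith

theorem transversal {δ τ : ℝ} (hδ : 0 < δ) (hτ : 0 < τ) (n : E2) (hn : ‖n‖ = 1) (c : ℝ) {ℓ : ℝ}
    (hℓ : 0 < ℓ) :
    volume (annu δ τ ∩ {z | |inner ℝ n z - c| ≤ ℓ ∧ |inner ℝ n z| ≤ τ / 2})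
      ≤ ENNReal.ofReal (16 * δ * ℓ) := by
  set I : Set ℝ := {a | |a - c| ≤ ℓ ∧ |a| ≤ τ / 2} with hI'
  have hI : MeasurableSet I := by
    rw [hI', ofPred_and]
    exact (measurableSet_le (by fun_prop) (by fun_prop)).inter
      (measurableSet_le (by fun_prop) (by fun_prop))
  have hIm : ∀ a, a ∈ I ↔ |a - c| ≤ ℓ ∧ |a| ≤ τ / 2 := fun a => Iff.rfl
  have hm : MeasurableSet {z : E2 | inner ℝ n z ∈ I} := by
    have : Measurable (fun z : E2 => (inner ℝ n z : ℝ)) := by fun_prop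
    exact this hI
  calc volume (annu δ τ ∩ {z | inner ℝ n z ∈ I})
      = ∫⁻ z in annu δ τ, I.indicator 1 (inner ℝ n z) := by
        rw [← lintegral_indicator (measurableSet_annu δ τ), ← lintegral_indicator_one
          ((measurableSet_annu δ τ).inter hm)]
        congr 1; ext z
        by_cases h1 : z ∈ annu δ τ <;> by_cases h2 : inner ℝ n z ∈ I <;>
          simp only [indicator, mem_inter_iff, h1, h2, mem_ofPred_eq] <;> simp
    _ ≤ ∫⁻ a in Ioo (-τ) τ, I.indicator 1 a *
        ENNReal.ofReal (4 * δ * τ / Real.sqrt (τ ^ 2 - a ^ 2)) :=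
        slice hδ hτ n hn _ (measurable_one.indicator hI)
    _ ≤ ∫⁻ a, I.indicator 1 a *
        ENNReal.ofReal (4 * δ * τ / Real.sqrt (τ ^ 2 - a ^ 2)) := setLIntegral_le_lintegral _ _
    _ ≤ ∫⁻ a, I.indicator (fun _ => ENNReal.ofReal (8 * δ)) a := by
        refine lintegral_mono fun a => ?_
        by_cases ha : a ∈ I
        · simpa [ha] using trans_weight hδ hτ ha.2
        · simp [ha]
    _ = ENNReal.ofReal (8 * δ) * volume I := by rw [lintegral_indicator hI]; simp
    _ ≤ ENNReal.ofReal (8 * δ) * volume (Icc (c - ℓ) (c + ℓ)) := by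
        gcongr
        intro a ha
        have := abs_le.1 ha.1
        exact ⟨by linarith, by linarith⟩
    _ = _ := by
        rw [Real.volume_Icc, ← ENNReal.ofReal_mul (by positivity)]
        congr 1; ring

/-- basic inclusion for two annuli -/
theorem two_annu {δ τ τ' : ℝ} (hδ : 0 < δ) (hτ : 0 < τ) (hτ' : 0 < τ') (hle : τ' ≤ τ) {u z : E2}
    (hu : u ≠ 0)
    (hz : z ∈ annu δ τ') (hzu : z + u ∈ annu δ τ) :
    |inner ℝ (‖u‖⁻¹ • u) z - (τ ^ 2 - τ' ^ 2 - ‖u‖ ^ 2) / (2 * ‖u‖)| ≤ δ * τ / ‖u‖ := by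
  have hun : 0 < ‖u‖ := norm_pos_iff.2 hu
  have h := norm_add_sq_real z u
  obtain ⟨h1, h2⟩ := hz
  obtain ⟨h3, h4⟩ := hzu
  rw [inner_smul_left, real_inner_comm]
  simp only [map_inv₀, conj_trivial]
  have hp := mul_pos hδ hτ
  have hp' := mul_pos hδ hτ'
  have hpp : δ * τ' ≤ δ * τ := by gcongr
  rw [show ‖u‖⁻¹ * inner ℝ z u - (τ ^ 2 - τ' ^ 2 - ‖u‖ ^ 2) / (2 * ‖u‖)
    = (2 * inner ℝ z u - (τ ^ 2 - τ' ^ 2 - ‖u‖ ^ 2)) / (2 * ‖u‖) by field_simp]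
  rw [abs_div, abs_of_pos (by positivity : 0 < 2 * ‖u‖), div_le_div_iff₀ (by positivity) hun]
  rw [show δ * τ * (2 * ‖u‖) = 2 * (δ * τ) * ‖u‖ by ring]
  gcongr
  rw [abs_le]
  constructor <;> nlinarith

theorem norm_inv_smul {u : E2} (hu : u ≠ 0) : ‖(‖u‖⁻¹ • u)‖ = 1 := by
  have hun : 0 < ‖u‖ := norm_pos_iff.2 hu
  rw [norm_smul, norm_inv, norm_norm, inv_mul_cancel₀ hun.ne']

theorem k_same_aux {δ τ : ℝ} (hδ : 0 < δ) (hτ : 0 < τ) {u : E2} (hu : u ≠ 0)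
    (h1 : ‖u‖ ≤ τ / 4) (h2 : δ * τ / ‖u‖ ≤ τ / 4) :
    volume {z | z ∈ annu δ τ ∧ z + u ∈ annu δ τ} ≤ ENNReal.ofReal (16 * δ * (δ * τ / ‖u‖)) := by
  have hun : 0 < ‖u‖ := norm_pos_iff.2 hu
  refine le_trans (measure_mono ?_) (transversal hδ hτ (‖u‖⁻¹ • u) (norm_inv_smul hu)
    ((τ ^ 2 - τ ^ 2 - ‖u‖ ^ 2) / (2 * ‖u‖)) (ℓ := δ * τ / ‖u‖) (by positivity))
  rintro z ⟨hz, hzu⟩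
  have h := two_annu hδ hτ hτ le_rfl hu hz hzu
  refine ⟨hz, h, ?_⟩
  have e : (τ ^ 2 - τ ^ 2 - ‖u‖ ^ 2) / (2 * ‖u‖) = - ‖u‖ / 2 := by field_simp; ring
  rw [e] at h
  rw [abs_le] at h ⊢
  constructor <;> linarith [h.1, h.2]

theorem k_same_far {δ τ : ℝ} (hδ : 0 < δ) (hτ : 0 < τ) {u : E2} (hu : δ * τ ≤ ‖u‖ ^ 2) :
    volume {z | z ∈ annu δ τ ∧ z + u ∈ annu δ τ} ≤ ENNReal.ofReal (120 * δ * √(δ * τ)) := by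
  have hp := mul_pos hδ hτ
  have hun : 0 < ‖u‖ := by
    by_contra h
    have : ‖u‖ = 0 := le_antisymm (not_lt.1 h) (norm_nonneg _)
    rw [this] at hu; norm_num at hu; linarith
  have hu0 : u ≠ 0 := norm_pos_iff.1 hun
  have hs : √(δ * τ) ≤ ‖u‖ := Real.sqrt_le_iff.2 ⟨hun.le, hu⟩
  have hss := Real.mul_self_sqrt hp.le
  have hs0 := Real.sqrt_pos.2 hp
  by_cases h : ‖u‖ ≤ τ / 4
  · refine (k_same_aux hδ hτ hu0 h ?_).trans ?_
    · refine le_trans ?_ h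
      rw [div_le_iff₀ hun]; nlinarith
    · apply ENNReal.ofReal_le_ofReal
      have : δ * τ / ‖u‖ ≤ √(δ * τ) := by rw [div_le_iff₀ hun]; nlinarith
      nlinarith [mul_pos hδ hs0]
  · push Not at h
    refine le_trans (measure_mono ?_) ((strip hδ hτ (‖u‖⁻¹ • u) (norm_inv_smul hu0)
      ((τ ^ 2 - τ ^ 2 - ‖u‖ ^ 2) / (2 * ‖u‖)) (ℓ := 4 * δ) (by positivity)).trans ?_)
    · rintro z ⟨hz, hzu⟩
      refine ⟨hz, (two_annu hδ hτ hτ le_rfl hu0 hz hzu).trans ?_⟩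
      rw [div_le_iff₀ hun]; nlinarith
    · apply ENNReal.ofReal_le_ofReal
      rw [show τ * (4 * δ) = 2 ^ 2 * (δ * τ) by ring, Real.sqrt_mul (by norm_num),
        Real.sqrt_sq (by norm_num)]
      apply le_of_eq; ring

theorem k_same_near {δ τ : ℝ} (hδ : 0 < δ) (hτ : 0 < τ) {u : E2} (hu : ‖u‖ ^ 2 < δ * τ) :
    ENNReal.ofReal ‖u‖ * volume {z | z ∈ annu δ τ ∧ z + u ∈ annu δ τ}
      ≤ ENNReal.ofReal (240 * δ ^ 2 * τ) := by
  have hp := mul_pos hδ hτ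
  by_cases h : 4 * δ ≤ ‖u‖
  · have hun : 0 < ‖u‖ := by linarith
    refine (mul_le_mul_right (k_same_aux hδ hτ (norm_pos_iff.1 hun) ?_ ?_) _).trans ?_
    · nlinarith
    · rw [div_le_iff₀ hun]; nlinarith
    · rw [← ENNReal.ofReal_mul (by positivity)]
      apply ENNReal.ofReal_le_ofReal
      have : ‖u‖ * (16 * δ * (δ * τ / ‖u‖)) = 16 * δ ^ 2 * τ := by field_simp
      rw [this]
      have : 0 < δ ^ 2 * τ := by positivity
      linarith
  · push Not at h
    calc _ ≤ ENNReal.ofReal (4 * δ) * ENNReal.ofReal (60 * δ * τ) := by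
          gcongr
          exact (measure_mono fun z hz => hz.1).trans (area hδ hτ)
      _ = _ := by
          rw [← ENNReal.ofReal_mul (by positivity)]; congr 1; ring

theorem k_diff_aux {δ τ τ' : ℝ} (hδ : 0 < δ) (hτ : 0 < τ) (hτ' : 0 < τ') (hlt : τ' < τ) (u : E2) :
    volume {z | z ∈ annu δ τ' ∧ z + u ∈ annu δ τ}
      ≤ ENNReal.ofReal (120 * δ * √(δ * τ * τ' / (τ - τ'))) := by
  set d := τ - τ' with hd
  have hd0 : 0 < d := by linarith
  by_cases h : d < 4 * δ
  · refine (measure_mono fun z hz => hz.1).trans ((area hδ hτ').trans ?_)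
    apply ENNReal.ofReal_le_ofReal
    have : τ' / 2 ≤ √(δ * τ * τ' / d) := by
      apply Real.le_sqrt_of_sq_le
      rw [le_div_iff₀ hd0]
      have : τ' * d ≤ τ * (4 * δ) := by gcongr
      nlinarith
    nlinarith
  · push Not at h
    rcases eq_empty_or_nonempty {z | z ∈ annu δ τ' ∧ z + u ∈ annu δ τ} with he | ⟨z, hz, hzu⟩
    · rw [he]; simp
    have a1 := annu_norm_lt hδ hτ' hz
    have a2 : τ - 2 * δ < ‖z + u‖ := by
      have := hzu.2
      have h0 := norm_nonneg (z + u)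
      have h2 := annu_norm_lt hδ hτ hzu
      by_contra hcon
      push Not at hcon
      nlinarith
    have a3 := norm_add_le z u
    have hu : d / 2 ≤ ‖u‖ := by linarith
    have hun : 0 < ‖u‖ := by linarith
    refine (measure_mono ?_).trans ((strip hδ hτ' (‖u‖⁻¹ • u) (norm_inv_smul (norm_pos_iff.1 hun))
      ((τ ^ 2 - τ' ^ 2 - ‖u‖ ^ 2) / (2 * ‖u‖)) (ℓ := δ * τ / ‖u‖) (by positivity)).trans ?_)
    · rintro z ⟨hz, hzu⟩
      exact ⟨hz, two_annu hδ hτ hτ' hlt.le (norm_pos_iff.1 hun) hz hzu⟩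
    · apply ENNReal.ofReal_le_ofReal
      have : √(τ' * (δ * τ / ‖u‖)) ≤ 2 * √(δ * τ * τ' / d) := by
        rw [Real.sqrt_le_left (by positivity), mul_pow, Real.sq_sqrt (by positivity)]
        rw [show τ' * (δ * τ / ‖u‖) = (δ * τ * τ') / ‖u‖ by ring, ← mul_div_assoc,
          div_le_div_iff₀ hun hd0]
        have : 0 < δ * τ * τ' := by positivity
        nlinarith
      have := mul_le_mul_of_nonneg_left this (by positivity : 0 ≤ 60 * δ)
      linarith

theorem k_diff {δ τ τ' : ℝ} (hδ : 0 < δ) (hτ : 0 < τ) (hτ' : 0 < τ') (x x' : E2) :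
    volume {y | y - x ∈ annu δ τ ∧ y - x' ∈ annu δ τ'}
      ≤ ENNReal.ofReal (120 * δ * √(δ * τ * τ')) * (ENNReal.ofReal |τ - τ'|) ^ (-(1/2) : ℝ) := by
  have tr : ∀ (a b : ℝ) (v w : E2), volume {y | y - v ∈ annu δ a ∧ y - w ∈ annu δ b}
      = volume {z | z ∈ annu δ b ∧ z + (w - v) ∈ annu δ a} := by
    intro a b v w
    rw [← measure_preimage_add_right volume w]
    congr 1; ext z
    simp only [mem_preimage, mem_ofPred_eq]
    rw [show z + w - v = z + (w - v) by abel, show z + w - w = z by abel, and_comm]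
  have fin : ∀ a b : ℝ, 0 < b → b < a → ENNReal.ofReal (120 * δ * √(δ * a * b / (a - b)))
      = ENNReal.ofReal (120 * δ * √(δ * a * b)) * (ENNReal.ofReal |a - b|) ^ (-(1/2) : ℝ) := by
    intro a b hb hab
    have h : 0 < a - b := by linarith
    have ha : 0 < a := by linarith
    rw [abs_of_pos h, ENNReal.ofReal_rpow_of_pos h, ← ENNReal.ofReal_mul (by positivity),
      Real.rpow_neg h.le, ← Real.sqrt_eq_rpow, Real.sqrt_div (by positivity)]
    congr 1; field_simp
  rcases lt_trichotomy τ τ' with h | h | h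
  · have e : {y | y - x ∈ annu δ τ ∧ y - x' ∈ annu δ τ'} = {y | y - x' ∈ annu δ τ' ∧ y - x ∈ annu δ τ} := by
      ext y; exact and_comm
    rw [e, tr, show δ * τ * τ' = δ * τ' * τ by ring, abs_sub_comm, ← fin _ _ hτ h]
    exact k_diff_aux hδ hτ' hτ h _
  · subst h
    have : 0 < 120 * δ * √(δ * τ * τ) := by positivity
    simp [ENNReal.zero_rpow_of_neg, ENNReal.mul_top, this]
  · rw [tr, ← fin _ _ hτ' h]
    exact k_diff_aux hδ hτ hτ' h _

theorem exists_perp (v : E2) : ∃ n : E2, ‖n‖ = 1 ∧ inner ℝ n v = (0 : ℝ) := by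
  by_cases hv : v = 0
  · obtain ⟨n, hn⟩ := exists_unit
    exact ⟨n, hn, by simp [hv]⟩
  · set w : E2 := !₂[-v 1, v 0] with hw
    have hw0 : w ≠ 0 := by
      intro h
      apply hv
      have h0 := congrArg (fun z : E2 => z 0) h
      have h1 := congrArg (fun z : E2 => z 1) h
      simp [hw] at h0 h1
      ext i; fin_cases i <;> simp [h0, h1]
    refine ⟨‖w‖⁻¹ • w, norm_inv_smul hw0, ?_⟩
    rw [inner_smul_left]
    simp [hw, PiLp.inner_apply, Fin.sum_univ_two]
    right; ring

theorem nearweight {δ τ β : ℝ} (hδ : 0 < δ) (hτ : 0 < τ) (h0 : 0 ≤ β) (h1 : β < 1) (x y : E2) :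
    ∫⁻ y' in {y' | y' - x ∈ annu δ τ ∧ ‖y - y'‖ ^ 2 < δ * τ}, (ENNReal.ofReal ‖y - y'‖) ^ (-β)
      ≤ ENNReal.ofReal ((16 * (2 / (1 - β) + 1) + 120) * δ * √(δ * τ) ^ (1 - β)) := by
  obtain ⟨n, hn, hperp⟩ := exists_perp (y - x)
  have hp := mul_pos hδ hτ
  set L := √(δ * τ) with hL
  have hL0 : 0 < L := Real.sqrt_pos.2 hp
  have hLL : L ^ 2 = δ * τ := Real.sq_sqrt hp.le
  set J : Set ℝ := Icc (-L) L with hJ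
  set ψ : ℝ → ℝ≥0∞ := J.indicator (fun a => (ENNReal.ofReal |a - 0|) ^ (-β)) with hψ
  have hψm : Measurable ψ := by
    rw [hψ]
    apply Measurable.indicator _ measurableSet_Icc
    fun_prop
  have hψi : ∫⁻ a, ψ a ≤ ENNReal.ofReal ((2 / (1 - β) + 1) * (2 * L) ^ (1 - β)) := by
    rw [hψ, lintegral_indicator measurableSet_Icc]
    exact powInt h0 h1 (by positivity) (by rw [Real.volume_Icc]; ring_nf; rfl) 0
  have hmS : MeasurableSet {y' : E2 | y' - x ∈ annu δ τ ∧ ‖y - y'‖ ^ 2 < δ * τ} := by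
    rw [ofPred_and]
    refine MeasurableSet.inter ?_ ?_
    · exact (measurableSet_annu δ τ).preimage (measurable_sub_const x)
    · exact measurableSet_lt (by fun_prop) (by fun_prop)
  have step1 : ∫⁻ y' in {y' | y' - x ∈ annu δ τ ∧ ‖y - y'‖ ^ 2 < δ * τ},
      (ENNReal.ofReal ‖y - y'‖) ^ (-β) ≤ ∫⁻ z in annu δ τ, ψ (inner ℝ n z) := by
    rw [← lintegral_indicator hmS, ← lintegral_indicator (measurableSet_annu δ τ),
      ← lintegral_add_right_eq_self _ x]
    refine lintegral_mono fun z => ?_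
    simp only [indicator, mem_ofPred_eq, add_sub_cancel_right]
    by_cases hz : z ∈ annu δ τ ∧ ‖y - (z + x)‖ ^ 2 < δ * τ
    · have ha : |inner ℝ n z| ≤ ‖y - (z + x)‖ := by
        have e : (inner ℝ n z : ℝ) = - inner ℝ n (y - (z + x)) := by
          rw [show y - (z + x) = (y - x) - z by abel, inner_sub_right, hperp]; ring
        rw [e, abs_neg]
        have := abs_real_inner_le_norm n (y - (z + x))
        rwa [hn, one_mul] at this
      have hin : (inner ℝ n z : ℝ) ∈ J := by
        rw [hJ, mem_Icc, ← abs_le]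
        apply ha.trans
        apply Real.le_sqrt_of_sq_le hz.2.le
      rw [if_pos ⟨by simpa using hz.1, hz.2⟩, if_pos hz.1, hψ, indicator_of_mem hin, sub_zero]
      rw [ENNReal.rpow_neg, ENNReal.rpow_neg]
      gcongr
    · rw [if_neg (by simpa using hz)]; exact bot_le
  refine step1.trans ((slice hδ hτ n hn ψ hψm).trans ?_)
  set I : Set ℝ := {a | |a| ≤ τ / 2} with hI
  have hIm : MeasurableSet I := measurableSet_le (by fun_prop) (by fun_prop)
  have hsplit : ∀ a ∈ Ioo (-τ) τ, ψ a * ENNReal.ofReal (4 * δ * τ / Real.sqrt (τ ^ 2 - a ^ 2))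
      ≤ ENNReal.ofReal (8 * δ) * ψ a + ENNReal.ofReal (2 * L ^ (1 - β) / τ) *
        (ENNReal.ofReal (4 * δ * √τ) *
      ((ENNReal.ofReal |a - τ|) ^ (-(1/2) : ℝ) + (ENNReal.ofReal |a - (-τ)|) ^ (-(1/2) : ℝ))) := by
    intro a ha
    by_cases haI : |a| ≤ τ / 2
    · refine le_trans ?_ le_self_add
      rw [mul_comm]
      gcongr ?_ * _
      exact trans_weight hδ hτ haI
    · refine le_trans ?_ le_add_self
      push Not at haI
      gcongr ?_ * ?_
      · simp only [hψ, indicator]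
        split_ifs with hJa
        · rw [hJ, mem_Icc, ← abs_le] at hJa
          have hapos : 0 < |a - 0| := by rw [sub_zero]; linarith
          rw [ENNReal.ofReal_rpow_of_pos hapos, sub_zero]
          rw [sub_zero] at hapos
          apply ENNReal.ofReal_le_ofReal
          rw [show -β = (1 - β) - 1 by ring, Real.rpow_sub_one hapos.ne', div_le_div_iff₀ hapos hτ]
          have : |a| ^ (1 - β) ≤ L ^ (1 - β) := by
            apply Real.rpow_le_rpow hapos.le hJa; linarith
          have h3 : 0 ≤ L ^ (1 - β) := by positivity
          nlinarith
        · exact bot_le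
      · exact inv_sqrt_bound hτ ha (by positivity)
  have mA : ∀ c : ℝ, Measurable fun a : ℝ => (ENNReal.ofReal |a - c|) ^ (-(1/2) : ℝ) := by
    intro c
    fun_prop
  have mB : ∀ c d : ℝ, Measurable fun a : ℝ => (ENNReal.ofReal |a - c|) ^ (-(1/2) : ℝ) +
      (ENNReal.ofReal |a - d|) ^ (-(1/2) : ℝ) := fun c d => (mA c).add (mA d)
  have hv : volume (Ioo (-τ) τ) ≤ ENNReal.ofReal (2 * τ) := by
    rw [Real.volume_Ioo]; ring_nf; rfl
  have hP : ∀ c : ℝ, ∫⁻ a in Ioo (-τ) τ, (ENNReal.ofReal |a - c|) ^ (-(1/2) : ℝ)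
      ≤ ENNReal.ofReal (5 * √(2 * τ)) := by
    intro c
    have h := powInt (β := 1/2) (by norm_num) (by norm_num) (by positivity : 0 < 2 * τ) hv c
    norm_num [← Real.sqrt_eq_rpow] at h
    simpa using h
  have h1β : 0 < 1 - β := by linarith
  calc _ ≤ ∫⁻ a in Ioo (-τ) τ, (ENNReal.ofReal (8 * δ) * ψ a +
        ENNReal.ofReal (2 * L ^ (1 - β) / τ) * (ENNReal.ofReal (4 * δ * √τ) *
      ((ENNReal.ofReal |a - τ|) ^ (-(1/2) : ℝ) + (ENNReal.ofReal |a - (-τ)|) ^ (-(1/2) : ℝ)))) :=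
        setLIntegral_mono' measurableSet_Ioo hsplit
    _ = ENNReal.ofReal (8 * δ) * (∫⁻ a in Ioo (-τ) τ, ψ a) + ENNReal.ofReal (2 * L ^ (1 - β) / τ) *
        (ENNReal.ofReal (4 * δ * √τ) * ((∫⁻ a in Ioo (-τ) τ, (ENNReal.ofReal |a - τ|) ^ (-(1/2) : ℝ))
        + ∫⁻ a in Ioo (-τ) τ, (ENNReal.ofReal |a - (-τ)|) ^ (-(1/2) : ℝ))) := by
        rw [lintegral_add_left (hψm.const_mul _), lintegral_const_mul _ hψm,
          lintegral_const_mul _ ((mB τ (-τ)).const_mul _),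
          lintegral_const_mul _ (mB τ (-τ)), lintegral_add_left (mA _)]
    _ ≤ ENNReal.ofReal (8 * δ) * ENNReal.ofReal ((2 / (1 - β) + 1) * (2 * L) ^ (1 - β)) +
        ENNReal.ofReal (2 * L ^ (1 - β) / τ) *
        (ENNReal.ofReal (4 * δ * √τ) * (ENNReal.ofReal (5 * √(2 * τ)) +
          ENNReal.ofReal (5 * √(2 * τ)))) := by
        gcongr
        · exact (setLIntegral_le_lintegral _ _).trans hψi
        · exact hP _
        · exact hP _
    _ ≤ _ := by
        rw [← ENNReal.ofReal_add (by positivity) (by positivity), ← ENNReal.ofReal_mul (by positivity),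
          ← ENNReal.ofReal_mul (by positivity), ← ENNReal.ofReal_mul (by positivity),
          ← ENNReal.ofReal_add (by positivity) (by positivity)]
        apply ENNReal.ofReal_le_ofReal
        have h2 : √2 ≤ 3/2 := by rw [Real.sqrt_le_left (by norm_num)]; norm_num
        have e2 : (2:ℝ) ^ (1 - β) ≤ 2 := by
          calc (2:ℝ) ^ (1 - β) ≤ 2 ^ (1:ℝ) := by
                apply Real.rpow_le_rpow_of_exponent_le <;> linarith
            _ = 2 := by simp
        have e3 : √τ * √(2 * τ) = √2 * τ := by
          rw [Real.sqrt_mul (by norm_num), mul_left_comm, Real.mul_self_sqrt hτ.le]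
        rw [Real.mul_rpow (by norm_num) hL0.le]
        set M := L ^ (1 - β)
        have hM : 0 < M := by positivity
        set q := 2 / (1 - β) + 1
        have hq : 0 < q := by positivity
        have t1 : 2 * M / τ * (4 * δ * √τ * (5 * √(2 * τ) + 5 * √(2 * τ))) = 80 * √2 * (δ * M) := by
          rw [show 2 * M / τ * (4 * δ * √τ * (5 * √(2 * τ) + 5 * √(2 * τ)))
            = 80 * M * δ * (√τ * √(2 * τ)) / τ by ring, e3]; field_simp
        rw [t1]
        have t2 : 0 < δ * M := by positivity
        have t3 : 8 * δ * (q * (2 ^ (1 - β) * M)) ≤ 8 * δ * (q * (2 * M)) := by gcongr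
        nlinarith

end KS

namespace KS

noncomputable def kk (δ τ : ℝ) (x y : E2) : ℝ≥0∞ := (annu δ τ).indicator 1 (y - x)

noncomputable def cc (τ : ℝ) : ℝ≥0∞ := (ENNReal.ofReal τ) ^ (-(1/2) : ℝ)

noncomputable def Zop (δ : ℝ) (h : E2 → ℝ≥0∞) (τ : ℝ) (x : E2) : ℝ≥0∞ :=
  cc τ * ∫⁻ y, kk δ τ x y * h y

theorem measurable_cc : Measurable cc := by unfold cc; fun_prop

theorem measurable_kk (δ : ℝ) : Measurable (fun q : (ℝ × E2) × E2 => kk δ q.1.1 q.1.2 q.2) := by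
  have hS : MeasurableSet {q : (ℝ × E2) × E2 | q.2 - q.1.2 ∈ annu δ q.1.1} := by
    simp only [annu, mem_ofPred_eq]
    rw [ofPred_and]
    exact (measurableSet_lt (by fun_prop) (by fun_prop)).inter
      (measurableSet_lt (by fun_prop) (by fun_prop))
  have : (fun q : (ℝ × E2) × E2 => kk δ q.1.1 q.1.2 q.2)
      = {q : (ℝ × E2) × E2 | q.2 - q.1.2 ∈ annu δ q.1.1}.indicator 1 := by
    ext q
    simp only [kk, indicator, mem_ofPred_eq, Pi.one_apply]
  rw [this]
  exact measurable_one.indicator hS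

theorem measurable_kk' {α : Type*} [MeasurableSpace α] (δ : ℝ) {a : α → ℝ} {b c : α → E2}
    (ha : Measurable a) (hb : Measurable b) (hc : Measurable c) :
    Measurable (fun w => kk δ (a w) (b w) (c w)) :=
  (measurable_kk δ).comp ((ha.prodMk hb).prodMk hc)

theorem measurable_Zop (δ : ℝ) {h : E2 → ℝ≥0∞} (hh : Measurable h) :
    Measurable (fun q : ℝ × E2 => Zop δ h q.1 q.2) := by
  unfold Zop
  refine (measurable_cc.comp measurable_fst).mul ?_
  exact Measurable.lintegral_prod_right'
    (f := fun q : (ℝ × E2) × E2 => kk δ q.1.1 q.1.2 q.2 * h q.2)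
    ((measurable_kk δ).mul (hh.comp measurable_snd))

theorem cs_sq {α : Type*} [MeasurableSpace α] {μ : Measure α} {f g : α → ℝ≥0∞}
    (hf : AEMeasurable f μ) (hg : AEMeasurable g μ) :
    (∫⁻ a, f a * g a ∂μ) ^ 2 ≤ (∫⁻ a, f a ^ 2 ∂μ) * (∫⁻ a, g a ^ 2 ∂μ) := by
  have h := ENNReal.lintegral_mul_le_Lp_mul_Lq μ Real.HolderConjugate.two_two hf hg
  have h2 := pow_le_pow_left' h 2
  simp only [Pi.mul_apply] at h2
  refine h2.trans (le_of_eq ?_)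
  have e : ∀ X : ℝ≥0∞, (X ^ (1 / (2:ℝ))) ^ 2 = X := by
    intro X
    rw [← ENNReal.rpow_natCast, ← ENNReal.rpow_mul]; norm_num
  rw [mul_pow, e, e]
  simp only [ENNReal.rpow_ofNat]

theorem kk_mul_lintegral {δ τ τ' : ℝ} (hδ : 0 < δ) (hτ : 0 < τ) (hτ' : 0 < τ') (x x' : E2) :
    cc τ * cc τ' * ∫⁻ y, kk δ τ x y * kk δ τ' x' y
      ≤ ENNReal.ofReal (120 * δ * √δ) * (ENNReal.ofReal |τ - τ'|) ^ (-(1/2) : ℝ) := by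
  have hS : MeasurableSet {y | y - x ∈ annu δ τ ∧ y - x' ∈ annu δ τ'} := by
    rw [ofPred_and]
    exact ((measurableSet_annu δ τ).preimage (measurable_sub_const x)).inter
      ((measurableSet_annu δ τ').preimage (measurable_sub_const x'))
  have e : ∫⁻ y, kk δ τ x y * kk δ τ' x' y
      = volume {y | y - x ∈ annu δ τ ∧ y - x' ∈ annu δ τ'} := by
    rw [← lintegral_indicator_one hS]
    congr 1; ext y
    by_cases h1 : y - x ∈ annu δ τ <;> by_cases h2 : y - x' ∈ annu δ τ' <;>
      simp [kk, indicator, h1, h2]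
  rw [e]
  have ec : ∀ t : ℝ, 0 < t → cc t = ENNReal.ofReal ((√t)⁻¹) := by
    intro t ht
    rw [cc, ENNReal.ofReal_rpow_of_pos ht, Real.rpow_neg ht.le, Real.sqrt_eq_rpow]
  calc _ ≤ cc τ * cc τ' * (ENNReal.ofReal (120 * δ * √(δ * τ * τ')) *
        (ENNReal.ofReal |τ - τ'|) ^ (-(1/2) : ℝ)) := by
        gcongr; exact k_diff hδ hτ hτ' x x'
    _ = _ := by
        rw [← mul_assoc, ec τ hτ, ec τ' hτ', ← ENNReal.ofReal_mul (by positivity),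
          ← ENNReal.ofReal_mul (by positivity)]
        congr 2
        rw [Real.sqrt_mul (by positivity), Real.sqrt_mul (by positivity)]
        have := Real.sqrt_pos.2 hτ
        have := Real.sqrt_pos.2 hτ'
        field_simp

theorem V2_aux {δ T : ℝ} (hδ : 0 < δ) (hT : 0 < T) {h : E2 → ℝ≥0∞} (hh : Measurable h)
    {X : ℝ → E2} (hX : Measurable X) {V : ℝ → ℝ≥0∞} (hV : Measurable V)
    (hVle : ∀ τ, V τ ≤ Zop δ h τ (X τ)) (hfin : ∫⁻ τ in Ioc 0 T, V τ ^ 2 ≠ ∞) :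
    ∫⁻ τ in Ioc 0 T, V τ ^ 2 ≤ ENNReal.ofReal (1200 * δ * √δ * √T) * ∫⁻ y, h y ^ 2 := by
  set μ : Measure ℝ := volume.restrict (Ioc 0 T) with hμ
  set B := ∫⁻ τ, V τ ^ 2 ∂μ with hB
  set a : ℝ → E2 → ℝ≥0∞ := fun τ y => V τ * cc τ * kk δ τ (X τ) y with ha
  have hVc : Measurable fun τ => V τ * cc τ := hV.mul measurable_cc
  have ham : Measurable (Function.uncurry a) :=
    (hVc.comp measurable_fst).mul
      (measurable_kk' δ measurable_fst (hX.comp measurable_fst) measurable_snd)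
  have ham' : Measurable (Function.uncurry fun y τ => a τ y) := ham.comp measurable_swap
  have has : ∀ y, Measurable fun τ => a τ y := fun y => ham'.comp measurable_prodMk_left
  set G : E2 → ℝ≥0∞ := fun y => ∫⁻ τ, a τ y ∂μ with hG
  have hGm : Measurable G := Measurable.lintegral_prod_right' (f := fun q : E2 × ℝ => a q.2 q.1) ham'
  have h1 : B ≤ ∫⁻ y, h y * G y := by
    calc B ≤ ∫⁻ τ, V τ * Zop δ h τ (X τ) ∂μ := by
          refine lintegral_mono fun τ => ?_
          rw [pow_two]; gcongr; exact hVle τ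
      _ = ∫⁻ τ, ∫⁻ y, a τ y * h y ∂volume ∂μ := by
          congr 1; ext τ
          rw [Zop, ← mul_assoc, ← lintegral_const_mul]
          · simp only [ha, mul_assoc]
          · exact (measurable_kk' δ measurable_const measurable_const measurable_id).mul hh
      _ = ∫⁻ y, ∫⁻ τ, a τ y * h y ∂μ := by
          rw [lintegral_lintegral_swap]
          exact (ham.mul (hh.comp measurable_snd)).aemeasurable
      _ = _ := by
          congr 1; ext y
          rw [lintegral_mul_const _ (has y), mul_comm]
  have h2 : ∫⁻ y, G y ^ 2 ≤ ENNReal.ofReal (1200 * δ * √δ * √T) * B := by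
    have e1 : ∫⁻ y, G y ^ 2 = ∫⁻ τ, ∫⁻ τ', ∫⁻ y, a τ y * a τ' y ∂volume ∂μ ∂μ := by
      calc ∫⁻ y, G y ^ 2 = ∫⁻ y, ∫⁻ τ, a τ y * G y ∂μ := by
            congr 1; ext y
            rw [lintegral_mul_const _ (has y), pow_two]
        _ = ∫⁻ τ, ∫⁻ y, a τ y * G y ∂volume ∂μ := by
            rw [lintegral_lintegral_swap]
            exact (ham'.mul (hGm.comp measurable_fst)).aemeasurable
        _ = _ := by
            congr 1; ext τ
            calc ∫⁻ y, a τ y * G y = ∫⁻ y, ∫⁻ τ', a τ y * a τ' y ∂μ := by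
                  congr 1; ext y
                  rw [lintegral_const_mul _ (has y)]
              _ = _ := by
                  rw [lintegral_lintegral_swap]
                  exact (((ham.comp measurable_prodMk_left).comp measurable_fst).mul
                    ham').aemeasurable
    rw [e1]
    set w : ℝ → ℝ → ℝ≥0∞ := fun τ τ' => (ENNReal.ofReal |τ - τ'|) ^ (-(1/2) : ℝ) with hw
    have hwm : Measurable (Function.uncurry w) := by
      simp only [hw, Function.uncurry_def]; fun_prop
    have hws : ∀ τ, Measurable fun τ' => w τ τ' := fun τ => hwm.comp measurable_prodMk_left
    have hw1 : ∀ τ, ∫⁻ τ', w τ τ' ∂μ ≤ ENNReal.ofReal (5 * √T) := by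
      intro τ
      have h := powInt (β := 1/2) (by norm_num) (by norm_num) hT
        (I := Ioc 0 T) (by rw [Real.volume_Ioc]; simp) τ
      norm_num [← Real.sqrt_eq_rpow] at h
      simp only [hw, abs_sub_comm τ]
      simpa using h
    set C := ENNReal.ofReal (120 * δ * √δ) with hC
    have e2 : ∫⁻ τ, ∫⁻ τ', ∫⁻ y, a τ y * a τ' y ∂volume ∂μ ∂μ
        ≤ ∫⁻ τ, ∫⁻ τ', C * (V τ ^ 2 * w τ τ' + V τ' ^ 2 * w τ τ') ∂μ ∂μ := by
      refine setLIntegral_mono' measurableSet_Ioc fun τ hτ => ?_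
      refine setLIntegral_mono' measurableSet_Ioc fun τ' hτ' => ?_
      calc ∫⁻ y, a τ y * a τ' y
          = V τ * V τ' * (cc τ * cc τ' * ∫⁻ y, kk δ τ (X τ) y * kk δ τ' (X τ') y) := by
            rw [← mul_assoc, ← lintegral_const_mul]
            · congr 1; ext y; simp only [ha]; ring
            · exact (measurable_kk' δ measurable_const measurable_const measurable_id).mul
                (measurable_kk' δ measurable_const measurable_const measurable_id)
        _ ≤ (V τ ^ 2 + V τ' ^ 2) * (C * w τ τ') := by
            refine mul_le_mul' ?_ ?_
            · rcases le_total (V τ) (V τ') with h | h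
              · exact (mul_le_mul_left h _).trans (by rw [← pow_two]; exact le_add_self)
              · exact (mul_le_mul_right h _).trans (by rw [← pow_two]; exact le_self_add)
            · exact kk_mul_lintegral hδ hτ.1 hτ'.1 _ _
        _ = _ := by ring
    refine e2.trans ?_
    have m1 : Measurable (Function.uncurry fun τ τ' => V τ ^ 2 * w τ τ') :=
      ((hV.comp measurable_fst).pow_const 2).mul hwm
    have m2 : Measurable (Function.uncurry fun τ τ' => V τ' ^ 2 * w τ τ') :=
      ((hV.comp measurable_snd).pow_const 2).mul hwm
    have m12 : Measurable (Function.uncurry fun τ τ' => V τ ^ 2 * w τ τ' + V τ' ^ 2 * w τ τ') :=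
      m1.add m2
    have m1s : ∀ τ, Measurable fun τ' => V τ ^ 2 * w τ τ' :=
      fun τ => m1.comp measurable_prodMk_left
    have m12s : ∀ τ, Measurable fun τ' => V τ ^ 2 * w τ τ' + V τ' ^ 2 * w τ τ' :=
      fun τ => m12.comp measurable_prodMk_left
    have M1 : Measurable fun τ => ∫⁻ τ', V τ ^ 2 * w τ τ' ∂μ := Measurable.lintegral_prod_right' m1
    have M2 : Measurable fun τ => ∫⁻ τ', V τ' ^ 2 * w τ τ' ∂μ := Measurable.lintegral_prod_right' m2
    have M12 : Measurable fun τ => (∫⁻ τ', V τ ^ 2 * w τ τ' ∂μ) + ∫⁻ τ', V τ' ^ 2 * w τ τ' ∂μ :=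
      M1.add M2
    have e3 : ∫⁻ τ, ∫⁻ τ', V τ ^ 2 * w τ τ' ∂μ ∂μ ≤ B * ENNReal.ofReal (5 * √T) := by
      rw [hB, ← lintegral_mul_const _ (hV.pow_const 2)]
      refine lintegral_mono fun τ => ?_
      rw [lintegral_const_mul _ (hws τ)]
      gcongr; exact hw1 τ
    have e4 : ∫⁻ τ, ∫⁻ τ', V τ' ^ 2 * w τ τ' ∂μ ∂μ ≤ B * ENNReal.ofReal (5 * √T) := by
      rw [lintegral_lintegral_swap m2.aemeasurable]
      refine le_trans (le_of_eq ?_) e3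
      congr 1; ext τ; congr 1; ext τ'
      simp only [hw, abs_sub_comm τ']
    calc ∫⁻ τ, ∫⁻ τ', C * (V τ ^ 2 * w τ τ' + V τ' ^ 2 * w τ τ') ∂μ ∂μ
        = C * ((∫⁻ τ, ∫⁻ τ', V τ ^ 2 * w τ τ' ∂μ ∂μ) + ∫⁻ τ, ∫⁻ τ', V τ' ^ 2 * w τ τ' ∂μ ∂μ) := by
          rw [← lintegral_add_left M1, ← lintegral_const_mul _ M12]
          congr 1; ext τ
          rw [lintegral_const_mul _ (m12s τ), lintegral_add_left (m1s τ)]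
      _ ≤ C * (B * ENNReal.ofReal (5 * √T) + B * ENNReal.ofReal (5 * √T)) := by gcongr
      _ = _ := by
          rw [hC, show ENNReal.ofReal (120 * δ * √δ) * (B * ENNReal.ofReal (5 * √T) +
            B * ENNReal.ofReal (5 * √T)) = (ENNReal.ofReal (120 * δ * √δ) *
            (ENNReal.ofReal (5 * √T) + ENNReal.ofReal (5 * √T))) * B by ring,
            ← ENNReal.ofReal_add (by positivity) (by positivity),
            ← ENNReal.ofReal_mul (by positivity)]
          congr 2; ring
  have h3 : B ^ 2 ≤ (∫⁻ y, h y ^ 2) * (ENNReal.ofReal (1200 * δ * √δ * √T) * B) :=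
    (pow_le_pow_left' h1 2).trans ((cs_sq hh.aemeasurable hGm.aemeasurable).trans (by gcongr))
  by_cases hB0 : B = 0
  · rw [hB0]; exact bot_le
  · rw [pow_two, ← mul_assoc] at h3
    rw [mul_comm (ENNReal.ofReal _)]
    exact (ENNReal.mul_le_mul_iff_left hB0 hfin).1 h3

theorem V2 {δ T : ℝ} (hδ : 0 < δ) (hT : 0 < T) {h : E2 → ℝ≥0∞} (hh : Measurable h)
    {X : ℝ → E2} (hX : Measurable X) :
    ∫⁻ τ in Ioc 0 T, Zop δ h τ (X τ) ^ 2 ≤ ENNReal.ofReal (1200 * δ * √δ * √T) * ∫⁻ y, h y ^ 2 := by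
  set U : ℝ → ℝ≥0∞ := fun τ => Zop δ h τ (X τ) with hU
  have hUm : Measurable U := (measurable_Zop δ hh).comp (measurable_id.prodMk hX)
  have e : ∀ τ, U τ ^ 2 = ⨆ n : ℕ, (min (U τ) n) ^ 2 := by
    intro τ
    have hmono : Monotone fun n : ℕ => (min (U τ) (n : ℝ≥0∞)) := by
      intro a b hab
      exact min_le_min_left _ (by exact_mod_cast hab)
    apply le_antisymm
    · by_cases ht : U τ = ∞
      · have : ∀ n : ℕ, min (U τ) (n : ℝ≥0∞) = n := fun n => by rw [ht]; simp
        simp only [this]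
        rw [ht]
        have h2 : (⨆ n : ℕ, ((n : ℝ≥0∞)) ^ 2) = ∞ := by
          rw [eq_top_iff, ← ENNReal.iSup_natCast]
          refine iSup_mono fun n => ?_
          rcases Nat.eq_zero_or_pos n with h | h
          · simp [h]
          · exact le_self_pow₀ (by exact_mod_cast h) (by norm_num)
        rw [h2]; exact le_top
      · obtain ⟨n, hn⟩ := ENNReal.exists_nat_gt ht
        refine le_trans ?_ (le_iSup _ n)
        rw [min_eq_left hn.le]
    · exact iSup_le fun n => pow_le_pow_left' (min_le_left _ _) 2
  have hmm : ∀ n : ℕ, Measurable fun τ => (min (U τ) (n : ℝ≥0∞)) := fun n => hUm.min measurable_const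
  calc ∫⁻ τ in Ioc 0 T, U τ ^ 2 = ⨆ n : ℕ, ∫⁻ τ in Ioc 0 T, (min (U τ) n) ^ 2 := by
        simp_rw [e]
        rw [lintegral_iSup (fun n => (hmm n).pow_const 2)]
        intro a b hab τ
        exact pow_le_pow_left' (min_le_min_left _ (by exact_mod_cast hab)) 2
    _ ≤ _ := by
        refine iSup_le fun n => V2_aux hδ hT hh hX (hmm n) (fun τ => min_le_left _ _) ?_
        refine ne_of_lt (lt_of_le_of_lt (lintegral_mono (g := fun _ => ((n : ℝ≥0∞)) ^ 2)
          fun τ => pow_le_pow_left' (min_le_right _ _) 2) ?_)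
        simp
        exact ENNReal.mul_lt_top (by simp) (by simp)

noncomputable def Ssup (δ : ℝ) (h : E2 → ℝ≥0∞) (τ : ℝ) : ℝ≥0∞ :=
  ⨆ n : ℕ, Zop δ h τ (TopologicalSpace.denseSeq E2 n)

theorem measurable_Ssup (δ : ℝ) {h : E2 → ℝ≥0∞} (hh : Measurable h) : Measurable (Ssup δ h) :=
  Measurable.iSup fun _ => (measurable_Zop δ hh).comp (measurable_id.prodMk measurable_const)

theorem Zop_le_Ssup (δ : ℝ) {h : E2 → ℝ≥0∞} (hh : Measurable h) (τ : ℝ) (x : E2) :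
    Zop δ h τ x ≤ Ssup δ h τ := by
  have hx : x ∈ closure (range (TopologicalSpace.denseSeq E2)) :=
    TopologicalSpace.denseRange_denseSeq E2 x
  obtain ⟨u, hu, hlim⟩ := mem_closure_iff_seq_limit.1 hx
  have hle : ∀ n, Zop δ h τ (u n) ≤ Ssup δ h τ := by
    intro n
    obtain ⟨m, hm⟩ := hu n
    rw [← hm]
    exact le_iSup (fun n : ℕ => Zop δ h τ (TopologicalSpace.denseSeq E2 n)) m
  have hm : ∀ x', Measurable fun y => cc τ * (kk δ τ x' y * h y) := fun x' =>
    ((measurable_kk' δ measurable_const measurable_const measurable_id).mul hh).const_mul _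
  have hZ : ∀ x', Zop δ h τ x' = ∫⁻ y, cc τ * (kk δ τ x' y * h y) := by
    intro x'
    rw [Zop, lintegral_const_mul]
    exact (measurable_kk' δ measurable_const measurable_const measurable_id).mul hh
  calc Zop δ h τ x ≤ ∫⁻ y, Filter.liminf (fun n => cc τ * (kk δ τ (u n) y * h y)) Filter.atTop := by
        rw [hZ]
        refine lintegral_mono fun y => ?_
        by_cases hy : y - x ∈ annu δ τ
        · have : ∀ᶠ n in Filter.atTop, y - u n ∈ annu δ τ :=
            (tendsto_const_nhds.sub hlim).eventually ((isOpen_annu δ τ).mem_nhds hy)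
          refine Filter.le_liminf_of_le (by isBoundedDefault) ?_
          filter_upwards [this] with n hn
          simp [kk, hy, hn]
        · simp [kk, hy]
    _ ≤ Filter.liminf (fun n => ∫⁻ y, cc τ * (kk δ τ (u n) y * h y)) Filter.atTop :=
        lintegral_liminf_le fun n => hm _
    _ = Filter.liminf (fun n => Zop δ h τ (u n)) Filter.atTop := by simp_rw [hZ]
    _ ≤ _ := by
        refine Filter.liminf_le_of_frequently_le' ?_
        exact (Filter.Eventually.of_forall hle).frequently

noncomputable def Xsel (δ : ℝ) (h : E2 → ℝ≥0∞) : ℕ → ℝ → E2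
  | 0, _ => TopologicalSpace.denseSeq E2 0
  | n + 1, τ => open Classical in
      if Zop δ h τ (Xsel δ h n τ) < Zop δ h τ (TopologicalSpace.denseSeq E2 (n + 1)) then
        TopologicalSpace.denseSeq E2 (n + 1) else Xsel δ h n τ

theorem measurable_Xsel (δ : ℝ) {h : E2 → ℝ≥0∞} (hh : Measurable h) (n : ℕ) :
    Measurable (Xsel δ h n) := by
  induction n with
  | zero => exact measurable_const
  | succ n ih =>
    have e : Xsel δ h (n + 1) = fun τ => open Classical in
      if Zop δ h τ (Xsel δ h n τ) < Zop δ h τ (TopologicalSpace.denseSeq E2 (n + 1)) then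
        TopologicalSpace.denseSeq E2 (n + 1) else Xsel δ h n τ := by
      ext1 τ; rw [Xsel]
    rw [e]
    refine Measurable.ite ?_ measurable_const ih
    exact measurableSet_lt ((measurable_Zop δ hh).comp (measurable_id.prodMk ih))
      ((measurable_Zop δ hh).comp (measurable_id.prodMk measurable_const))

theorem Xsel_mono (δ : ℝ) (h : E2 → ℝ≥0∞) (τ : ℝ) : Monotone fun n => Zop δ h τ (Xsel δ h n τ) := by
  refine monotone_nat_of_le_succ fun n => ?_
  simp only [Xsel]
  split_ifs with hc
  · exact hc.le
  · exact le_rfl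

theorem Xsel_ge (δ : ℝ) (h : E2 → ℝ≥0∞) (τ : ℝ) (n : ℕ) :
    Zop δ h τ (TopologicalSpace.denseSeq E2 n) ≤ Zop δ h τ (Xsel δ h n τ) := by
  cases n with
  | zero => exact le_rfl
  | succ n =>
    simp only [Xsel]
    split_ifs with hc
    · exact le_rfl
    · exact not_lt.1 hc

theorem Ssup_bound {δ T : ℝ} (hδ : 0 < δ) (hT : 0 < T) {h : E2 → ℝ≥0∞} (hh : Measurable h) :
    ∫⁻ τ in Ioc 0 T, Ssup δ h τ ^ 2 ≤ ENNReal.ofReal (1200 * δ * √δ * √T) * ∫⁻ y, h y ^ 2 := by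
  calc _ ≤ ∫⁻ τ in Ioc 0 T, ⨆ n, Zop δ h τ (Xsel δ h n τ) ^ 2 := by
        refine lintegral_mono fun τ => ?_
        have h1 : Ssup δ h τ ≤ ⨆ n, Zop δ h τ (Xsel δ h n τ) := iSup_mono fun n => Xsel_ge δ h τ n
        refine (pow_le_pow_left' h1 2).trans ?_
        rw [ENNReal.iSup_pow_of_ne_zero (by norm_num)]
    _ = ⨆ n, ∫⁻ τ in Ioc 0 T, Zop δ h τ (Xsel δ h n τ) ^ 2 := by
        have hm : ∀ n, Measurable fun τ => Zop δ h τ (Xsel δ h n τ) ^ 2 :=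
          fun n => ((measurable_Zop δ hh).comp
            (measurable_id.prodMk (measurable_Xsel δ hh n))).pow_const 2
        rw [lintegral_iSup hm]
        intro a b hab τ
        exact pow_le_pow_left' (Xsel_mono δ h τ hab) 2
    _ ≤ _ := iSup_le fun n => V2 hδ hT hh (measurable_Xsel δ hh n)

end KS

namespace KS

theorem holder3 {α : Type*} [MeasurableSpace α] {μ : Measure α} {f g h : α → ℝ≥0∞}
    (hf : AEMeasurable f μ) (hg : AEMeasurable g μ) (hh : AEMeasurable h μ) {a b c : ℝ}
    (ha : 0 ≤ a) (hb : 0 ≤ b) (hc : 0 ≤ c) (hs : a + b + c = 1) :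
    ∫⁻ x, f x ^ a * g x ^ b * h x ^ c ∂μ
      ≤ (∫⁻ x, f x ∂μ) ^ a * (∫⁻ x, g x ∂μ) ^ b * (∫⁻ x, h x ∂μ) ^ c := by
  have := ENNReal.lintegral_prod_norm_pow_le (μ := μ) (Finset.univ : Finset (Fin 3))
    (f := ![f, g, h]) (p := ![a, b, c])
    (by intro i _; fin_cases i <;> simpa) (by simp [Fin.sum_univ_three, hs])
    (by intro i _; fin_cases i <;> simpa)
  simpa [Fin.prod_univ_three] using this

theorem rpow_split3 (X : ℝ≥0∞) {a b c : ℝ} (ha : 0 ≤ a) (hb : 0 ≤ b) (hc : 0 ≤ c) :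
    X ^ (a + b + c) = X ^ a * X ^ b * X ^ c := by
  rw [ENNReal.rpow_add_of_nonneg _ _ (by positivity) hc, ENNReal.rpow_add_of_nonneg _ _ ha hb]

theorem PL {q r θ1 θ2 θ3 β : ℝ} (hq : 0 < q) (hr : 0 < r) (h1 : 0 < θ1) (h2 : 0 < θ2)
    (h3 : 0 < θ3) (hsum : θ3 + θ1 + θ2 = 1) (hθq : θ3 + θ1 + θ2 / 2 = 1 / q) (hθr : θ3 = 2 / r)
    (hβ : β * θ2 = θ3)
    {h : E2 → ℝ≥0∞} (hh : Measurable h) {m : E2 → E2 × E2 → ℝ≥0∞}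
    (hm : Measurable (Function.uncurry m)) (hm01 : ∀ x p, m x p = 0 ∨ m x p = 1)
    {D : E2 × E2 → ℝ≥0∞} (hD : Measurable D) (hD0 : ∀ᵐ p, D p ≠ 0) (hDt : ∀ p, D p ≠ ∞)
    {c Q R : ℝ≥0∞} (hQ : ∀ p, D p * ∫⁻ x, m x p ≤ Q)
    (hR : ∀ x, c * ∫⁻ p, m x p * (D p ^ (-β) * (h p.1 ^ q * h p.2 ^ q) ^ (1 / 2 : ℝ)) ≤ R) :
    (∫⁻ x, (c * ∫⁻ p, m x p * (h p.1 * h p.2)) ^ (r / 2)) ^ (1 / r)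
      ≤ (c * (∫⁻ y, h y ^ q) ^ 2) ^ (θ1 / 2) * R ^ (θ2 / 2)
        * (c * (Q * (∫⁻ y, h y ^ q) ^ 2)) ^ (1 / r) := by
  set A := ∫⁻ y, h y ^ q with hA
  set X : E2 × E2 → ℝ≥0∞ := fun p => h p.1 ^ q * h p.2 ^ q with hX
  have hXm : Measurable X := ((hh.comp measurable_fst).pow_const q).mul
    ((hh.comp measurable_snd).pow_const q)
  have hXA : ∫⁻ p, X p = A ^ 2 := by
    rw [Measure.volume_eq_prod, pow_two]
    exact lintegral_prod_mul (hh.pow_const q).aemeasurable (hh.pow_const q).aemeasurable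
  have hmx : ∀ x, Measurable (m x) := fun x => hm.comp measurable_prodMk_left
  have hmp : ∀ p, Measurable fun x => m x p := fun p => hm.comp measurable_prodMk_right
  have hmX : Measurable fun w : E2 × (E2 × E2) => m w.1 w.2 * (D w.2 * X w.2) :=
    hm.mul ((hD.mul hXm).comp measurable_snd)
  set Y : E2 → ℝ≥0∞ := fun x => ∫⁻ p, m x p * (D p * X p) with hY
  have hYm : Measurable Y := Measurable.lintegral_prod_right' hmX
  have hYint : ∫⁻ x, Y x ≤ Q * A ^ 2 := by
    calc ∫⁻ x, Y x = ∫⁻ p, ∫⁻ x, m x p * (D p * X p) := by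
          rw [hY, lintegral_lintegral_swap]
          exact hmX.aemeasurable
      _ ≤ ∫⁻ p, Q * X p := by
          refine lintegral_mono fun p => ?_
          rw [lintegral_mul_const _ (hmp p), ← mul_assoc, mul_comm (∫⁻ x, m x p)]
          gcongr; exact hQ p
      _ = _ := by rw [lintegral_const_mul _ hXm, hXA]
  have key : ∀ x, c * ∫⁻ p, m x p * (h p.1 * h p.2)
      ≤ (c * Y x) ^ θ3 * (c * A ^ 2) ^ θ1 * R ^ θ2 := by
    intro x
    have e1 : ∫⁻ p, m x p * (h p.1 * h p.2) ≤
        ∫⁻ p, (m x p * (D p * X p)) ^ θ3 * (m x p * X p) ^ θ1 *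
          (m x p * (D p ^ (-β) * X p ^ (1 / 2 : ℝ))) ^ θ2 := by
      refine lintegral_mono_ae ?_
      filter_upwards [hD0] with p hp
      rcases hm01 x p with hmm | hmm
      · rw [hmm, zero_mul]; exact bot_le
      · rw [hmm]
        simp only [one_mul]
        rw [ENNReal.mul_rpow_of_nonneg _ _ h3.le, ENNReal.mul_rpow_of_nonneg _ _ h2.le,
          ← ENNReal.rpow_mul, ← ENNReal.rpow_mul]
        have e : h p.1 * h p.2 = X p ^ (1 / q) := by
          rw [hX]
          simp only
          rw [← ENNReal.mul_rpow_of_nonneg _ _ hq.le, ← ENNReal.rpow_mul]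
          rw [mul_one_div_cancel hq.ne', ENNReal.rpow_one]
        rw [e, ← hθq, rpow_split3 _ h3.le h1.le (by positivity),
          show D p ^ θ3 * X p ^ θ3 * X p ^ θ1 * (D p ^ (-β * θ2) * X p ^ (1 / 2 * θ2))
          = D p ^ θ3 * D p ^ (-β * θ2) * (X p ^ θ3 * X p ^ θ1 * X p ^ (1 / 2 * θ2)) by ring,
          ← ENNReal.rpow_add _ _ hp (hDt p), show θ3 + -β * θ2 = 0 by linarith,
          ENNReal.rpow_zero, one_mul, show 1 / 2 * θ2 = θ2 / 2 by ring]
    have e2 := holder3 (μ := volume) ((hmx x).mul (hD.mul hXm)).aemeasurable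
      ((hmx x).mul hXm).aemeasurable
      ((hmx x).mul ((hD.pow_const (-β)).mul (hXm.pow_const (1 / 2 : ℝ)))).aemeasurable
      h3.le h1.le h2.le hsum
    have ec : c = c ^ θ3 * c ^ θ1 * c ^ θ2 := by
      rw [← rpow_split3 _ h3.le h1.le h2.le, hsum, ENNReal.rpow_one]
    have e3 : ∫⁻ p, m x p * (h p.1 * h p.2) ≤ (Y x) ^ θ3 * (∫⁻ p, m x p * X p) ^ θ1 *
          (∫⁻ p, m x p * (D p ^ (-β) * X p ^ (1 / 2 : ℝ))) ^ θ2 := e1.trans e2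
    calc c * ∫⁻ p, m x p * (h p.1 * h p.2) 
        ≤ (c ^ θ3 * c ^ θ1 * c ^ θ2) * ((Y x) ^ θ3 * (∫⁻ p, m x p * X p) ^ θ1 *
          (∫⁻ p, m x p * (D p ^ (-β) * X p ^ (1 / 2 : ℝ))) ^ θ2) := mul_le_mul' ec.le e3
      _ = (c * Y x) ^ θ3 * (c * ∫⁻ p, m x p * X p) ^ θ1 *
          (c * ∫⁻ p, m x p * (D p ^ (-β) * X p ^ (1 / 2 : ℝ))) ^ θ2 := by
          rw [ENNReal.mul_rpow_of_nonneg _ _ h3.le, ENNReal.mul_rpow_of_nonneg _ _ h2.le,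
            ENNReal.mul_rpow_of_nonneg _ _ h1.le]
          ring
      _ ≤ _ := by
          gcongr
          · rw [← hXA]
            refine lintegral_mono fun p => ?_
            rcases hm01 x p with hmm | hmm <;> simp [hmm]
          · exact hR x
  have hr2 : 0 < r / 2 := by positivity
  calc (∫⁻ x, (c * ∫⁻ p, m x p * (h p.1 * h p.2)) ^ (r / 2)) ^ (1 / r)
      ≤ (∫⁻ x, (c * Y x) * (((c * A ^ 2) ^ θ1) ^ (r / 2) * (R ^ θ2) ^ (r / 2))) ^ (1 / r) := by
        gcongr with x
        refine (ENNReal.rpow_le_rpow (key x) hr2.le).trans (le_of_eq ?_)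
        rw [ENNReal.mul_rpow_of_nonneg _ _ hr2.le, ENNReal.mul_rpow_of_nonneg _ _ hr2.le, mul_assoc]
        congr 1
        rw [← ENNReal.rpow_mul, hθr, show 2 / r * (r / 2) = 1 by field_simp, ENNReal.rpow_one]
    _ = (c * (∫⁻ x, Y x) * (((c * A ^ 2) ^ θ1) ^ (r / 2) * (R ^ θ2) ^ (r / 2))) ^ (1 / r) := by
        rw [lintegral_mul_const _ (hYm.const_mul _), lintegral_const_mul _ hYm]
    _ ≤ (c * (Q * A ^ 2) * (((c * A ^ 2) ^ θ1) ^ (r / 2) * (R ^ θ2) ^ (r / 2))) ^ (1 / r) := by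
        gcongr
    _ = _ := by
        have h1r : 0 ≤ 1 / r := by positivity
        rw [ENNReal.mul_rpow_of_nonneg (c * (Q * A ^ 2)) _ h1r,
          ENNReal.mul_rpow_of_nonneg (((c * A ^ 2) ^ θ1) ^ (r / 2)) _ h1r, mul_comm]
        simp only [← ENNReal.rpow_mul]
        rw [show θ1 * (r / 2) * (1 / r) = θ1 / 2 by field_simp,
          show θ2 * (r / 2) * (1 / r) = θ2 / 2 by field_simp]

end KS

namespace KS

theorem kk_01 (δ τ : ℝ) (x y : E2) : kk δ τ x y = 0 ∨ kk δ τ x y = 1 := by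
  unfold kk indicator
  split_ifs <;> simp

theorem pair_vol (δ τ : ℝ) (y y' : E2) :
    ∫⁻ x, kk δ τ x y * kk δ τ x y' = volume {z | z ∈ annu δ τ ∧ z + (y' - y) ∈ annu δ τ} := by
  have hS : MeasurableSet {z | z ∈ annu δ τ ∧ z + (y' - y) ∈ annu δ τ} := by
    rw [ofPred_and]
    exact (measurableSet_annu δ τ).inter
      ((measurableSet_annu δ τ).preimage (measurable_add_const (y' - y)))
  rw [← lintegral_indicator_one hS, ← lintegral_sub_left_eq_self ({z | z ∈ annu δ τ ∧ z + (y' - y) ∈ annu δ τ}.indicator 1) y]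
  refine lintegral_congr fun x => ?_
  have : y - x + (y' - y) = y' - x := by abel
  simp only [kk, indicator, mem_ofPred_eq, this, Pi.one_apply]
  by_cases h1 : y - x ∈ annu δ τ <;> by_cases h2 : y' - x ∈ annu δ τ <;> simp [h1, h2]

open Classical in
noncomputable def nr (δ τ : ℝ) (p : E2 × E2) : ℝ≥0∞ := if ‖p.1 - p.2‖ ^ 2 < δ * τ then 1 else 0

open Classical in
noncomputable def fr (δ τ : ℝ) (p : E2 × E2) : ℝ≥0∞ := if ‖p.1 - p.2‖ ^ 2 < δ * τ then 0 else 1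

theorem nr_add_fr (δ τ : ℝ) (p : E2 × E2) : nr δ τ p + fr δ τ p = 1 := by
  unfold nr fr; split_ifs <;> simp

theorem measurable_nr (δ τ : ℝ) : Measurable (nr δ τ) := by
  unfold nr
  exact Measurable.ite (measurableSet_lt (by fun_prop) (by fun_prop)) measurable_const measurable_const

theorem measurable_fr (δ τ : ℝ) : Measurable (fr δ τ) := by
  unfold fr
  exact Measurable.ite (measurableSet_lt (by fun_prop) (by fun_prop)) measurable_const measurable_const

noncomputable def mN (δ τ : ℝ) (x : E2) (p : E2 × E2) : ℝ≥0∞ :=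
  kk δ τ x p.1 * kk δ τ x p.2 * nr δ τ p

noncomputable def mF (δ τ : ℝ) (x : E2) (p : E2 × E2) : ℝ≥0∞ :=
  kk δ τ x p.1 * kk δ τ x p.2 * fr δ τ p

theorem measurable_mN (δ τ : ℝ) : Measurable (Function.uncurry (mN δ τ)) := by
  unfold mN Function.uncurry
  refine ((measurable_kk' δ measurable_const (by fun_prop) (by fun_prop)).mul
    (measurable_kk' δ measurable_const (by fun_prop) (by fun_prop))).mul
    ((measurable_nr δ τ).comp measurable_snd)

theorem measurable_mF (δ τ : ℝ) : Measurable (Function.uncurry (mF δ τ)) := by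
  unfold mF Function.uncurry
  refine ((measurable_kk' δ measurable_const (by fun_prop) (by fun_prop)).mul
    (measurable_kk' δ measurable_const (by fun_prop) (by fun_prop))).mul
    ((measurable_fr δ τ).comp measurable_snd)

theorem mN_01 (δ τ : ℝ) (x : E2) (p : E2 × E2) : mN δ τ x p = 0 ∨ mN δ τ x p = 1 := by
  unfold mN nr
  rcases kk_01 δ τ x p.1 with h | h <;> rcases kk_01 δ τ x p.2 with h' | h' <;> rw [h, h'] <;>
    split_ifs <;> simp

theorem mF_01 (δ τ : ℝ) (x : E2) (p : E2 × E2) : mF δ τ x p = 0 ∨ mF δ τ x p = 1 := by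
  unfold mF fr
  rcases kk_01 δ τ x p.1 with h | h <;> rcases kk_01 δ τ x p.2 with h' | h' <;> rw [h, h'] <;>
    split_ifs <;> simp

theorem int_mN (δ τ : ℝ) (p : E2 × E2) : ∫⁻ x, mN δ τ x p
    = volume {z | z ∈ annu δ τ ∧ z + (p.2 - p.1) ∈ annu δ τ} * nr δ τ p := by
  unfold mN
  have hs : Measurable fun x => kk δ τ x p.1 * kk δ τ x p.2 :=
    (measurable_kk' δ measurable_const measurable_id measurable_const).mul
      (measurable_kk' δ measurable_const measurable_id measurable_const)
  rw [lintegral_mul_const _ hs, pair_vol]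

theorem int_mF (δ τ : ℝ) (p : E2 × E2) : ∫⁻ x, mF δ τ x p
    = volume {z | z ∈ annu δ τ ∧ z + (p.2 - p.1) ∈ annu δ τ} * fr δ τ p := by
  unfold mF
  have hs : Measurable fun x => kk δ τ x p.1 * kk δ τ x p.2 :=
    (measurable_kk' δ measurable_const measurable_id measurable_const).mul
      (measurable_kk' δ measurable_const measurable_id measurable_const)
  rw [lintegral_mul_const _ hs, pair_vol]

theorem far_Q {δ τ : ℝ} (hδ : 0 < δ) (hτ : 0 < τ) (p : E2 × E2) :
    (1 : ℝ≥0∞) * ∫⁻ x, mF δ τ x p ≤ ENNReal.ofReal (120 * δ * √(δ * τ)) := by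
  rw [int_mF, one_mul]
  unfold fr
  split_ifs with h
  · simp
  · rw [mul_one]
    refine k_same_far hδ hτ ?_
    rw [norm_sub_rev]; exact not_lt.1 h

theorem near_Q {δ τ : ℝ} (hδ : 0 < δ) (hτ : 0 < τ) (p : E2 × E2) :
    ENNReal.ofReal ‖p.1 - p.2‖ * ∫⁻ x, mN δ τ x p ≤ ENNReal.ofReal (240 * δ ^ 2 * τ) := by
  rw [int_mN]
  unfold nr
  split_ifs with h
  · rw [mul_one, norm_sub_rev]
    refine k_same_near hδ hτ ?_
    rw [norm_sub_rev]; exact h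
  · simp

theorem sq_lintegral {h : E2 → ℝ≥0∞} (hh : Measurable h) :
    (∫⁻ y, h y) ^ 2 = ∫⁻ p : E2 × E2, h p.1 * h p.2 := by
  rw [Measure.volume_eq_prod, lintegral_prod_mul hh.aemeasurable hh.aemeasurable, pow_two]

theorem measurable_kkx (δ τ : ℝ) (x : E2) : Measurable fun y => kk δ τ x y :=
  measurable_kk' δ measurable_const measurable_const measurable_id

theorem Zop_sq (δ τ : ℝ) {h : E2 → ℝ≥0∞} (hh : Measurable h) (x : E2) :
    Zop δ h τ x ^ 2 = cc τ ^ 2 * ∫⁻ p : E2 × E2, (kk δ τ x p.1 * kk δ τ x p.2) * (h p.1 * h p.2) := by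
  unfold Zop
  rw [mul_pow, sq_lintegral (h := fun y => kk δ τ x y * h y) ((measurable_kkx δ τ x).mul hh)]
  congr 1
  refine lintegral_congr fun p => ?_
  ring

theorem Zop_sq_split (δ τ : ℝ) {h : E2 → ℝ≥0∞} (hh : Measurable h) (x : E2) :
    Zop δ h τ x ^ 2 = cc τ ^ 2 * (∫⁻ p : E2 × E2, mN δ τ x p * (h p.1 * h p.2))
      + cc τ ^ 2 * ∫⁻ p : E2 × E2, mF δ τ x p * (h p.1 * h p.2) := by
  have hm1 : Measurable fun p => mN δ τ x p * (h p.1 * h p.2) :=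
    ((measurable_mN δ τ).comp measurable_prodMk_left).mul
      ((hh.comp measurable_fst).mul (hh.comp measurable_snd))
  rw [Zop_sq δ τ hh, ← mul_add, ← lintegral_add_left hm1]
  congr 1
  refine lintegral_congr fun p => ?_
  unfold mN mF
  rw [← add_mul, ← mul_add, nr_add_fr, mul_one]

theorem far_R {δ τ q β : ℝ} {h : E2 → ℝ≥0∞} (hh : Measurable h) (x : E2) :
    cc τ ^ 2 * ∫⁻ p, mF δ τ x p * ((1 : ℝ≥0∞) ^ (-β) * (h p.1 ^ q * h p.2 ^ q) ^ (1 / 2 : ℝ))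
      ≤ Ssup δ (fun y => (h y ^ q) ^ (1 / 2 : ℝ)) τ ^ 2 := by
  have hG : Measurable fun y => (h y ^ q) ^ (1 / 2 : ℝ) := (hh.pow_const q).pow_const _
  refine le_trans ?_ (pow_le_pow_left' (Zop_le_Ssup δ hG τ x) 2)
  rw [Zop_sq δ τ hG]
  refine mul_le_mul_right (lintegral_mono fun p => ?_) _
  rw [ENNReal.one_rpow, one_mul, ENNReal.mul_rpow_of_nonneg _ _ (by norm_num)]
  refine mul_le_mul' ?_ le_rfl
  unfold mF fr
  split_ifs <;> simp

theorem sqrt_mul_le (a b : ℝ≥0∞) : (a * b) ^ (1 / 2 : ℝ) ≤ a + b := by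
  calc (a * b) ^ (1 / 2 : ℝ) ≤ ((a + b) ^ (2 : ℝ)) ^ (1 / 2 : ℝ) := by
        refine ENNReal.rpow_le_rpow ?_ (by norm_num)
        rw [ENNReal.rpow_two, pow_two]
        exact mul_le_mul' le_self_add le_add_self
    _ = a + b := by rw [← ENNReal.rpow_mul]; norm_num

theorem near_half {δ τ β : ℝ} (hδ : 0 < δ) (hτ : 0 < τ) (h0 : 0 ≤ β) (h1 : β < 1) (x y : E2) :
    ∫⁻ y', mN δ τ x (y, y') * (ENNReal.ofReal ‖y - y'‖) ^ (-β)
      ≤ ENNReal.ofReal ((16 * (2 / (1 - β) + 1) + 120) * δ * √(δ * τ) ^ (1 - β)) := by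
  refine le_trans ?_ (nearweight hδ hτ h0 h1 x y)
  have hS : MeasurableSet {y' | y' - x ∈ annu δ τ ∧ ‖y - y'‖ ^ 2 < δ * τ} := by
    rw [ofPred_and]
    exact ((measurableSet_annu δ τ).preimage (measurable_sub_const x)).inter
      (measurableSet_lt (by fun_prop) (by fun_prop))
  rw [← lintegral_indicator hS]
  refine lintegral_mono fun y' => ?_
  unfold mN nr kk
  simp only [indicator, mem_ofPred_eq, Pi.one_apply]
  by_cases a1 : y - x ∈ annu δ τ <;> by_cases a2 : y' - x ∈ annu δ τ <;>
    by_cases a3 : ‖y - y'‖ ^ 2 < δ * τ <;> simp [a1, a2, a3]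

theorem mN_symm (δ τ : ℝ) (x y y' : E2) : mN δ τ x (y, y') = mN δ τ x (y', y) := by
  unfold mN nr
  simp only
  rw [norm_sub_rev, mul_comm (kk δ τ x y)]

theorem near_R_aux {w : E2 × E2 → ℝ≥0∞} (hwm : Measurable w) {B : ℝ≥0∞}
    (hb1 : ∀ y, ∫⁻ y', w (y, y') ≤ B) (hb2 : ∀ y', ∫⁻ y, w (y, y') ≤ B)
    {H : E2 → ℝ≥0∞} (hq : Measurable H) :
    ∫⁻ p : E2 × E2, w p * (H p.1 * H p.2) ^ (1 / 2 : ℝ) ≤ 2 * (B * ∫⁻ y, H y) := by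
  have hs1 : ∀ y, Measurable fun y' => w (y, y') := fun y => hwm.comp measurable_prodMk_left
  have hs2 : ∀ y', Measurable fun y => w (y, y') := fun y => hwm.comp measurable_prodMk_right
  have i1 : ∫⁻ p : E2 × E2, w p * H p.1 ≤ B * ∫⁻ y, H y := by
    rw [Measure.volume_eq_prod, lintegral_prod (fun p : E2 × E2 => w p * H p.1) (hwm.mul (hq.comp measurable_fst)).aemeasurable,
      ← lintegral_const_mul _ hq]
    refine lintegral_mono fun y => ?_
    simp only
    rw [lintegral_mul_const _ (hs1 y)]
    exact mul_le_mul' (hb1 y) le_rfl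
  have i2 : ∫⁻ p : E2 × E2, w p * H p.2 ≤ B * ∫⁻ y, H y := by
    rw [Measure.volume_eq_prod, lintegral_prod_symm (fun p : E2 × E2 => w p * H p.2) (hwm.mul (hq.comp measurable_snd)).aemeasurable,
      ← lintegral_const_mul _ hq]
    refine lintegral_mono fun y => ?_
    simp only
    rw [lintegral_mul_const _ (hs2 y)]
    exact mul_le_mul' (hb2 y) le_rfl
  calc _ ≤ ∫⁻ p : E2 × E2, (w p * H p.1 + w p * H p.2) := by
        refine lintegral_mono fun p => ?_
        simp only
        rw [← mul_add]
        exact mul_le_mul' le_rfl (sqrt_mul_le _ _)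
    _ = (∫⁻ p : E2 × E2, w p * H p.1) + ∫⁻ p : E2 × E2, w p * H p.2 :=
        lintegral_add_left (hwm.mul (hq.comp measurable_fst)) _
    _ ≤ _ := by rw [two_mul]; exact add_le_add i1 i2

theorem near_R {δ τ q β : ℝ} {B : ℝ≥0∞} {x : E2}
    (hb1 : ∀ y, ∫⁻ y', mN δ τ x (y, y') * (ENNReal.ofReal ‖y - y'‖) ^ (-β) ≤ B)
    {h : E2 → ℝ≥0∞} (hh : Measurable h) :
    ∫⁻ p : E2 × E2, mN δ τ x p * ((ENNReal.ofReal ‖p.1 - p.2‖) ^ (-β) *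
        (h p.1 ^ q * h p.2 ^ q) ^ (1 / 2 : ℝ)) ≤ 2 * (B * ∫⁻ y, h y ^ q) := by
  have hq : Measurable (fun y => h y ^ q) := hh.pow_const q
  have hmm : Measurable (mN δ τ x) := (measurable_mN δ τ).of_uncurry_left
  have hdm : Measurable fun p : E2 × E2 => (ENNReal.ofReal ‖p.1 - p.2‖) ^ (-β) := by fun_prop
  have hb2 : ∀ y', ∫⁻ y, mN δ τ x (y, y') * (ENNReal.ofReal ‖y - y'‖) ^ (-β) ≤ B := by
    intro y'
    refine le_trans (le_of_eq (lintegral_congr fun y => ?_)) (hb1 y')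
    rw [mN_symm, norm_sub_rev]
  have hw : Measurable (fun p => mN δ τ x p * (ENNReal.ofReal ‖p.1 - p.2‖) ^ (-β)) := hmm.mul hdm
  have key := near_R_aux hw hb1 hb2 hq
  refine le_trans (le_of_eq ?_) key
  refine lintegral_congr fun p => ?_
  rw [mul_assoc]

theorem diag_ne : ∀ᵐ p : E2 × E2, ENNReal.ofReal ‖p.1 - p.2‖ ≠ 0 := by
  have hS : MeasurableSet {p : E2 × E2 | p.1 = p.2} := measurableSet_eq_fun measurable_fst measurable_snd
  have h0 : (volume : Measure (E2 × E2)) {p : E2 × E2 | p.1 = p.2} = 0 := by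
    rw [Measure.volume_eq_prod, Measure.measure_prod_null hS]
    filter_upwards with y
    have : Prod.mk y ⁻¹' {p : E2 × E2 | p.1 = p.2} = {y} := by
      ext z; simp [eq_comm]
    rw [this]; simp
  filter_upwards [compl_mem_ae_iff.2 h0] with p hp
  rw [Ne, ENNReal.ofReal_eq_zero, not_le, norm_pos_iff, sub_ne_zero]
  exact hp

end KS

namespace KS

theorem cc_sq (τ : ℝ) : cc τ ^ 2 = (ENNReal.ofReal τ) ^ (-1 : ℝ) := by
  unfold cc
  rw [← ENNReal.rpow_natCast, ← ENNReal.rpow_mul]; norm_num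

theorem ofReal_sqrt_rpow {δ τ : ℝ} (hδ : 0 < δ) (hτ : 0 < τ) (a : ℝ) :
    ENNReal.ofReal (√(δ * τ) ^ a) = ENNReal.ofReal δ ^ (a / 2) * ENNReal.ofReal τ ^ (a / 2) := by
  rw [ENNReal.ofReal_rpow_of_pos hδ, ENNReal.ofReal_rpow_of_pos hτ,
    ← ENNReal.ofReal_mul (by positivity), Real.sqrt_eq_rpow, ← Real.rpow_mul (by positivity),
    Real.mul_rpow hδ.le hτ.le]
  ring_nf

theorem far_fixed {q r θ1 θ2 θ3 β : ℝ} (hq : 0 < q) (hr : 0 < r) (h1 : 0 < θ1) (h2 : 0 < θ2)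
    (h3 : 0 < θ3) (hsum : θ3 + θ1 + θ2 = 1) (hθq : θ3 + θ1 + θ2 / 2 = 1 / q) (hθr : θ3 = 2 / r)
    (hβ : β * θ2 = θ3) {δ τ : ℝ} (hδ : 0 < δ) (hτ : 0 < τ) 
    {h : E2 → ℝ≥0∞} (hh : Measurable h) :
    (∫⁻ x, (cc τ ^ 2 * ∫⁻ p, mF δ τ x p * (h p.1 * h p.2)) ^ (r / 2)) ^ (1 / r)
      ≤ 120 ^ (1 / r) * ENNReal.ofReal δ ^ (3 / 2 * (1 / r)) * (∫⁻ y, h y ^ q) ^ (θ1 + 2 / r) *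
        (ENNReal.ofReal τ ^ (-(θ1 / 2 + 1 / 2 * (1 / r))) *
        (Ssup δ (fun y => (h y ^ q) ^ (1 / 2 : ℝ)) τ ^ 2) ^ (θ2 / 2)) := by
  refine (PL hq hr h1 h2 h3 hsum hθq hθr hβ hh (measurable_mF δ τ) (mF_01 δ τ)
    (D := fun _ => 1) measurable_const (by simp) (by simp) (far_Q hδ hτ) (far_R hh)).trans
    (le_of_eq ?_)
  set A := ∫⁻ y, h y ^ q
  set S := Ssup δ (fun y => (h y ^ q) ^ (1 / 2 : ℝ)) τ ^ 2
  have ht0 : ENNReal.ofReal τ ≠ 0 := by simpa using hτ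
  have hd0 : ENNReal.ofReal δ ≠ 0 := by simpa using hδ
  have hQ : ENNReal.ofReal (120 * δ * √(δ * τ))
      = 120 * (ENNReal.ofReal δ ^ (3 / 2 : ℝ) * ENNReal.ofReal τ ^ (1 / 2 : ℝ)) := by
    have := ofReal_sqrt_rpow hδ hτ 1
    rw [Real.rpow_one] at this
    rw [ENNReal.ofReal_mul (by positivity), ENNReal.ofReal_mul (by positivity), this,
      show (3 / 2 : ℝ) = 1 + 1 / 2 by norm_num, ENNReal.rpow_add _ _ hd0 ENNReal.ofReal_ne_top,
      ENNReal.rpow_one, show ENNReal.ofReal 120 = 120 by norm_num]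
    ring
  rw [hQ, cc_sq]
  set t := ENNReal.ofReal τ
  set d := ENNReal.ofReal δ
  have htt : t ≠ ∞ := ENNReal.ofReal_ne_top
  have hr1 : 0 ≤ 1 / r := by positivity
  have hA2 : ∀ a : ℝ, (A ^ 2) ^ a = A ^ (2 * a) := fun a => by
    rw [← ENNReal.rpow_natCast, ← ENNReal.rpow_mul]; norm_num
  simp only [ENNReal.mul_rpow_of_nonneg _ _ hr1, ENNReal.mul_rpow_of_nonneg _ _ (half_pos h1).le,
    ← ENNReal.rpow_mul, hA2]
  rw [show θ1 + 2 / r = 2 * (θ1 / 2) + 2 * (1 / r) by ring,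
    ENNReal.rpow_add_of_nonneg _ _ (by positivity) (by positivity),
    show -(θ1 / 2 + 1 / 2 * (1 / r)) = -1 * (θ1 / 2) + (-1 * (1 / r) + 1 / 2 * (1 / r)) by ring,
    ENNReal.rpow_add _ _ ht0 htt, ENNReal.rpow_add _ _ ht0 htt]
  ring

theorem near_fixed {q r θ1 θ2 θ3 β : ℝ} (hq : 0 < q) (hr : 0 < r) (h1 : 0 < θ1) (h2 : 0 < θ2)
    (h3 : 0 < θ3) (hsum : θ3 + θ1 + θ2 = 1) (hθq : θ3 + θ1 + θ2 / 2 = 1 / q) (hθr : θ3 = 2 / r)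
    (hβ : β * θ2 = θ3) (hβ0 : 0 ≤ β) (hβ1 : β < 1) {δ τ : ℝ} (hδ : 0 < δ) (hτ : 0 < τ) 
    {h : E2 → ℝ≥0∞} (hh : Measurable h) :
    (∫⁻ x, (cc τ ^ 2 * ∫⁻ p, mN δ τ x p * (h p.1 * h p.2)) ^ (r / 2)) ^ (1 / r)
      ≤ (240 ^ (1 / r) * (2 * ENNReal.ofReal (16 * (2 / (1 - β) + 1) + 120)) ^ (θ2 / 2)) *
        ENNReal.ofReal δ ^ (3 / 4 * (θ2 + θ3)) * (∫⁻ y, h y ^ q) ^ (1 / q) *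
        (ENNReal.ofReal τ ^ (-(θ1 / 2 + θ2 / 4 + θ3 / 4))) := by
  refine (PL hq hr h1 h2 h3 hsum hθq hθr hβ hh (measurable_mN δ τ) (mN_01 δ τ)
    (D := fun p => ENNReal.ofReal ‖p.1 - p.2‖) (by fun_prop) diag_ne (by simp) (near_Q hδ hτ)
    (fun x => mul_le_mul_right (near_R (near_half hδ hτ hβ0 hβ1 x) hh) _)).trans
    (le_of_eq ?_)
  set A := ∫⁻ y, h y ^ q
  have hcb : 0 < 16 * (2 / (1 - β) + 1) + 120 := by
    have : 0 < 1 - β := by linarith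
    positivity
  set cb := 16 * (2 / (1 - β) + 1) + 120
  have ht0 : ENNReal.ofReal τ ≠ 0 := by simpa using hτ
  have hd0 : ENNReal.ofReal δ ≠ 0 := by simpa using hδ
  have hQ : ENNReal.ofReal (240 * δ ^ 2 * τ)
      = 240 * (ENNReal.ofReal δ ^ (2 : ℝ) * ENNReal.ofReal τ) := by
    rw [ENNReal.ofReal_mul (by positivity), ENNReal.ofReal_mul (by positivity),
      ENNReal.ofReal_pow hδ.le, show ENNReal.ofReal 240 = 240 by norm_num, ENNReal.rpow_two]
    ring
  have hR : ENNReal.ofReal (cb * δ * √(δ * τ) ^ (1 - β)) = ENNReal.ofReal cb *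
      (ENNReal.ofReal δ ^ (1 + (1 - β) / 2) * ENNReal.ofReal τ ^ ((1 - β) / 2)) := by
    rw [ENNReal.ofReal_mul (by positivity), ENNReal.ofReal_mul (by positivity),
      ofReal_sqrt_rpow hδ hτ, ENNReal.rpow_add _ _ hd0 ENNReal.ofReal_ne_top,
      ENNReal.rpow_one]
    ring
  rw [hQ, hR, cc_sq]
  set t := ENNReal.ofReal τ
  set d := ENNReal.ofReal δ
  set B := ENNReal.ofReal cb
  have htt : t ≠ ∞ := ENNReal.ofReal_ne_top
  have hdt : d ≠ ∞ := ENNReal.ofReal_ne_top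
  have hr1 : 0 ≤ 1 / r := by positivity
  have hA2 : ∀ a : ℝ, (A ^ 2) ^ a = A ^ (2 * a) := fun a => by
    rw [← ENNReal.rpow_natCast, ← ENNReal.rpow_mul]; norm_num
  simp only [ENNReal.mul_rpow_of_nonneg _ _ hr1, ENNReal.mul_rpow_of_nonneg _ _ (half_pos h1).le,
    ENNReal.mul_rpow_of_nonneg _ _ (half_pos h2).le, ← ENNReal.rpow_mul, hA2]
  have h3r : 1 / r = θ3 / 2 := by rw [hθr]; ring
  rw [h3r] at hr1 ⊢
  rw [← hθq, show θ3 + θ1 + θ2 / 2 = 2 * (θ1 / 2) + 2 * (θ3 / 2) + θ2 / 2 by ring,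
    rpow_split3 _ (by positivity) (by positivity) (by positivity),
    show 3 / 4 * (θ2 + θ3) = (1 + (1 - β) / 2) * (θ2 / 2) + 2 * (θ3 / 2) by
      rw [← hβ]; ring,
    ENNReal.rpow_add _ _ hd0 hdt,
    show -(θ1 / 2 + θ2 / 4 + θ3 / 4) = -1 * (θ1 / 2) + (-1 * (θ2 / 2) + ((1 - β) / 2 * (θ2 / 2)
      + (-1 * (θ3 / 2) + θ3 / 2))) by rw [← hβ]; ring]
  simp only [ENNReal.rpow_add _ _ ht0 htt]
  ring

theorem rpow_le_one_add {T a : ℝ} (hT : 0 < T) (h0 : 0 ≤ a) (h1 : a ≤ 1) :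
    ENNReal.ofReal T ^ a ≤ ENNReal.ofReal (1 + T) := by
  rw [ENNReal.ofReal_rpow_of_pos hT]
  refine ENNReal.ofReal_le_ofReal ?_
  calc T ^ a ≤ (1 + T) ^ a := by gcongr; linarith
    _ ≤ (1 + T) ^ (1 : ℝ) := Real.rpow_le_rpow_of_exponent_le (by linarith) h1
    _ = 1 + T := Real.rpow_one _

theorem powInt_zero' {e T : ℝ} (he : e < 1) (hT : 0 < T) :
    ∫⁻ τ in Ioc 0 T, ENNReal.ofReal τ ^ (-e)
      = ENNReal.ofReal (1 / (1 - e)) * ENNReal.ofReal T ^ (1 - e) := by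
  rw [ENNReal.ofReal_rpow_of_pos hT, ← ENNReal.ofReal_mul (by
    have : 0 < 1 - e := by linarith
    positivity)]
  rw [show 1 / (1 - e) * T ^ (1 - e) = T ^ (1 - e) / (1 - e) by ring]
  rw [← powInt_zero he hT]
  refine setLIntegral_congr_fun measurableSet_Ioc fun τ hτ => ?_
  rw [abs_of_pos hτ.1]

end KS

namespace KS

theorem far_int {q r θ1 θ2 θ3 : ℝ} (hq : 0 < q) (hr : 0 < r) (h1 : 0 < θ1) (h2 : 0 < θ2)
    (h3 : 0 < θ3) (hsum : θ3 + θ1 + θ2 = 1) (hθq : θ3 + θ1 + θ2 / 2 = 1 / q) (hθr : θ3 = 2 / r)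
    {δ T : ℝ} (hδ : 0 < δ) (hT : 0 < T)
    {h : E2 → ℝ≥0∞} (hh : Measurable h) :
    ∫⁻ τ in Ioc 0 T, 120 ^ (1 / r) * ENNReal.ofReal δ ^ (3 / 2 * (1 / r)) *
      (∫⁻ y, h y ^ q) ^ (θ1 + 2 / r) *
        (ENNReal.ofReal τ ^ (-(θ1 / 2 + 1 / 2 * (1 / r))) *
        (Ssup δ (fun y => (h y ^ q) ^ (1 / 2 : ℝ)) τ ^ 2) ^ (θ2 / 2))
    ≤ (120 ^ (1 / r) * (ENNReal.ofReal (1 / (1 - (θ1 / 2 + 1 / 2 * (1 / r)) * q)) ^ (1 / q) *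
        1200 ^ (θ2 / 2))) * ENNReal.ofReal (1 + T) * ENNReal.ofReal δ ^ (3 / 4 * (θ2 + θ3)) *
        (∫⁻ y, h y ^ q) ^ (1 / q) := by
  set A := ∫⁻ y, h y ^ q with hA
  set e := θ1 / 2 + 1 / 2 * (1 / r) with he
  have hr1 : 1 / r = θ3 / 2 := by rw [hθr]; ring
  have heq : e * q < 1 := by
    rw [← lt_div_iff₀ hq, ← hθq, he, hr1]; linarith
  have hG : Measurable fun y => (h y ^ q) ^ (1 / 2 : ℝ) := (hh.pow_const q).pow_const _
  set S : ℝ → ℝ≥0∞ := fun τ => Ssup δ (fun y => (h y ^ q) ^ (1 / 2 : ℝ)) τ ^ 2 with hS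
  have hSm : Measurable S := (measurable_Ssup δ hG).pow_const 2
  have hSi : ∫⁻ τ in Ioc 0 T, S τ ≤ 1200 * ENNReal.ofReal δ ^ (3 / 2 : ℝ)
      * ENNReal.ofReal T ^ (1 / 2 : ℝ) * A := by
    refine (Ssup_bound hδ hT hG).trans (le_of_eq ?_)
    have e1 : ∫⁻ y, ((h y ^ q) ^ (1 / 2 : ℝ)) ^ 2 = A := by
      refine lintegral_congr fun y => ?_
      rw [← ENNReal.rpow_natCast, ← ENNReal.rpow_mul]; norm_num
    rw [e1]
    congr 1
    rw [ENNReal.ofReal_mul (by positivity), ENNReal.ofReal_mul (by positivity),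
      ENNReal.ofReal_mul (by positivity), Real.sqrt_eq_rpow, Real.sqrt_eq_rpow,
      ← ENNReal.ofReal_rpow_of_pos hδ, ← ENNReal.ofReal_rpow_of_pos hT,
      show (3 / 2 : ℝ) = 1 + 1 / 2 by norm_num,
      ENNReal.rpow_add _ _ (by simpa using hδ) ENNReal.ofReal_ne_top, ENNReal.rpow_one]
    norm_num
    ring
  have hmt : Measurable fun τ : ℝ => ENNReal.ofReal τ ^ (-(e * q)) := by fun_prop
  have hH : ∫⁻ τ in Ioc 0 T, ENNReal.ofReal τ ^ (-e) * S τ ^ (θ2 / 2)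
      ≤ (∫⁻ τ in Ioc 0 T, ENNReal.ofReal τ ^ (-(e * q))) ^ (1 / q)
        * (∫⁻ τ in Ioc 0 T, S τ) ^ (θ2 / 2) := by
    have := ENNReal.lintegral_mul_norm_pow_le (μ := volume.restrict (Ioc 0 T))
      hmt.aemeasurable hSm.aemeasurable (p := 1 / q) (q := θ2 / 2) (by positivity) (by positivity)
      (by linarith)
    refine le_trans (le_of_eq (lintegral_congr fun τ => ?_)) this
    rw [← ENNReal.rpow_mul, show -(e * q) * (1 / q) = -e by field_simp]
  have hm2 : Measurable fun τ : ℝ => ENNReal.ofReal τ ^ (-e) * S τ ^ (θ2 / 2) :=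
    Measurable.mul (by fun_prop) (hSm.pow_const _)
  rw [lintegral_const_mul _ hm2]
  rw [powInt_zero' heq hT] at hH
  have hTp : ENNReal.ofReal T ^ ((1 - e * q) * (1 / q)) * ENNReal.ofReal T ^ (1 / 2 * (θ2 / 2))
      ≤ ENNReal.ofReal (1 + T) := by
    have e3 : (1 - e * q) * (1 / q) = 1 / q - e := by field_simp
    rw [← ENNReal.rpow_add _ _ (by simpa using hT) ENNReal.ofReal_ne_top, e3]
    refine rpow_le_one_add hT ?_ ?_ <;> rw [← hθq, he, hr1] <;> linarith
  set dd := ENNReal.ofReal δ with hdd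
  set t := ENNReal.ofReal T
  set B := ENNReal.ofReal (1 / (1 - e * q))
  calc 120 ^ (1 / r) * dd ^ (3 / 2 * (1 / r)) * A ^ (θ1 + 2 / r) *
        ∫⁻ τ in Ioc 0 T, ENNReal.ofReal τ ^ (-e) * S τ ^ (θ2 / 2)
      ≤ 120 ^ (1 / r) * dd ^ (3 / 2 * (1 / r)) * A ^ (θ1 + 2 / r) *
        ((B * t ^ (1 - e * q)) ^ (1 / q) *
          (1200 * dd ^ (3 / 2 : ℝ) * t ^ (1 / 2 : ℝ) * A) ^ (θ2 / 2)) := by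
        refine mul_le_mul' le_rfl (hH.trans (mul_le_mul' le_rfl ?_))
        exact ENNReal.rpow_le_rpow hSi (by positivity)
    _ = (120 ^ (1 / r) * (B ^ (1 / q) * 1200 ^ (θ2 / 2))) *
        (t ^ ((1 - e * q) * (1 / q)) * t ^ (1 / 2 * (θ2 / 2))) *
        (dd ^ (3 / 2 * (1 / r)) * dd ^ (3 / 2 * (θ2 / 2))) *
        (A ^ (θ1 + 2 / r) * A ^ (θ2 / 2)) := by
        simp only [ENNReal.mul_rpow_of_nonneg _ _ (half_pos h2).le,
          ENNReal.mul_rpow_of_nonneg _ _ (show 0 ≤ 1 / q by positivity), ← ENNReal.rpow_mul]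
        ring
    _ ≤ _ := by
        rw [← ENNReal.rpow_add_of_nonneg (3 / 2 * (1 / r)) (3 / 2 * (θ2 / 2)) (by positivity)
            (by positivity),
          ← ENNReal.rpow_add_of_nonneg (θ1 + 2 / r) (θ2 / 2) (by positivity) (by positivity),
          show θ1 + 2 / r + θ2 / 2 = 1 / q by rw [← hθr]; linarith,
          show 3 / 2 * (1 / r) + 3 / 2 * (θ2 / 2) = 3 / 4 * (θ2 + θ3) by rw [hr1]; ring]
        gcongr

theorem near_int {e T : ℝ} (he0 : 0 ≤ e) (he : e < 1) (hT : 0 < T) (X : ℝ≥0∞) :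
    ∫⁻ τ in Ioc 0 T, X * ENNReal.ofReal τ ^ (-e)
      ≤ ENNReal.ofReal (1 / (1 - e)) * (X * ENNReal.ofReal (1 + T)) := by
  rw [lintegral_const_mul _ (by fun_prop), powInt_zero' he hT]
  have := rpow_le_one_add hT (a := 1 - e) (by linarith) (by linarith)
  calc _ = ENNReal.ofReal (1 / (1 - e)) * (X * ENNReal.ofReal T ^ (1 - e)) := by ring
    _ ≤ _ := by gcongr

theorem Zop_split_le {r : ℝ} (hr : 2 ≤ r) (δ τ : ℝ) {h : E2 → ℝ≥0∞} (hh : Measurable h) :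
    (∫⁻ x, Zop δ h τ x ^ r) ^ (1 / r)
      ≤ (∫⁻ x, (cc τ ^ 2 * ∫⁻ p, mN δ τ x p * (h p.1 * h p.2)) ^ (r / 2)) ^ (1 / r)
       + (∫⁻ x, (cc τ ^ 2 * ∫⁻ p, mF δ τ x p * (h p.1 * h p.2)) ^ (r / 2)) ^ (1 / r) := by
  have hX : Measurable fun w : E2 × (E2 × E2) => h w.2.1 * h w.2.2 :=
    (hh.comp (by fun_prop)).mul (hh.comp (by fun_prop))
  have hN : Measurable fun x => cc τ ^ 2 * ∫⁻ p, mN δ τ x p * (h p.1 * h p.2) :=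
    (Measurable.lintegral_prod_right' (f := fun w : E2 × (E2 × E2) => mN δ τ w.1 w.2 *
      (h w.2.1 * h w.2.2)) ((measurable_mN δ τ).mul hX)).const_mul _
  have hF : Measurable fun x => cc τ ^ 2 * ∫⁻ p, mF δ τ x p * (h p.1 * h p.2) :=
    (Measurable.lintegral_prod_right' (f := fun w : E2 × (E2 × E2) => mF δ τ w.1 w.2 *
      (h w.2.1 * h w.2.2)) ((measurable_mF δ τ).mul hX)).const_mul _
  have e1 : ∀ x, Zop δ h τ x ^ r = (cc τ ^ 2 * (∫⁻ p, mN δ τ x p * (h p.1 * h p.2))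
      + cc τ ^ 2 * ∫⁻ p, mF δ τ x p * (h p.1 * h p.2)) ^ (r / 2) := by
    intro x
    rw [← Zop_sq_split δ τ hh, ← ENNReal.rpow_natCast, ← ENNReal.rpow_mul]
    congr 1
    push_cast; ring
  simp_rw [e1]
  have hp := ENNReal.lintegral_Lp_add_le (μ := volume) hN.aemeasurable hF.aemeasurable
    (p := r / 2) (by linarith)
  have hp2 := ENNReal.rpow_le_rpow hp (show (0:ℝ) ≤ 1 / 2 by norm_num)
  have hp3 := hp2.trans (ENNReal.rpow_add_le_add_rpow _ _ (by norm_num) (by norm_num))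
  simp only [← ENNReal.rpow_mul, Pi.add_apply] at hp3
  have : 1 / (r / 2) * (1 / 2) = 1 / r := by field_simp
  rw [this] at hp3
  exact hp3

/-- The basic smoothing estimate for one annulus. -/
theorem lemmaS {q r : ℝ} (hq : 0 < q) (hr : 2 ≤ r) (hc1 : 1 / 2 + 1 / r < 1 / q)
    (hc2 : 1 / q + 1 / r < 1) : ∃ C : ℝ≥0∞, C ≠ ∞ ∧ ∀ δ : ℝ, 0 < δ → ∀ T : ℝ, 0 < T →
      ∀ h : E2 → ℝ≥0∞, Measurable h →
      ∫⁻ τ in Ioc 0 T, (∫⁻ x, Zop δ h τ x ^ r) ^ (1 / r)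
        ≤ C * ENNReal.ofReal (1 + T) * ENNReal.ofReal δ ^ (3 / 2 * (1 - 1 / q) + 3 / 2 * (1 / r)) *
          (∫⁻ y, h y ^ q) ^ (1 / q) := by
  have hr0 : 0 < r := by linarith
  have hrp : 0 < 1 / r := by positivity
  obtain ⟨θ2, hθ2⟩ : ∃ θ2, θ2 = 2 * (1 - 1 / q) := ⟨_, rfl⟩
  obtain ⟨θ3, hθ3⟩ : ∃ θ3, θ3 = 2 / r := ⟨_, rfl⟩
  have hθ3' : θ3 = 2 * (1 / r) := by rw [hθ3]; ring
  obtain ⟨θ1, hθ1⟩ : ∃ θ1, θ1 = 1 - θ2 - θ3 := ⟨_, rfl⟩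
  obtain ⟨β, hβd⟩ : ∃ β, β = θ3 / θ2 := ⟨_, rfl⟩
  have h3 : 0 < θ3 := by rw [hθ3']; linarith
  have h2 : 0 < θ2 := by rw [hθ2]; linarith
  have h1 : 0 < θ1 := by rw [hθ1, hθ2, hθ3']; linarith
  have hβ : β * θ2 = θ3 := by rw [hβd]; field_simp
  have hβ0 : 0 ≤ β := by rw [hβd]; positivity
  have hβ1 : β < 1 := by
    rw [hβd, div_lt_one h2, hθ3', hθ2]; linarith
  have hsum : θ3 + θ1 + θ2 = 1 := by rw [hθ1]; ring
  have hθq : θ3 + θ1 + θ2 / 2 = 1 / q := by rw [hθ1, hθ2]; ring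
  have hκ : 3 / 2 * (1 - 1 / q) + 3 / 2 * (1 / r) = 3 / 4 * (θ2 + θ3) := by
    rw [hθ2, hθ3']; ring
  rw [hκ]
  set e := θ1 / 2 + θ2 / 4 + θ3 / 4 with he
  have he1 : e < 1 := by rw [he]; linarith
  have he0 : 0 ≤ e := by rw [he]; positivity
  set CN : ℝ≥0∞ := 240 ^ (1 / r) *
    (2 * ENNReal.ofReal (16 * (2 / (1 - β) + 1) + 120)) ^ (θ2 / 2) with hCN
  set CF : ℝ≥0∞ := 120 ^ (1 / r) * (ENNReal.ofReal (1 / (1 - (θ1 / 2 + 1 / 2 * (1 / r)) * q)) ^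
    (1 / q) * 1200 ^ (θ2 / 2)) with hCF
  have hCNt : CN ≠ ∞ := by
    refine ENNReal.mul_ne_top (ENNReal.rpow_ne_top_of_nonneg hrp.le (by simp))
      (ENNReal.rpow_ne_top_of_nonneg (by positivity) (ENNReal.mul_ne_top (by simp) (by simp)))
  have hCFt : CF ≠ ∞ := by
    refine ENNReal.mul_ne_top (ENNReal.rpow_ne_top_of_nonneg hrp.le (by simp))
      (ENNReal.mul_ne_top (ENNReal.rpow_ne_top_of_nonneg (by positivity) (by simp))
      (ENNReal.rpow_ne_top_of_nonneg (by positivity) (by simp)))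
  refine ⟨ENNReal.ofReal (1 / (1 - e)) * CN + CF,
    ENNReal.add_ne_top.2 ⟨ENNReal.mul_ne_top (by simp) hCNt, hCFt⟩, ?_⟩
  intro δ hδ T hT h hh
  have hG : Measurable fun y => (h y ^ q) ^ (1 / 2 : ℝ) := (hh.pow_const q).pow_const _
  have hmn : Measurable fun τ : ℝ => CN * ENNReal.ofReal δ ^ (3 / 4 * (θ2 + θ3)) *
      (∫⁻ y, h y ^ q) ^ (1 / q) * ENNReal.ofReal τ ^ (-e) := by fun_prop
  calc ∫⁻ τ in Ioc 0 T, (∫⁻ x, Zop δ h τ x ^ r) ^ (1 / r)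
      ≤ ∫⁻ τ in Ioc 0 T, (CN * ENNReal.ofReal δ ^ (3 / 4 * (θ2 + θ3)) *
          (∫⁻ y, h y ^ q) ^ (1 / q) * ENNReal.ofReal τ ^ (-e) +
        120 ^ (1 / r) * ENNReal.ofReal δ ^ (3 / 2 * (1 / r)) *
        (∫⁻ y, h y ^ q) ^ (θ1 + 2 / r) *
        (ENNReal.ofReal τ ^ (-(θ1 / 2 + 1 / 2 * (1 / r))) *
        (Ssup δ (fun y => (h y ^ q) ^ (1 / 2 : ℝ)) τ ^ 2) ^ (θ2 / 2))) := by
        refine setLIntegral_mono' measurableSet_Ioc fun τ hτ => ?_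
        refine (Zop_split_le hr δ τ hh).trans (add_le_add ?_ ?_)
        · exact near_fixed hq hr0 h1 h2 h3 hsum hθq hθ3 hβ hβ0 hβ1 hδ hτ.1 hh
        · exact far_fixed hq hr0 h1 h2 h3 hsum hθq hθ3 hβ hδ hτ.1 hh
    _ ≤ ENNReal.ofReal (1 / (1 - e)) * (CN * ENNReal.ofReal δ ^ (3 / 4 * (θ2 + θ3)) *
          (∫⁻ y, h y ^ q) ^ (1 / q) * ENNReal.ofReal (1 + T)) +
        CF * ENNReal.ofReal (1 + T) * ENNReal.ofReal δ ^ (3 / 4 * (θ2 + θ3)) *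
        (∫⁻ y, h y ^ q) ^ (1 / q) := by
        rw [lintegral_add_left hmn]
        exact add_le_add (near_int he0 he1 hT _) (far_int hq hr0 h1 h2 h3 hsum hθq hθ3 hδ hT hh)
    _ = _ := by ring

end KS

namespace KS

theorem one_le_pZero (p : E2) : 1 ≤ pZero p := by
  unfold pZero
  rw [Real.one_le_sqrt]; nlinarith [norm_nonneg p]

theorem pZero_pos (p : E2) : 0 < pZero p := lt_of_lt_of_le one_pos (one_le_pZero p)

theorem norm_le_pZero (p : E2) : ‖p‖ ≤ pZero p := by
  unfold pZero
  exact Real.le_sqrt_of_sq_le (by linarith)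

theorem measurable_pZero : Measurable pZero := by unfold pZero; fun_prop

theorem inv_ball {R : ℝ} (hR : 0 < R) :
    ∫⁻ p in {p : E2 | pZero p ≤ R}, ENNReal.ofReal (1 / pZero p)
      ≤ ENNReal.ofReal (2 * Real.pi * R) := by
  set f : ℝ → ℝ := (Iic R).indicator fun y => 1 / √(1 + y ^ 2) with hf
  have hfm : Measurable f := by
    refine Measurable.indicator ?_ measurableSet_Iic
    fun_prop
  have hf0 : ∀ y, 0 ≤ f y := fun y => indicator_nonneg (fun y _ => by positivity) y
  have hfd : Module.finrank ℝ E2 = 2 := finrank_euclideanSpace_fin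
  have hle : ∀ y ∈ Ioi (0 : ℝ), y * f y ≤ (Ioc 0 R).indicator 1 y := by
    intro y hy
    have hy0 : 0 < y := hy
    by_cases h : y ≤ R
    · have : y ∈ Ioc 0 R := ⟨hy, h⟩
      rw [hf, indicator_of_mem (show y ∈ Iic R from h), indicator_of_mem this, Pi.one_apply,
        mul_one_div, div_le_one (by positivity)]
      exact Real.le_sqrt_of_sq_le (by linarith)
    · have h1 : y ∉ Iic R := h
      rw [hf, indicator_of_notMem h1, mul_zero]
      exact indicator_nonneg (fun _ _ => zero_le_one) _
  have hone : Integrable ((Ioc 0 R).indicator (1 : ℝ → ℝ)) (volume.restrict (Ioi 0)) := by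
    refine Integrable.restrict ?_
    rw [integrable_indicator_iff measurableSet_Ioc]
    exact integrableOn_const (by simp) (by simp)
  have hyint : IntegrableOn (fun y : ℝ => y * f y) (Ioi 0) := by
    refine Integrable.mono' hone (measurable_id.mul hfm).aestronglyMeasurable ?_
    refine (ae_restrict_iff' measurableSet_Ioi).2 (Filter.Eventually.of_forall fun y hy => ?_)
    rw [Real.norm_of_nonneg (mul_nonneg (le_of_lt hy) (hf0 y))]
    exact hle y hy
  have hI : Integrable (fun p : E2 => f ‖p‖) := by
    rw [integrable_fun_norm_addHaar (volume : Measure E2), hfd]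
    simpa using hyint
  have hval : ∫ p : E2, f ‖p‖ ≤ 2 * Real.pi * R := by
    rw [integral_fun_norm_addHaar (volume : Measure E2), hfd]
    have hb : (volume : Measure E2).real (Metric.ball 0 1) = Real.pi := by
      rw [Measure.real, EuclideanSpace.volume_ball_fin_two]
      simp [Real.pi_pos.le]
    rw [hb]
    have h1 : ∫ y in Ioi (0 : ℝ), y * f y ≤ R := by
      calc ∫ y in Ioi (0 : ℝ), y * f y ≤ ∫ y in Ioi (0 : ℝ), (Ioc 0 R).indicator 1 y :=
            setIntegral_mono_on hyint hone measurableSet_Ioi hle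
        _ = R := by
            rw [setIntegral_indicator measurableSet_Ioc]
            have : Ioi 0 ∩ Ioc 0 R = Ioc 0 R := by
              ext z; simp only [mem_inter_iff, mem_Ioi, mem_Ioc]; tauto
            rw [this]; simp [hR.le]
    simp only [Nat.add_one_sub_one, pow_one, smul_eq_mul, nsmul_eq_mul]
    push_cast
    have := Real.pi_pos
    nlinarith
  calc ∫⁻ p in {p : E2 | pZero p ≤ R}, ENNReal.ofReal (1 / pZero p)
      ≤ ∫⁻ p : E2, ENNReal.ofReal (f ‖p‖) := by
        rw [← lintegral_indicator (measurableSet_le measurable_pZero measurable_const)]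
        refine lintegral_mono fun p => ?_
        by_cases h : pZero p ≤ R
        · have h1 : ‖p‖ ∈ Iic R := (norm_le_pZero p).trans h
          rw [indicator_of_mem (show p ∈ {p : E2 | pZero p ≤ R} from h), hf, indicator_of_mem h1]
          rfl
        · rw [indicator_of_notMem (show p ∉ {p : E2 | pZero p ≤ R} from h)]
          exact bot_le
    _ = ENNReal.ofReal (∫ p : E2, f ‖p‖) :=
        (ofReal_integral_eq_lintegral_ofReal hI (Filter.Eventually.of_forall fun p => hf0 _)).symm
    _ ≤ _ := ENNReal.ofReal_le_ofReal hval

/-- Pointwise interpolation bound. -/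
theorem g_pointwise {C₀ a : ℝ} (hC : 0 < C₀) (ha : 0 ≤ a) {φ : E2 → ℝ} (hφm : Measurable φ)
    (hφ0 : ∀ p, 0 ≤ φ p) (hφ : ∀ᵐ p, φ p ≤ C₀) :
    (∫⁻ p, ENNReal.ofReal (φ p / pZero p)) ^ (a + 2)
      ≤ ENNReal.ofReal (2 * Real.pi * C₀ + 1) ^ (a + 2) *
        ∫⁻ p, ENNReal.ofReal (φ p * pZero p ^ a) := by
  set m := ∫⁻ p, ENNReal.ofReal (φ p * pZero p ^ a) with hm
  have ha2 : 0 < a + 2 := by linarith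
  have hpm := measurable_pZero
  have hmeas : Measurable fun p => ENNReal.ofReal (φ p * pZero p ^ a) := by fun_prop
  have hmeas1 : Measurable fun p => ENNReal.ofReal (φ p / pZero p) := by fun_prop
  by_cases hmt : m = ∞
  · rw [hmt, ENNReal.mul_top]
    · exact le_top
    · rw [Ne, ENNReal.rpow_eq_zero_iff_of_pos ha2, ENNReal.ofReal_eq_zero]
      have := Real.pi_pos
      have : 0 < 2 * Real.pi * C₀ + 1 := by positivity
      linarith
  by_cases hm0 : m = 0
  · have h1 := (lintegral_eq_zero_iff hmeas).1 hm0
    have h2 : ∫⁻ p, ENNReal.ofReal (φ p / pZero p) = 0 := by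
      rw [lintegral_eq_zero_iff hmeas1]
      filter_upwards [h1] with p hp
      simp only [Pi.zero_apply, ENNReal.ofReal_eq_zero] at hp ⊢
      have hw := pZero_pos p
      have hwa : 0 < pZero p ^ a := Real.rpow_pos_of_pos hw a
      have : φ p ≤ 0 := by
        by_contra hc
        have := mul_pos (not_le.1 hc) hwa
        linarith
      exact div_nonpos_of_nonpos_of_nonneg this hw.le
    rw [h2, ENNReal.zero_rpow_of_pos ha2]; exact bot_le
  -- main case
  have key : ∀ R : ℝ, 0 < R → ∫⁻ p, ENNReal.ofReal (φ p / pZero p)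
      ≤ ENNReal.ofReal (2 * Real.pi * C₀ * R) + ENNReal.ofReal (R ^ (-(a + 1))) * m := by
    intro R hR
    have hS : MeasurableSet {p : E2 | pZero p ≤ R} := measurableSet_le hpm measurable_const
    rw [← lintegral_add_compl _ hS]
    refine add_le_add ?_ ?_
    · calc _ ≤ ∫⁻ p in {p : E2 | pZero p ≤ R}, ENNReal.ofReal C₀ * ENNReal.ofReal (1 / pZero p) := by
            refine lintegral_mono_ae ?_
            filter_upwards [ae_restrict_of_ae hφ] with p hp
            rw [← ENNReal.ofReal_mul hC.le, mul_one_div]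
            refine ENNReal.ofReal_le_ofReal ?_
            have := pZero_pos p
            gcongr
        _ = ENNReal.ofReal C₀ * ∫⁻ p in {p : E2 | pZero p ≤ R}, ENNReal.ofReal (1 / pZero p) :=
            lintegral_const_mul _ (by fun_prop)
        _ ≤ ENNReal.ofReal C₀ * ENNReal.ofReal (2 * Real.pi * R) := by gcongr; exact inv_ball hR
        _ = _ := by rw [← ENNReal.ofReal_mul hC.le]; ring_nf
    · rw [hm, ← lintegral_const_mul _ hmeas]
      refine le_trans ?_ (setLIntegral_le_lintegral {p : E2 | pZero p ≤ R}ᶜ _)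
      refine setLIntegral_mono' hS.compl fun p hp => ?_
      rw [← ENNReal.ofReal_mul (by positivity)]
      refine ENNReal.ofReal_le_ofReal ?_
      have hp' : R < pZero p := not_le.1 hp
      have hw := pZero_pos p
      have h1 : R ^ (a + 1) ≤ pZero p ^ (a + 1) := by gcongr
      have h2 : pZero p ^ (a + 1) = pZero p ^ a * pZero p := by
        rw [Real.rpow_add hw, Real.rpow_one]
      have h3 : 0 < R ^ (a + 1) := by positivity
      rw [Real.rpow_neg hR.le, div_le_iff₀ hw]
      calc φ p = (R ^ (a + 1))⁻¹ * (φ p * R ^ (a + 1)) := by field_simp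
        _ ≤ (R ^ (a + 1))⁻¹ * (φ p * (pZero p ^ a * pZero p)) := by
            rw [← h2]; have := hφ0 p; gcongr
        _ = _ := by ring
  have hmr : 0 < m.toReal := ENNReal.toReal_pos hm0 hmt
  set M := m.toReal with hM
  have hmM : m = ENNReal.ofReal M := (ENNReal.ofReal_toReal hmt).symm
  have hk := key (M ^ (1 / (a + 2))) (by positivity)
  have e1 : (M ^ (1 / (a + 2))) ^ (-(a + 1)) * M = M ^ (1 / (a + 2)) := by
    rw [← Real.rpow_mul hmr.le]
    nth_rewrite 2 [← Real.rpow_one M]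
    rw [← Real.rpow_add hmr]
    congr 1
    field_simp; ring
  rw [hmM, ← ENNReal.ofReal_mul (by positivity), e1, ← ENNReal.ofReal_add (by positivity)
    (by positivity), show 2 * Real.pi * C₀ * M ^ (1 / (a + 2)) + M ^ (1 / (a + 2))
      = (2 * Real.pi * C₀ + 1) * M ^ (1 / (a + 2)) by ring] at hk
  refine (ENNReal.rpow_le_rpow hk ha2.le).trans (le_of_eq ?_)
  rw [ENNReal.ofReal_mul (by positivity), ENNReal.mul_rpow_of_nonneg _ _ ha2.le,
    ENNReal.ofReal_rpow_of_pos (show 0 < M ^ (1 / (a + 2)) by positivity),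
    ← Real.rpow_mul hmr.le, one_div_mul_cancel ha2.ne', Real.rpow_one, hmM]

end KS

namespace KS

theorem interp {q r θ : ℝ} (hq : 0 < q) (hr : 0 < r) (h0 : 0 ≤ θ) (h1 : θ ≤ 1)
    (h : 1 / 2 + (1 - θ) / 3 + θ / r = 1 / q) {k g : E2 → ℝ≥0∞} (hk : Measurable k)
    (hg : Measurable g) :
    (∫⁻ y, (k y * g y) ^ q) ^ (1 / q)
      ≤ (∫⁻ y, k y ^ (2 : ℝ)) ^ (1 / 2 : ℝ) * (∫⁻ y, g y ^ (3 : ℝ)) ^ ((1 - θ) / 3)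
        * (∫⁻ y, g y ^ r) ^ (θ / r) := by
  have h1' : 0 ≤ 1 - θ := by linarith
  have e := holder3 (μ := volume) (hk.pow_const (2 : ℝ)).aemeasurable
    (hg.pow_const (3 : ℝ)).aemeasurable (hg.pow_const r).aemeasurable
    (a := 1 / 2 * q) (b := (1 - θ) / 3 * q) (c := θ / r * q) (by positivity) (by positivity)
    (by positivity) (by rw [← add_mul, ← add_mul, h]; field_simp)
  have e2 : ∀ y, (k y * g y) ^ q = (k y ^ (2 : ℝ)) ^ (1 / 2 * q) * (g y ^ (3 : ℝ)) ^ ((1 - θ) / 3 * q)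
      * (g y ^ r) ^ (θ / r * q) := by
    intro y
    rw [← ENNReal.rpow_mul, ← ENNReal.rpow_mul, ← ENNReal.rpow_mul, mul_assoc,
      ← ENNReal.rpow_add_of_nonneg _ _ (by positivity) (by positivity),
      ENNReal.mul_rpow_of_nonneg _ _ hq.le]
    congr 2
    · ring
    · have : r * (θ / r * q) = θ * q := by field_simp
      rw [this]; ring
  simp_rw [e2]
  refine (ENNReal.rpow_le_rpow e (show 0 ≤ 1 / q by positivity)).trans (le_of_eq ?_)
  have e3 : ∀ a : ℝ, a * q * (1 / q) = a := fun a => by field_simp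
  rw [ENNReal.mul_rpow_of_nonneg _ _ (by positivity), ENNReal.mul_rpow_of_nonneg _ _ (by positivity)]
  simp only [← ENNReal.rpow_mul, e3]

theorem sum_min {a : ℝ} (ha : 1 < a) : ∃ C : ℝ≥0∞, C ≠ ∞ ∧ ∀ Λ : ℝ, 0 < Λ →
    ∑' k : ℤ, min (ENNReal.ofReal (a ^ (-k) * Λ)) (ENNReal.ofReal (a ^ k * Λ⁻¹)) ≤ C := by
  have ha0 : 0 < a := by linarith
  set ρ : ℝ≥0∞ := ENNReal.ofReal a⁻¹ with hρ
  have hρ1 : ρ < 1 := by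
    rw [hρ, ← ENNReal.ofReal_one, ENNReal.ofReal_lt_ofReal_iff one_pos]
    exact inv_lt_one_of_one_lt₀ ha
  have hgeo : ∑' n : ℕ, ρ ^ n ≠ ∞ := by
    rw [ENNReal.tsum_geometric]
    simp only [ne_eq, ENNReal.inv_eq_top, tsub_eq_zero_iff_le, not_le, hρ1]
  refine ⟨ENNReal.ofReal a * (∑' n : ℕ, ρ ^ n + ∑' n : ℕ, ρ ^ n),
    ENNReal.mul_ne_top (by simp) (ENNReal.add_ne_top.2 ⟨hgeo, hgeo⟩), ?_⟩
  intro Λ hΛ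
  obtain ⟨n, hn⟩ := exists_mem_Ioc_zpow hΛ ha
  have hb : ∀ k : ℤ, min (ENNReal.ofReal (a ^ (-(k + (n + 1))) * Λ))
      (ENNReal.ofReal (a ^ (k + (n + 1)) * Λ⁻¹)) ≤ ENNReal.ofReal a * ρ ^ k.natAbs := by
    intro k
    rw [hρ, ← ENNReal.ofReal_pow (by positivity), ← ENNReal.ofReal_mul ha0.le]
    rcases le_total 0 k with h | h
    · refine (min_le_left _ _).trans (ENNReal.ofReal_le_ofReal ?_)
      obtain ⟨j, rfl⟩ := Int.eq_ofNat_of_zero_le h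
      rw [Int.natAbs_natCast, neg_add, zpow_add₀ ha0.ne', zpow_neg, zpow_natCast, inv_pow]
      have : a ^ (-(n + 1)) * Λ ≤ 1 := by
        rw [zpow_neg, inv_mul_le_iff₀ (by positivity), mul_one]; exact hn.2
      have hj : 0 < (a ^ j)⁻¹ := by positivity
      calc (a ^ j)⁻¹ * a ^ (-(n + 1)) * Λ = (a ^ j)⁻¹ * (a ^ (-(n + 1)) * Λ) := by ring
        _ ≤ (a ^ j)⁻¹ * 1 := by gcongr
        _ ≤ a * (a ^ j)⁻¹ := by nlinarith
    · refine (min_le_right _ _).trans (ENNReal.ofReal_le_ofReal ?_)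
      obtain ⟨j, hj⟩ := Int.eq_ofNat_of_zero_le (neg_nonneg.2 h)
      have hk : k = -(j : ℤ) := by omega
      subst hk
      rw [Int.natAbs_neg, Int.natAbs_natCast, zpow_add₀ ha0.ne', zpow_neg, zpow_natCast, inv_pow,
        zpow_add₀ ha0.ne', zpow_one]
      have : a ^ n * Λ⁻¹ ≤ 1 := by
        rw [mul_inv_le_iff₀ hΛ, one_mul]; exact hn.1.le
      calc (a ^ j)⁻¹ * (a ^ n * a) * Λ⁻¹ = a * (a ^ j)⁻¹ * (a ^ n * Λ⁻¹) := by ring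
        _ ≤ a * (a ^ j)⁻¹ * 1 := by gcongr
        _ = _ := by ring
  rw [← (Equiv.addRight (n + 1)).tsum_eq]
  simp only [Equiv.coe_addRight]
  refine (ENNReal.tsum_le_tsum hb).trans ?_
  rw [ENNReal.tsum_mul_left]
  refine mul_le_mul' le_rfl ?_
  rw [tsum_of_nat_of_neg_add_one (f := fun k : ℤ => ρ ^ k.natAbs) ENNReal.summable ENNReal.summable]
  refine add_le_add (le_of_eq ?_) ?_
  · simp
  · refine ENNReal.tsum_le_tsum fun m => ?_
    have : (-((m : ℤ) + 1)).natAbs = m + 1 := by omega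
    rw [this, pow_succ]
    exact mul_le_of_le_one_right bot_le hρ1.le

noncomputable def dl (k : ℤ) : ℝ := (2 : ℝ) ^ (-k)

theorem dl_pos (k : ℤ) : 0 < dl k := by unfold dl; positivity

theorem dl_rpow (k : ℤ) (s : ℝ) : ENNReal.ofReal (dl k) ^ s = ENNReal.ofReal (((2 : ℝ) ^ s) ^ (-k)) := by
  rw [ENNReal.ofReal_rpow_of_pos (dl_pos k)]
  congr 1
  unfold dl
  rw [← Real.rpow_intCast, ← Real.rpow_intCast, ← Real.rpow_mul (by norm_num),
    ← Real.rpow_mul (by norm_num), mul_comm]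

theorem perS_one {r κ u : ℝ} (hr : 15 < r) (hu1 : 1 / 2 < u) (hu2 : u ≤ 3 / 4)
    (hκ : κ = 3 / 2 * (1 - u)) {θ : ℝ} (h0 : 0 ≤ θ) (h1 : θ ≤ 1)
    (hθ : (1 - θ) / 3 + θ / r = u - 1 / 2 + 1 / r) {c2 c3 c4 : ℝ≥0∞}
    (hc2 : c2 ≠ ∞) (hc3 : c3 ≠ ∞) (hc4 : c4 ≠ ∞) :
    ∃ C : ℝ≥0∞, C ≠ ∞ ∧ ∀ M : ℝ≥0∞, ∀ T : ℝ, 0 < T → ∀ k g : E2 → ℝ≥0∞, Measurable k →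
      Measurable g → ∫⁻ y, k y ^ (2 : ℝ) ≤ c2 → ∫⁻ y, g y ^ (3 : ℝ) ≤ c3 →
      ∫⁻ y, g y ^ r ≤ c4 * M → ∀ δ : ℝ, 0 < δ →
      ENNReal.ofReal δ ^ (-(1 / 2) : ℝ) *
        ∫⁻ τ in Ioc 0 T, (∫⁻ x, Zop δ (fun y => k y * g y) τ x ^ r) ^ (1 / r)
      ≤ C * ENNReal.ofReal (1 + T) * (ENNReal.ofReal δ ^ (κ - 1 / 2) * M ^ (θ / r)) := by
  have hr0 : 0 < r := by linarith
  have hrp : 0 < 1 / r := by positivity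
  have hrs : 1 / r < 1 / 15 := by
    rw [div_lt_div_iff₀ hr0 (by norm_num)]; linarith
  set q : ℝ := 1 / (u + 1 / r) with hqd
  have hq : 0 < q := by positivity
  have hq1 : 1 / q = u + 1 / r := by rw [hqd, one_div_one_div]
  obtain ⟨C, hC, hS⟩ := lemmaS hq (show 2 ≤ r by linarith) (by rw [hq1]; linarith)
    (by rw [hq1]; linarith)
  have h1' : 0 ≤ 1 - θ := by linarith
  refine ⟨C * (c2 ^ (1 / 2 : ℝ) * c3 ^ ((1 - θ) / 3) * c4 ^ (θ / r)), ?_, ?_⟩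
  · refine ENNReal.mul_ne_top hC (ENNReal.mul_ne_top (ENNReal.mul_ne_top ?_ ?_) ?_)
    · exact ENNReal.rpow_ne_top_of_nonneg (by norm_num) hc2
    · exact ENNReal.rpow_ne_top_of_nonneg (by positivity) hc3
    · exact ENNReal.rpow_ne_top_of_nonneg (by positivity) hc4
  intro M T hT k g hk hg b2 b3 b4 δ hδ
  have hd0 : ENNReal.ofReal δ ≠ 0 := by simpa using hδ
  have hi := interp hq hr0 h0 h1 (by rw [hq1]; linarith) hk hg
  have hi2 : (∫⁻ y, (k y * g y) ^ q) ^ (1 / q)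
      ≤ c2 ^ (1 / 2 : ℝ) * c3 ^ ((1 - θ) / 3) * (c4 * M) ^ (θ / r) := by
    refine hi.trans (mul_le_mul' (mul_le_mul' ?_ ?_) ?_)
    · exact ENNReal.rpow_le_rpow b2 (by norm_num)
    · exact ENNReal.rpow_le_rpow b3 (by positivity)
    · exact ENNReal.rpow_le_rpow b4 (by positivity)
  have hs := hS δ hδ T hT (fun y => k y * g y) (hk.mul hg)
  have hk' : 3 / 2 * (1 - 1 / q) + 3 / 2 * (1 / r) = κ := by rw [hq1, hκ]; ring
  rw [hk'] at hs
  calc _ ≤ ENNReal.ofReal δ ^ (-(1 / 2) : ℝ) * (C * ENNReal.ofReal (1 + T) * ENNReal.ofReal δ ^ κ *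
        (c2 ^ (1 / 2 : ℝ) * c3 ^ ((1 - θ) / 3) * (c4 * M) ^ (θ / r))) := by
        exact mul_le_mul' le_rfl (hs.trans (mul_le_mul' le_rfl hi2))
    _ = _ := by
        rw [ENNReal.mul_rpow_of_nonneg _ _ (show 0 ≤ θ / r by positivity), sub_eq_add_neg κ (1 / 2),
          ENNReal.rpow_add _ _ hd0 ENNReal.ofReal_ne_top]
        ring

theorem perS {r : ℝ} (hr : 15 < r) {c2 c3 c4 : ℝ≥0∞}
    (hc2 : c2 ≠ ∞) (hc3 : c3 ≠ ∞) (hc4 : c4 ≠ ∞) :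
    ∃ C : ℝ≥0∞, C ≠ ∞ ∧ ∀ M : ℝ≥0∞, M ≠ ∞ → ∀ T : ℝ, 0 < T → ∀ k g : E2 → ℝ≥0∞, Measurable k →
      Measurable g → ∫⁻ y, k y ^ (2 : ℝ) ≤ c2 → ∫⁻ y, g y ^ (3 : ℝ) ≤ c3 →
      ∫⁻ y, g y ^ r ≤ c4 * M →
      ∑' j : ℤ, ENNReal.ofReal (dl j) ^ (-(1 / 2) : ℝ) *
        ∫⁻ τ in Ioc 0 T, (∫⁻ x, Zop (dl j) (fun y => k y * g y) τ x ^ r) ^ (1 / r)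
      ≤ C * ENNReal.ofReal (1 + T) * M ^ ((r - 6) / (2 * (r - 3)) / r) := by
  have hr0 : 0 < r := by linarith
  have hr3 : 0 < r - 3 := by linarith
  set θp := (3 * r - 12) / (4 * (r - 3)) with hθp
  set θm := (r - 12) / (4 * (r - 3)) with hθm
  obtain ⟨Cp, hCp, hp⟩ := perS_one (κ := 5 / 8) (u := 7 / 12) hr (by norm_num) (by norm_num)
    (by norm_num) (θ := θp) (div_nonneg (by linarith) (by linarith))
    ((div_le_one (by linarith)).2 (by linarith)) (by rw [hθp]; field_simp; ring) hc2 hc3 hc4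
  obtain ⟨Cm, hCm, hm⟩ := perS_one (κ := 3 / 8) (u := 3 / 4) hr (by norm_num) (by norm_num)
    (by norm_num) (θ := θm) (div_nonneg (by linarith) (by linarith))
    ((div_le_one (by linarith)).2 (by linarith)) (by rw [hθm]; field_simp; ring) hc2 hc3 hc4
  have hθm0 : 0 < θm := div_pos (by linarith) (by linarith)
  set a : ℝ := (2 : ℝ) ^ (1 / 8 : ℝ) with ha
  have ha1 : 1 < a := Real.one_lt_rpow (by norm_num) (by norm_num)
  obtain ⟨Cs, hCs, hsum⟩ := sum_min ha1
  refine ⟨(Cp + Cm) * Cs, ENNReal.mul_ne_top (ENNReal.add_ne_top.2 ⟨hCp, hCm⟩) hCs, ?_⟩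
  intro M hM T hT k g hk hg b2 b3 b4
  have Hp := fun j => hp M T hT k g hk hg b2 b3 b4 (dl j) (dl_pos j)
  have Hm := fun j => hm M T hT k g hk hg b2 b3 b4 (dl j) (dl_pos j)
  rcases eq_or_ne M 0 with hM0 | hM0
  · have : ∀ j, ENNReal.ofReal (dl j) ^ (-(1 / 2) : ℝ) *
        ∫⁻ τ in Ioc 0 T, (∫⁻ x, Zop (dl j) (fun y => k y * g y) τ x ^ r) ^ (1 / r) = 0 := by
      intro j
      have h := Hm j
      rw [hM0, ENNReal.zero_rpow_of_pos (div_pos hθm0 hr0), mul_zero, mul_zero] at h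
      exact le_antisymm h bot_le
    simp_rw [this, tsum_zero]
    exact bot_le
  set θc := (r - 6) / (2 * (r - 3)) with hθc
  set ν := r / (4 * (r - 3)) with hν
  set m := M.toReal with hmd
  have hm0 : 0 < m := ENNReal.toReal_pos hM0 hM
  have hMm : M = ENNReal.ofReal m := (ENNReal.ofReal_toReal hM).symm
  set Λ := m ^ (ν / r) with hΛ
  have hΛ0 : 0 < Λ := by positivity
  have eP : M ^ (θp / r) = M ^ (θc / r) * ENNReal.ofReal Λ := by
    rw [hΛ, ← ENNReal.ofReal_rpow_of_pos hm0, ← hMm, ← ENNReal.rpow_add _ _ hM0 hM]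
    congr 1
    rw [hθp, hθc, hν]; field_simp; ring
  have eM : M ^ (θm / r) = M ^ (θc / r) * ENNReal.ofReal Λ⁻¹ := by
    rw [hΛ, ← Real.rpow_neg hm0.le, ← ENNReal.ofReal_rpow_of_pos hm0, ← hMm,
      ← ENNReal.rpow_add _ _ hM0 hM]
    congr 1
    rw [hθm, hθc, hν]; field_simp; ring
  have hb : ∀ j, ENNReal.ofReal (dl j) ^ (-(1 / 2) : ℝ) *
        ∫⁻ τ in Ioc 0 T, (∫⁻ x, Zop (dl j) (fun y => k y * g y) τ x ^ r) ^ (1 / r)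
      ≤ ((Cp + Cm) * ENNReal.ofReal (1 + T) * M ^ (θc / r)) *
        min (ENNReal.ofReal (a ^ (-j) * Λ)) (ENNReal.ofReal (a ^ j * Λ⁻¹)) := by
    intro j
    rw [mul_min]
    refine le_min ?_ ?_
    · refine (Hp j).trans ?_
      rw [eP, show (5 / 8 - 1 / 2 : ℝ) = 1 / 8 by norm_num, dl_rpow,
        ENNReal.ofReal_mul (by positivity)]
      calc _ = Cp * ENNReal.ofReal (1 + T) * M ^ (θc / r) *
            (ENNReal.ofReal (a ^ (-j)) * ENNReal.ofReal Λ) := by ring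
        _ ≤ _ := by gcongr; exact le_self_add
    · refine (Hm j).trans ?_
      have : ENNReal.ofReal (dl j) ^ (3 / 8 - 1 / 2 : ℝ) = ENNReal.ofReal (a ^ j) := by
        rw [dl_rpow, show (3 / 8 - 1 / 2 : ℝ) = -(1 / 8) by norm_num,
          Real.rpow_neg (by norm_num), inv_zpow, zpow_neg, inv_inv]
      rw [eM, this, ENNReal.ofReal_mul (by positivity)]
      calc _ = Cm * ENNReal.ofReal (1 + T) * M ^ (θc / r) *
            (ENNReal.ofReal (a ^ j) * ENNReal.ofReal Λ⁻¹) := by ring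
        _ ≤ _ := by gcongr; exact le_add_self
  refine (ENNReal.tsum_le_tsum hb).trans ?_
  rw [ENNReal.tsum_mul_left]
  calc _ ≤ (Cp + Cm) * ENNReal.ofReal (1 + T) * M ^ (θc / r) * Cs := by
        gcongr; exact hsum Λ hΛ0
    _ = _ := by ring

end KS

namespace KS

theorem minkowski {A X : Type*} [MeasurableSpace A] [MeasurableSpace X] (ν : Measure A)
    (μ : Measure X) [SFinite ν] [SigmaFinite μ] {w : A → X → ℝ≥0∞}
    (hw : Measurable (Function.uncurry w)) {r : ℝ} (hr : 1 < r) :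
    (∫⁻ x, (∫⁻ a, w a x ∂ν) ^ r ∂μ) ^ (1 / r) ≤ ∫⁻ a, (∫⁻ x, w a x ^ r ∂μ) ^ (1 / r) ∂ν := by
  have hr0 : 0 < r := by linarith
  have hsw : Measurable (Function.uncurry fun (x : X) (a : A) => w a x) :=
    hw.comp measurable_swap
  have hF : Measurable fun x => ∫⁻ a, w a x ∂ν := hsw.lintegral_prod_right
  set F : X → ℝ≥0∞ := fun x => ∫⁻ a, w a x ∂ν with hFd
  set R := ∫⁻ a, (∫⁻ x, w a x ^ r ∂μ) ^ (1 / r) ∂ν with hR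
  let φ : ℕ → X → ℝ≥0∞ := fun n => (spanningSets μ n).indicator fun x => min (F x) n
  have hφm : ∀ n, Measurable (φ n) := fun n =>
    (hF.min measurable_const).indicator (measurableSet_spanningSets μ n)
  have hφF : ∀ n x, φ n x ≤ F x := by
    intro n x
    refine (indicator_le_self _ _ x).trans (min_le_left _ _)
  have key : ∀ n, ∫⁻ x, φ n x ^ r ∂μ ≤ R ^ r := by
    intro n
    set I := ∫⁻ x, φ n x ^ r ∂μ with hI
    have hIt : I ≠ ∞ := by
      have : I ≤ ∫⁻ x, (spanningSets μ n).indicator (fun _ => (n : ℝ≥0∞) ^ r) x ∂μ := by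
        refine lintegral_mono fun x => ?_
        by_cases hx : x ∈ spanningSets μ n
        · simp only [φ, indicator_of_mem hx]
          exact ENNReal.rpow_le_rpow (min_le_right _ _) hr0.le
        · simp [φ, indicator_of_notMem hx, ENNReal.zero_rpow_of_pos hr0]
      refine ne_top_of_le_ne_top ?_ this
      rw [lintegral_indicator_const (measurableSet_spanningSets μ n)]
      exact ENNReal.mul_ne_top (ENNReal.rpow_ne_top_of_nonneg hr0.le (by simp))
        (measure_spanningSets_lt_top μ n).ne
    have hmain : I ≤ R * I ^ (1 - 1 / r) := by
      have h1 : I ≤ ∫⁻ x, ∫⁻ a, w a x * φ n x ^ (r - 1) ∂ν ∂μ := by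
        refine lintegral_mono fun x => ?_
        have hx : φ n x ^ r ≤ F x * φ n x ^ (r - 1) := by
          calc φ n x ^ r = φ n x ^ (1 : ℝ) * φ n x ^ (r - 1) := by
                rw [← ENNReal.rpow_add_of_nonneg _ _ (by norm_num) (by linarith)]; congr 1; ring
            _ ≤ _ := by rw [ENNReal.rpow_one]; exact mul_le_mul' (hφF n x) le_rfl
        refine hx.trans (le_of_eq ?_)
        rw [lintegral_mul_const _ (show Measurable fun a => w a x from hsw.of_uncurry_left)]
      rw [lintegral_lintegral_swap] at h1
      · refine h1.trans ?_
        rw [hR, ← lintegral_mul_const]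
        · refine lintegral_mono fun a => ?_
          have hh := ENNReal.lintegral_mul_le_Lp_mul_Lq μ
            (Real.HolderConjugate.conjExponent hr) (f := w a) (g := fun x => φ n x ^ (r - 1))
            (hw.of_uncurry_left.aemeasurable) ((hφm n).pow_const _).aemeasurable
          refine hh.trans (le_of_eq ?_)
          have e1 : (r - 1) * Real.conjExponent r = r := by
            rw [Real.conjExponent]; field_simp [show r - 1 ≠ 0 by linarith]
          have e2 : 1 / Real.conjExponent r = 1 - 1 / r := by
            rw [Real.conjExponent]; field_simp [show r - 1 ≠ 0 by linarith]
          simp only [← ENNReal.rpow_mul, e1, e2, hI]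
        · have : Measurable (Function.uncurry fun a x => w a x ^ r) := hw.pow_const r
          exact (this.lintegral_prod_right).pow_const _
      · refine Measurable.aemeasurable ?_
        exact hsw.mul (((hφm n).comp measurable_fst).pow_const _)
    by_cases hI0 : I = 0
    · rw [hI0]; exact zero_le
    have hsplit : I ^ (1 / r) * I ^ (1 - 1 / r) = I := by
      rw [← ENNReal.rpow_add _ _ hI0 hIt]; simp
    have h3 : I ^ (1 / r) ≤ R := by
      have hne0 : I ^ (1 - 1 / r) ≠ 0 := by
        simp [ENNReal.rpow_eq_zero_iff, hI0, hIt]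
      have hnt : I ^ (1 - 1 / r) ≠ ∞ := by
        simp [ENNReal.rpow_eq_top_iff, hI0, hIt]
      have : I ^ (1 / r) * I ^ (1 - 1 / r) ≤ R * I ^ (1 - 1 / r) := by rw [hsplit]; exact hmain
      exact (ENNReal.mul_le_mul_iff_left hne0 hnt).1 this
    have := ENNReal.rpow_le_rpow h3 hr0.le
    rwa [← ENNReal.rpow_mul, one_div_mul_cancel hr0.ne', ENNReal.rpow_one] at this
  have hmono : Monotone φ := by
    intro m n hmn x
    refine indicator_le_indicator_of_subset (monotone_spanningSets μ hmn) (fun _ => zero_le) x |>.trans ?_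
    refine indicator_le_indicator ?_
    exact min_le_min le_rfl (by exact_mod_cast hmn)
  have hlim : ∀ x, ⨆ n, φ n x ^ r = F x ^ r := by
    intro x
    refine le_antisymm (iSup_le fun n => ENNReal.rpow_le_rpow (hφF n x) hr0.le) ?_
    rw [show (⨆ n, φ n x ^ r) = (⨆ n, φ n x) ^ r from
      ((ENNReal.orderIsoRpow r hr0).map_iSup _).symm]
    refine ENNReal.rpow_le_rpow ?_ hr0.le
    refine le_of_forall_lt fun c hc => ?_
    obtain ⟨k, hk⟩ := ENNReal.exists_nat_gt (ne_top_of_lt hc)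
    have hx := mem_spanningSetsIndex μ x
    set m := max k (spanningSetsIndex μ x)
    refine lt_of_lt_of_le ?_ (le_iSup _ m)
    have : x ∈ spanningSets μ m := monotone_spanningSets μ (le_max_right _ _) hx
    simp only [φ, indicator_of_mem this]
    refine lt_min hc (hk.trans_le ?_)
    exact_mod_cast le_max_left _ _
  have : ∫⁻ x, F x ^ r ∂μ ≤ R ^ r := by
    rw [← lintegral_congr hlim, lintegral_iSup (fun n => (hφm n).pow_const r)]
    · exact iSup_le key
    · intro m n hmn x
      exact ENNReal.rpow_le_rpow (hmono hmn x) hr0.le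
  have h := ENNReal.rpow_le_rpow this (show 0 ≤ 1 / r by positivity)
  rwa [← ENNReal.rpow_mul R, mul_one_div_cancel hr0.ne', ENNReal.rpow_one] at h

end KS

namespace KS

theorem measurable_Zop_s (δ : ℝ) {H : ℝ → E2 → ℝ≥0∞} (hH : Measurable (Function.uncurry H)) :
    Measurable (fun q : (ℝ × ℝ) × E2 => Zop δ (H q.1.1) q.1.2 q.2) := by
  unfold Zop
  refine (measurable_cc.comp (measurable_snd.comp measurable_fst)).mul ?_
  have h1 : Measurable fun w : ((ℝ × ℝ) × E2) × E2 => kk δ w.1.1.2 w.1.2 w.2 :=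
    measurable_kk' δ (by fun_prop) (by fun_prop) (by fun_prop)
  have h2 : Measurable fun w : ((ℝ × ℝ) × E2) × E2 => H w.1.1.1 w.2 :=
    hH.comp ((measurable_fst.comp (measurable_fst.comp measurable_fst)).prodMk measurable_snd)
  exact Measurable.lintegral_prod_right'
    (f := fun w : ((ℝ × ℝ) × E2) × E2 => kk δ w.1.1.2 w.1.2 w.2 * H w.1.1.1 w.2) (h1.mul h2)

theorem kern {τ : ℝ} (hτ : 0 ≤ τ) (x y : E2) :
    ENNReal.ofReal (1 / Real.sqrt (τ ^ 2 - dist y x ^ 2)) ≤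
      ∑' j : ℤ, ENNReal.ofReal (dl j) ^ (-(1 / 2) : ℝ) * (cc τ * kk (dl j) τ x y) := by
  by_cases hD : τ ^ 2 - dist y x ^ 2 ≤ 0
  · rw [Real.sqrt_eq_zero_of_nonpos hD]; simp
  push Not at hD
  have hτ' : 0 < τ := by
    rcases hτ.eq_or_lt with h | h
    · subst h; nlinarith [sq_nonneg (dist y x)]
    · exact h
  set D := τ ^ 2 - dist y x ^ 2 with hDd
  obtain ⟨n, hn1, hn2⟩ := exists_mem_Ico_zpow (x := D / τ) (y := (2 : ℝ)) (by positivity) (by norm_num)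
  have hd : dl (-n) = 2 ^ n := by simp [dl]
  have hdp := dl_pos (-n)
  have h1 : dl (-n) * τ ≤ D := by rw [hd]; exact (le_div_iff₀ hτ').1 hn1
  have h2 : D < 2 * dl (-n) * τ := by
    rw [hd]
    have := (div_lt_iff₀ hτ').1 hn2
    rw [zpow_add₀ (by norm_num)] at this
    simp only [zpow_one] at this
    linarith
  have hp : 0 < dl (-n) * τ := by positivity
  have hmem : y - x ∈ annu (dl (-n)) τ := by
    simp only [annu, mem_ofPred_eq]
    rw [← dist_eq_norm, ← hDd]
    exact ⟨by linarith, h2⟩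
  refine le_trans ?_ (ENNReal.le_tsum (-n))
  have hk : kk (dl (-n)) τ x y = 1 := by simp [kk, indicator_of_mem hmem]
  rw [hk, mul_one, cc, ← ENNReal.mul_rpow_of_ne_top ENNReal.ofReal_ne_top ENNReal.ofReal_ne_top,
    ← ENNReal.ofReal_mul hdp.le, ENNReal.ofReal_rpow_of_pos hp, Real.rpow_neg hp.le,
    ← Real.sqrt_eq_rpow, ← one_div]
  refine ENNReal.ofReal_le_ofReal ?_
  exact one_div_le_one_div_of_le (Real.sqrt_pos.2 hp) (Real.sqrt_le_sqrt h1)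

theorem kern_int {τ : ℝ} (hτ : 0 ≤ τ) (x : E2) {h : E2 → ℝ≥0∞} (hh : Measurable h) :
    ∫⁻ y, ENNReal.ofReal (1 / Real.sqrt (τ ^ 2 - dist y x ^ 2)) * h y ≤
      ∑' j : ℤ, ENNReal.ofReal (dl j) ^ (-(1 / 2) : ℝ) * Zop (dl j) h τ x := by
  have hm : ∀ j : ℤ, Measurable fun y => kk (dl j) τ x y * h y := fun j =>
    (measurable_kk' (dl j) measurable_const measurable_const measurable_id).mul hh
  calc _ ≤ ∫⁻ y, ∑' j : ℤ, ENNReal.ofReal (dl j) ^ (-(1 / 2) : ℝ) *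
        (cc τ * (kk (dl j) τ x y * h y)) := by
        refine lintegral_mono fun y => ?_
        refine (mul_le_mul' (kern hτ x y) le_rfl).trans (le_of_eq ?_)
        rw [← ENNReal.tsum_mul_right]
        congr 1; ext j; ring
    _ = _ := by
        rw [lintegral_tsum fun j => (((hm j).const_mul _).const_mul _).aemeasurable]
        congr 1; ext j
        rw [lintegral_const_mul _ ((hm j).const_mul _), lintegral_const_mul _ (hm j), Zop]

theorem W_le {K : ℝ → E2 → ℝ} {f : ℝ → E2 → E2 → ℝ}
    (hf : Measurable (fun z : ℝ × E2 × E2 => f z.1 z.2.1 z.2.2))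
    (hf0 : ∀ t x p, 0 ≤ f t x p) (hK : Measurable (Function.uncurry K)) (hK0 : ∀ t x, 0 ≤ K t x)
    {H : ℝ → E2 → ℝ≥0∞} (hHd : H = fun s y => ENNReal.ofReal (K s y) *
      ∫⁻ p, ENNReal.ofReal (f s y p / pZero p))
    (hH : Measurable (Function.uncurry H)) (t : ℝ) (x : E2) :
    WS1 K f t x ≤ ∫⁻ s in Ioc (0 : ℝ) t, ∑' j : ℤ, ENNReal.ofReal (dl j) ^ (-(1 / 2) : ℝ) *
      Zop (dl j) (H s) (t - s) x := by
  unfold WS1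
  refine setLIntegral_mono' measurableSet_Ioc fun s hs => ?_
  refine le_trans ?_ (kern_int (sub_nonneg.2 hs.2) x hH.of_uncurry_left)
  refine (setLIntegral_le_lintegral _ _).trans ?_
  refine lintegral_mono fun y => le_of_eq ?_
  have hm : Measurable fun p => ENNReal.ofReal (f s y p / pZero p) := by
    have : Measurable fun p => f s y p :=
      hf.comp (measurable_const.prodMk (measurable_const.prodMk measurable_id))
    exact (this.div measurable_pZero).ennreal_ofReal
  subst hHd
  simp only
  rw [← lintegral_const_mul _ hm, ← lintegral_const_mul _ (hm.const_mul _)]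
  refine lintegral_congr fun p => ?_
  rw [← ENNReal.ofReal_mul (hK0 s y), ← ENNReal.ofReal_mul (by positivity)]
  congr 1
  simp only [div_eq_mul_inv, mul_inv]
  ring

theorem tonelli_shift {G : ℝ → ℝ → ℝ≥0∞} (hG : Measurable (Function.uncurry G)) (T : ℝ) :
    ∫⁻ t in Ico (0 : ℝ) T, ∫⁻ s in Ioc (0 : ℝ) t, G s (t - s) ≤
      ∫⁻ s in Ioo (0 : ℝ) T, ∫⁻ τ in Ioc (0 : ℝ) T, G s τ := by
  let F : ℝ → ℝ → ℝ≥0∞ := fun s τ => (Ioo (0 : ℝ) T ×ˢ Icc (0 : ℝ) T).indicator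
    (Function.uncurry G) (s, τ)
  have hF : Measurable (Function.uncurry F) :=
    hG.indicator (measurableSet_Ioo.prod measurableSet_Icc)
  have hF2 : Measurable (Function.uncurry fun t s => F s (t - s)) :=
    hF.comp (measurable_snd.prodMk (measurable_fst.sub measurable_snd))
  calc _ ≤ ∫⁻ t in Ico (0 : ℝ) T, ∫⁻ s, F s (t - s) := by
        refine setLIntegral_mono' measurableSet_Ico fun t ht => ?_
        refine le_trans ?_ (setLIntegral_le_lintegral (Ioc 0 t) _)
        refine setLIntegral_mono' measurableSet_Ioc fun s hs => ?_
        have : (s, t - s) ∈ Ioo (0 : ℝ) T ×ˢ Icc (0 : ℝ) T :=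
          ⟨⟨hs.1, hs.2.trans_lt ht.2⟩, sub_nonneg.2 hs.2, by linarith [hs.1, ht.2]⟩
        simp only [F, indicator_of_mem this, Function.uncurry_apply_pair, le_refl]
    _ ≤ ∫⁻ t, ∫⁻ s, F s (t - s) := setLIntegral_le_lintegral _ _
    _ = ∫⁻ s, ∫⁻ t, F s (t - s) := lintegral_lintegral_swap hF2.aemeasurable
    _ = ∫⁻ s, ∫⁻ τ, F s τ := by
        refine lintegral_congr fun s => ?_
        exact lintegral_sub_right_eq_self (fun τ => F s τ) s
    _ = ∫⁻ s, (Ioo (0 : ℝ) T).indicator (fun s => ∫⁻ τ in Ioc (0 : ℝ) T, G s τ) s := by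
        refine lintegral_congr fun s => ?_
        by_cases hs : s ∈ Ioo (0 : ℝ) T
        · rw [indicator_of_mem hs, setLIntegral_congr Ioc_ae_eq_Icc,
            ← lintegral_indicator measurableSet_Icc]
          refine lintegral_congr fun τ => ?_
          by_cases hτ : τ ∈ Icc (0 : ℝ) T
          · rw [indicator_of_mem hτ]
            simp only [F, indicator_of_mem (show (s, τ) ∈ Ioo (0 : ℝ) T ×ˢ Icc (0 : ℝ) T from ⟨hs, hτ⟩),
              Function.uncurry_apply_pair]
          · rw [indicator_of_notMem hτ]
            exact indicator_of_notMem (fun h => hτ h.2) _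
        · rw [indicator_of_notMem hs]
          have : ∀ τ, F s τ = 0 := fun τ => indicator_of_notMem (fun h => hs h.1) _
          simp [this]
    _ = _ := lintegral_indicator measurableSet_Ioo _

theorem assemble {r : ℝ} (hr : 1 < r) {H : ℝ → E2 → ℝ≥0∞} (hH : Measurable (Function.uncurry H))
    (T : ℝ) :
    ∫⁻ t in Ico (0 : ℝ) T, (∫⁻ x, (∫⁻ s in Ioc (0 : ℝ) t, ∑' j : ℤ,
      ENNReal.ofReal (dl j) ^ (-(1 / 2) : ℝ) * Zop (dl j) (H s) (t - s) x) ^ r) ^ (1 / r)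
    ≤ ∫⁻ s in Ioo (0 : ℝ) T, ∑' j : ℤ, ENNReal.ofReal (dl j) ^ (-(1 / 2) : ℝ) *
        ∫⁻ τ in Ioc 0 T, (∫⁻ x, Zop (dl j) (H s) τ x ^ r) ^ (1 / r) := by
  have hr0 : 0 < r := by linarith
  let Φ : ℤ → ℝ → ℝ → ℝ≥0∞ := fun j s τ => (∫⁻ x, Zop (dl j) (H s) τ x ^ r) ^ (1 / r)
  have hΦ : ∀ j, Measurable (Function.uncurry (Φ j)) := by
    intro j
    have h1 : Measurable (fun q : (ℝ × ℝ) × E2 => Zop (dl j) (H q.1.1) q.1.2 q.2 ^ r) :=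
      (measurable_Zop_s (dl j) hH).pow_const r
    exact (h1.lintegral_prod_right').pow_const _
  let a : ℤ → ℝ≥0∞ := fun j => ENNReal.ofReal (dl j) ^ (-(1 / 2) : ℝ)
  let G : ℝ → ℝ → ℝ≥0∞ := fun s τ => ∑' j : ℤ, a j * Φ j s τ
  have hG : Measurable (Function.uncurry G) :=
    Measurable.ennreal_tsum fun j => (hΦ j).const_mul (a j)
  have step : ∀ t, (∫⁻ x, (∫⁻ s in Ioc (0 : ℝ) t, ∑' j : ℤ,
      a j * Zop (dl j) (H s) (t - s) x) ^ r) ^ (1 / r) ≤ ∫⁻ s in Ioc (0 : ℝ) t, G s (t - s) := by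
    intro t
    have hz : ∀ j, Measurable fun q : ℝ × E2 => a j * Zop (dl j) (H q.1) (t - q.1) q.2 := by
      intro j
      refine Measurable.const_mul ?_ _
      exact (measurable_Zop_s (dl j) hH).comp
        ((measurable_fst.prodMk (measurable_const.sub measurable_fst)).prodMk measurable_snd)
    have hm : Measurable (Function.uncurry fun (s : ℝ) (x : E2) =>
        ∑' j : ℤ, a j * Zop (dl j) (H s) (t - s) x) := Measurable.ennreal_tsum hz
    refine (minkowski (volume.restrict (Ioc (0 : ℝ) t)) volume hm hr).trans ?_
    refine lintegral_mono fun s => ?_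
    have hm2 : Measurable (Function.uncurry fun (j : ℤ) (x : E2) =>
        a j * Zop (dl j) (H s) (t - s) x) := by
      refine measurable_from_prod_countable_right fun j => ?_
      exact (hz j).comp measurable_prodMk_left
    have := minkowski (Measure.count : Measure ℤ) (volume : Measure E2) hm2 hr
    simp only [lintegral_count] at this
    refine this.trans (le_of_eq ?_)
    simp only [G, Φ]
    congr 1; ext j
    have hzz : Measurable fun x => Zop (dl j) (H s) (t - s) x ^ r :=
      ((measurable_Zop (dl j) (hH.of_uncurry_left (x := s))).comp
        (measurable_const.prodMk measurable_id)).pow_const r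
    simp only [ENNReal.mul_rpow_of_nonneg _ _ hr0.le]
    rw [lintegral_const_mul _ hzz, ENNReal.mul_rpow_of_nonneg _ _ (show 0 ≤ 1 / r by positivity),
      ← ENNReal.rpow_mul (a j), mul_one_div_cancel hr0.ne', ENNReal.rpow_one]
  refine (lintegral_mono step).trans ((tonelli_shift hG T).trans (le_of_eq ?_))
  refine lintegral_congr fun s => ?_
  simp only [G]
  rw [lintegral_tsum fun j => (((hΦ j).of_uncurry_left).const_mul (a j)).aemeasurable]
  congr 1; ext j
  rw [lintegral_const_mul _ (hΦ j).of_uncurry_left]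

end KS

namespace KS

theorem s_bounds {C₀ : ℝ} (hC₀ : 0 < C₀) {φ : E2 → E2 → ℝ}
    (hφ : Measurable (fun z : E2 × E2 => φ z.1 z.2)) (h0 : ∀ x p, 0 ≤ φ x p)
    (hae : ∀ᵐ x, ∀ᵐ p, φ x p ≤ C₀) {a : ℝ} (ha : 0 ≤ a) :
    ∫⁻ y, (∫⁻ p, ENNReal.ofReal (φ y p / pZero p)) ^ (a + 2) ≤
      ENNReal.ofReal (2 * Real.pi * C₀ + 1) ^ (a + 2) *
        ∫⁻ y, ∫⁻ p, ENNReal.ofReal (φ y p * pZero p ^ a) := by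
  have hm : Measurable fun z : E2 × E2 => ENNReal.ofReal (φ z.1 z.2 * pZero z.2 ^ a) :=
    (hφ.mul ((measurable_pZero.comp measurable_snd).pow_const a)).ennreal_ofReal
  rw [← lintegral_const_mul _ hm.lintegral_prod_right']
  refine lintegral_mono_ae ?_
  filter_upwards [hae] with y hy
  exact g_pointwise hC₀ ha (hφ.comp (measurable_const.prodMk measurable_id)) (h0 y) hy

theorem main_aux (N C₀ C₁ C₂ : ℝ) (hN : 13 < N) (hC₀ : 0 < C₀) :
    ∃ C : ℝ≥0∞, C ≠ ∞ ∧
      ∀ (T : ℝ), 0 < T → ∀ (f : ℝ → E2 → E2 → ℝ),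
        Measurable (fun z : ℝ × E2 × E2 => f z.1 z.2.1 z.2.2) →
        (∀ t x p, 0 ≤ f t x p) →
        (∀ᵐ z : ℝ × E2 × E2, f z.1 z.2.1 z.2.2 ≤ C₀) →
        (∀ t, 0 ≤ t → t < T →
          (∫⁻ x, ∫⁻ p, ENNReal.ofReal (pZero p * f t x p)) ≤ ENNReal.ofReal C₁) →
      ∀ (K : ℝ → E2 → ℝ),
        Measurable (Function.uncurry K) → (∀ t x, 0 ≤ K t x) →
        (∀ t, 0 ≤ t → t < T →
          (∫⁻ x, ENNReal.ofReal (K t x ^ 2)) ^ ((1 : ℝ) / 2) ≤ ENNReal.ofReal C₂) →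
        (⨆ t ∈ Ico (0 : ℝ) T, momentN f N t) ≠ ∞ →
        (∫⁻ t in Ico (0 : ℝ) T, (∫⁻ x, WS1 K f t x ^ (N + 2)) ^ (1 / (N + 2)))
          ≤ C * ENNReal.ofReal (1 + T) ^ (2 : ℝ)
            * (⨆ t ∈ Ico (0 : ℝ) T, momentN f N t) ^ ((N - 4) / (2 * (N - 1)) / (N + 2)) := by
  have hr : 15 < N + 2 := by linarith
  set B := ENNReal.ofReal (2 * Real.pi * C₀ + 1) with hB
  have hBt : B ≠ ∞ := ENNReal.ofReal_ne_top
  obtain ⟨C, hC, hP⟩ := perS hr (c2 := ENNReal.ofReal C₂ ^ (2 : ℝ))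
    (c3 := B ^ (3 : ℝ) * ENNReal.ofReal C₁) (c4 := B ^ (N + 2))
    (ENNReal.rpow_ne_top_of_nonneg (by norm_num) ENNReal.ofReal_ne_top)
    (ENNReal.mul_ne_top (ENNReal.rpow_ne_top_of_nonneg (by norm_num) hBt) ENNReal.ofReal_ne_top)
    (ENNReal.rpow_ne_top_of_nonneg (by linarith) hBt)
  refine ⟨C, hC, ?_⟩
  intro T hT f hf hf0 hfC hfE K hK hK0 hKL hM
  set M := ⨆ t ∈ Ico (0 : ℝ) T, momentN f N t with hMd
  let k : ℝ → E2 → ℝ≥0∞ := fun s y => ENNReal.ofReal (K s y)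
  let g : ℝ → E2 → ℝ≥0∞ := fun s y => ∫⁻ p, ENNReal.ofReal (f s y p / pZero p)
  let H : ℝ → E2 → ℝ≥0∞ := fun s y => k s y * g s y
  have hk : Measurable (Function.uncurry k) := hK.ennreal_ofReal
  have hg : Measurable (Function.uncurry g) := by
    have h1 : Measurable fun w : (ℝ × E2) × E2 => f w.1.1 w.1.2 w.2 :=
      hf.comp ((measurable_fst.comp measurable_fst).prodMk
        ((measurable_snd.comp measurable_fst).prodMk measurable_snd))
    have h2 : Measurable fun w : (ℝ × E2) × E2 => ENNReal.ofReal (f w.1.1 w.1.2 w.2 / pZero w.2) :=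
      (h1.div (measurable_pZero.comp measurable_snd)).ennreal_ofReal
    exact h2.lintegral_prod_right'
  have hH : Measurable (Function.uncurry H) := hk.mul hg
  have hae : ∀ᵐ s : ℝ, ∀ᵐ y : E2, ∀ᵐ p : E2, f s y p ≤ C₀ := by
    have h1 := Measure.ae_ae_of_ae_prod (μ := (volume : Measure ℝ))
      (ν := (volume : Measure (E2 × E2))) hfC
    filter_upwards [h1] with s hs
    exact Measure.ae_ae_of_ae_prod (μ := (volume : Measure E2))
      (ν := (volume : Measure E2)) hs
  have hE : (N - 4) / (2 * (N - 1)) / (N + 2) = (N + 2 - 6) / (2 * (N + 2 - 3)) / (N + 2) := by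
    congr 2 <;> ring
  rw [hE]
  set e := (N + 2 - 6) / (2 * (N + 2 - 3)) / (N + 2) with hed
  calc _ ≤ ∫⁻ t in Ico (0 : ℝ) T, (∫⁻ x, (∫⁻ s in Ioc (0 : ℝ) t, ∑' j : ℤ,
      ENNReal.ofReal (dl j) ^ (-(1 / 2) : ℝ) * Zop (dl j) (H s) (t - s) x) ^ (N + 2)) ^
        (1 / (N + 2)) := by
        refine lintegral_mono fun t => ?_
        refine ENNReal.rpow_le_rpow ?_ (by positivity)
        refine lintegral_mono fun x => ?_
        exact ENNReal.rpow_le_rpow (W_le hf hf0 hK hK0 rfl hH t x) (by linarith)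
    _ ≤ _ := assemble (by linarith) hH T
    _ ≤ ∫⁻ s in Ioo (0 : ℝ) T, C * ENNReal.ofReal (1 + T) * M ^ e := by
        refine lintegral_mono_ae ?_
        filter_upwards [ae_restrict_mem measurableSet_Ioo, ae_restrict_of_ae hae] with s hs has
        have hfs : Measurable (fun z : E2 × E2 => f s z.1 z.2) :=
          hf.comp (measurable_const.prodMk measurable_id)
        refine hP M hM T hT (k s) (g s) hk.of_uncurry_left hg.of_uncurry_left ?_ ?_ ?_
        · have h1 := ENNReal.rpow_le_rpow (hKL s hs.1.le hs.2) (show (0 : ℝ) ≤ 2 by norm_num)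
          rw [← ENNReal.rpow_mul, show (1 : ℝ) / 2 * 2 = 1 by norm_num, ENNReal.rpow_one] at h1
          refine le_trans (le_of_eq ?_) h1
          refine lintegral_congr fun y => ?_
          simp only [k]
          rw [ENNReal.ofReal_rpow_of_nonneg (hK0 s y) (by norm_num), Real.rpow_two]
        · have h1 := s_bounds hC₀ hfs (hf0 s) has
            (show (0 : ℝ) ≤ 1 by norm_num)
          rw [show (1 : ℝ) + 2 = 3 by norm_num] at h1
          refine h1.trans (mul_le_mul' le_rfl ?_)
          refine le_trans (le_of_eq ?_) (hfE s hs.1.le hs.2)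
          refine lintegral_congr fun y => lintegral_congr fun p => ?_
          rw [Real.rpow_one, mul_comm]
        · have h1 := s_bounds hC₀ hfs (hf0 s) has
            (show (0 : ℝ) ≤ N by linarith)
          refine h1.trans (mul_le_mul' le_rfl ?_)
          exact le_iSup₂_of_le (f := fun t (_ : t ∈ Ico (0 : ℝ) T) => momentN f N t) s
            ⟨hs.1.le, hs.2⟩ le_rfl
    _ = C * ENNReal.ofReal (1 + T) * M ^ e * ENNReal.ofReal T := by
        rw [setLIntegral_const, Real.volume_Ioo, sub_zero]
    _ ≤ C * ENNReal.ofReal (1 + T) * M ^ e * ENNReal.ofReal (1 + T) :=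
        mul_le_mul' le_rfl (ENNReal.ofReal_le_ofReal (by linarith))
    _ = _ := by rw [ENNReal.rpow_two]; ring

end KS

/-- **Moment estimate for `K_{S,1}`** (Proposition 5.6).  Let `N > 13`, `f ≤ C₀` a.e.
with energy `sup_{t<T} ∫∫ p₀ f ≤ C₁`, and let `K ≥ 0` with `sup_{t<T} ‖K(t)‖_{L²_x} ≤ C₂`.
Then there are constants `C > 0` and `k ≥ 0` depending only on `N, C₀, C₁, C₂` (not on
`T`) with `‖W_{S,1}‖_{L¹_t([0,T);L^{N+2}_x)}^{N+2}
  ≤ C (1+T)^k ‖f p₀^N‖_{L^∞_t([0,T);L¹_xL¹_p)}^{(N−4)/(2(N−1))}`. -/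
theorem KS1_moment_estimate (N C₀ C₁ C₂ : ℝ) (hN : 13 < N) (hC₀ : 0 < C₀)
    (hC₁ : 0 < C₁) (hC₂ : 0 < C₂) :
    ∃ C : ℝ≥0, 0 < C ∧ ∃ k : ℝ, 0 ≤ k ∧
      ∀ (T : ℝ), 0 < T →
      ∀ (f : ℝ → EuclideanSpace ℝ (Fin 2) → EuclideanSpace ℝ (Fin 2) → ℝ),
        Measurable (fun z : ℝ × EuclideanSpace ℝ (Fin 2) × EuclideanSpace ℝ (Fin 2) =>
          f z.1 z.2.1 z.2.2) →
        (∀ t x p, 0 ≤ f t x p) →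
        (∀ᵐ z : ℝ × EuclideanSpace ℝ (Fin 2) × EuclideanSpace ℝ (Fin 2),
          f z.1 z.2.1 z.2.2 ≤ C₀) →
        (∀ t, 0 ≤ t → t < T →
          (∫⁻ x, ∫⁻ p, ENNReal.ofReal (pZero p * f t x p)) ≤ ENNReal.ofReal C₁) →
      ∀ (K : ℝ → EuclideanSpace ℝ (Fin 2) → ℝ),
        Measurable (Function.uncurry K) → (∀ t x, 0 ≤ K t x) →
        (∀ t, 0 ≤ t → t < T →
          (∫⁻ x, ENNReal.ofReal (K t x ^ 2)) ^ ((1 : ℝ) / 2) ≤ ENNReal.ofReal C₂) →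
        (∫⁻ t in Ico (0 : ℝ) T,
            (∫⁻ x, WS1 K f t x ^ (N + 2)) ^ (1 / (N + 2))) ^ (N + 2)
          ≤ C * ENNReal.ofReal (1 + T) ^ k
            * (⨆ t ∈ Ico (0 : ℝ) T, momentN f N t) ^ ((N - 4) / (2 * (N - 1))) := by
  obtain ⟨C, hC, hP⟩ := KS.main_aux N C₀ C₁ C₂ hN hC₀
  have hr0 : 0 < N + 2 := by linarith
  have hCr : C ^ (N + 2) ≠ ∞ := ENNReal.rpow_ne_top_of_nonneg hr0.le hC
  refine ⟨(C ^ (N + 2)).toNNReal + 1, by positivity, 2 * (N + 2), by positivity, ?_⟩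
  intro T hT f hf hf0 hfC hfE K hK hK0 hKL
  have hT1 : 0 < ENNReal.ofReal (1 + T) := by
    rw [ENNReal.ofReal_pos]; linarith
  have he : 0 < (N - 4) / (2 * (N - 1)) := div_pos (by linarith) (by linarith)
  by_cases hM : (⨆ t ∈ Ico (0 : ℝ) T, momentN f N t) = ∞
  · rw [hM, ENNReal.top_rpow_of_pos he, ENNReal.mul_top]
    · exact le_top
    · refine mul_ne_zero ?_ (ENNReal.rpow_pos hT1 ENNReal.ofReal_ne_top).ne'
      rw [ENNReal.coe_ne_zero]
      positivity
  · have h1 := ENNReal.rpow_le_rpow (hP T hT f hf hf0 hfC hfE K hK hK0 hKL hM) hr0.le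
    refine h1.trans ?_
    rw [ENNReal.mul_rpow_of_nonneg _ _ hr0.le, ENNReal.mul_rpow_of_nonneg _ _ hr0.le,
      ← ENNReal.rpow_mul, ← ENNReal.rpow_mul, div_mul_cancel₀ _ hr0.ne']
    refine mul_le_mul' (mul_le_mul' ?_ le_rfl) le_rfl
    rw [ENNReal.coe_add, ENNReal.coe_toNNReal hCr]
    exact le_self_add
end

section
/- Let δ > 0 and C₀ > 0, and let f : ℝ³ → [0,∞) be measurable such that sup_{(p₁,p₂) ∈ ℝ²} ∫_ℝ f(p₁,p₂,p₃) ⟨p₃⟩^{5+δ} dp₃ ≤ C₀. Let ξ ∈ ℝ² with |ξ| ≤ 1. Then there is a constant C, depending only on C₀ and δ, such that: (i) if |ξ| < 1, then ∫_{ℝ³} f(p) ⟨p₃⟩³ / ( p_0 (1 + p̂·ξ) ) dp ≤ C (1 − |ξ|²)^{−2/5} ( ∫_{ℝ³} p_0² f(p) dp )^{2/5}; and (ii) ∫_{ℝ³} f(p) ⟨p₃⟩³ / ( p_0 (1 + p̂·ξ) ) dp ≤ C ( ∫_{ℝ³} p_0⁴ f(p) dp )^{2/5}. -/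
open MeasureTheory
open scoped NNReal ENNReal

/-- `p₀ = √(1 + |p|²)` for `p ∈ ℝ³`. -/
noncomputable def pZero3 (p : EuclideanSpace ℝ (Fin 3)) : ℝ := Real.sqrt (1 + ‖p‖ ^ 2)

/-- The vector `(p₁, p₂, p₃) ∈ ℝ³`. -/
noncomputable def vec3 (p₁ p₂ p₃ : ℝ) : EuclideanSpace ℝ (Fin 3) :=
  (EuclideanSpace.equiv (Fin 3) ℝ).symm ![p₁, p₂, p₃]

lemma aux_rot (e0 e1 : ℝ) (he : e0 ^ 2 + e1 ^ 2 = 1) (g h : ℝ → ℝ≥0∞) (hg : Measurable g)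
    (hh : Measurable h) :
    ∫⁻ q : ℝ × ℝ, g (q.1 * e0 + q.2 * e1) * h (q.2 * e0 - q.1 * e1)
      = (∫⁻ x, g x) * (∫⁻ y, h y) := by
  rw [← lintegral_prod_mul hg.aemeasurable hh.aemeasurable]
  have hc : ‖(⟨e0, -e1⟩ : ℂ)‖ = 1 := by
    rw [Complex.norm_def, Complex.normSq_mk, Real.sqrt_eq_one]; nlinarith
  let c' : Circle := ⟨⟨e0, -e1⟩, by simpa [Submonoid.unitSphere] using hc⟩
  have h1 := (Complex.volume_preserving_equiv_real_prod).lintegral_comp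
    (f := fun q : ℝ × ℝ => g q.1 * h q.2) (by fun_prop)
  have h2 := (Complex.volume_preserving_equiv_real_prod).lintegral_comp
    (f := fun q : ℝ × ℝ => g (q.1 * e0 + q.2 * e1) * h (q.2 * e0 - q.1 * e1)) (by fun_prop)
  have h3 := (rotation c').measurePreserving.lintegral_comp
    (f := fun z : ℂ => g z.re * h z.im)
    ((hg.comp Complex.measurable_re).mul (hh.comp Complex.measurable_im))
  rw [← Measure.volume_eq_prod, ← h2, ← h1]
  simp only [Complex.measurableEquivRealProd_apply]
  rw [← h3]
  refine lintegral_congr fun z => ?_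
  have hz : rotation c' z = (⟨e0, -e1⟩ : ℂ) * z := rfl
  rw [hz]
  simp only [Complex.mul_re, Complex.mul_im]
  congr 2 <;> ring

lemma aux_fubini (G : EuclideanSpace ℝ (Fin 3) → ℝ≥0∞) (hG : Measurable G) :
    ∫⁻ p, G p = ∫⁻ q : ℝ × ℝ, ∫⁻ p₃ : ℝ, G (vec3 q.1 q.2 p₃) := by
  have hv : Measurable (fun r : ℝ × (ℝ × ℝ) => vec3 r.2.1 r.2.2 r.1) := by
    unfold vec3
    refine (EuclideanSpace.equiv (Fin 3) ℝ).symm.continuous.measurable.comp ?_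
    refine measurable_pi_iff.2 fun i => ?_
    fin_cases i <;> simp <;> fun_prop
  have h1 := (EuclideanSpace.volume_preserving_symm_measurableEquiv_toLp (Fin 3)).symm.lintegral_comp
    (f := G) hG
  have h2 := (volume_preserving_piFinSuccAbove (fun _ : Fin 3 => ℝ) 2).symm.lintegral_comp
    (f := fun v => G (WithLp.toLp 2 v)) (by fun_prop)
  have h3 := ((MeasurePreserving.id (volume : Measure ℝ)).prod
    (volume_preserving_finTwoArrow ℝ).symm).lintegral_comp
     (f := fun r => G (WithLp.toLp 2 ((MeasurableEquiv.piFinSuccAbove (fun _ : Fin 3 => ℝ) 2).symm r)))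
     (by fun_prop)
  rw [← h1]
  refine h2.symm.trans (h3.symm.trans ?_)
  rw [← Measure.volume_eq_prod, Measure.volume_eq_prod, lintegral_prod_symm']
  · refine lintegral_congr fun q => lintegral_congr fun t => ?_
    congr 1
    ext i
    fin_cases i <;> rfl
  · fun_prop

lemma aux_opt (A : ℝ) (hA : 0 ≤ A) (X N : ℝ≥0∞)
    (h : ∀ R : ℝ, 0 < R → X ≤ ENNReal.ofReal (A * R ^ 2) + ENNReal.ofReal (2 / R ^ 3) * N) :
    X ≤ ENNReal.ofReal (A + 2) * N ^ ((2 : ℝ) / 5) := by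
  by_cases hN : N = ⊤
  · subst hN
    rw [ENNReal.top_rpow_of_pos (by norm_num), ENNReal.mul_top]
    · exact le_top
    · simp; linarith
  lift N to ℝ≥0 using hN
  rcases eq_or_ne N 0 with h0 | h0
  · subst h0
    have : Filter.Tendsto (fun R : ℝ => ENNReal.ofReal (A * R ^ 2)) (nhdsWithin 0 (Set.Ioi 0))
        (nhds (ENNReal.ofReal (A * 0 ^ 2))) := by
      refine Filter.Tendsto.mono_left ?_ nhdsWithin_le_nhds
      exact (ENNReal.continuous_ofReal.comp (by fun_prop : Continuous fun R : ℝ => A * R ^ 2)).tendsto 0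
    have h2 := ge_of_tendsto this (b := X) (by
      filter_upwards [self_mem_nhdsWithin] with R hR
      simpa using h R hR)
    simp at h2
    simp [h2]
  have hNp : (0 : ℝ) < N := by positivity
  have hR := h ((N : ℝ) ^ ((1 : ℝ) / 5)) (by positivity)
  refine hR.trans (le_of_eq ?_)
  rw [← ENNReal.ofReal_coe_nnreal, ENNReal.ofReal_rpow_of_pos hNp, ← ENNReal.ofReal_mul (by positivity),
    ← ENNReal.ofReal_mul (by positivity), ← ENNReal.ofReal_add (by positivity) (by positivity)]
  congr 1
  have e2 : ((N : ℝ) ^ ((1 : ℝ) / 5)) ^ 2 = (N : ℝ) ^ ((2 : ℝ) / 5) := by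
    rw [← Real.rpow_mul_natCast hNp.le]; norm_num
  have e3 : ((N : ℝ) ^ ((1 : ℝ) / 5)) ^ 3 = (N : ℝ) ^ ((3 : ℝ) / 5) := by
    rw [← Real.rpow_mul_natCast hNp.le]; norm_num
  have e5 : (N : ℝ) ^ ((3 : ℝ) / 5) * (N : ℝ) ^ ((2 : ℝ) / 5) = N := by
    rw [← Real.rpow_add hNp]; norm_num
  rw [e2, e3]
  have : (N : ℝ) ^ ((3 : ℝ) / 5) ≠ 0 := by positivity
  field_simp
  nlinarith

/-- lower bound for the denominator -/
lemma aux_D (P a x y s : ℝ) (hP : 0 < P) (hPe : P ^ 2 = a ^ 2 + x ^ 2 + y ^ 2)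
    (hs : 0 ≤ s) (hs1 : s ≤ 1) : (a ^ 2 + y ^ 2) / (2 * P) ≤ P + s * x ∧
      P * (1 - s ^ 2) / 2 ≤ P + s * x := by
  have hx : |x| ≤ P := abs_le_of_sq_le_sq (by nlinarith [sq_nonneg y, sq_nonneg a]) hP.le
  have hsx : -|x| * s ≤ s * x := by nlinarith [neg_abs_le x]
  have hx0 := abs_nonneg x
  have hx2 := sq_abs x
  constructor
  · rw [div_le_iff₀ (by positivity)]
    have : P - |x| ≤ P + s * x := by nlinarith
    nlinarith
  · have h1 : P * (1 - s) ≤ P + s * x := by nlinarith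
    have h2 : 0 ≤ P * (1 - s) * (1 - s) := by
      have : 0 ≤ 1 - s := by linarith
      positivity
    nlinarith

lemma aux_point (δ R P a x y D : ℝ) (hδ : 0 < δ) (hR : 0 < R) (ha : 1 ≤ a) (hP : 0 < P)
    (hPe : P ^ 2 = a ^ 2 + x ^ 2 + y ^ 2) (hD : (a ^ 2 + y ^ 2) / (2 * P) ≤ D) (h : P < R * a) :
    a ^ 3 / D ≤ a ^ (5 + δ) * (2 * R * 2 ^ ((1 + δ) / 2) *
      ((1 + (x / R) ^ 2) ^ (-(1 + δ) / 2) * (1 + y ^ 2)⁻¹)) := by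
  have ha0 : 0 < a := by linarith
  have hD' : (1 + y ^ 2) / (2 * P) ≤ D := le_trans (by gcongr; nlinarith) hD
  have h1 : a ^ 3 / D ≤ a ^ 3 / ((1 + y ^ 2) / (2 * P)) := by gcongr
  have h2 : a ^ 3 / ((1 + y ^ 2) / (2 * P)) ≤ a ^ 3 * (2 * (R * a)) * (1 + y ^ 2)⁻¹ := by
    rw [div_div_eq_mul_div, div_eq_mul_inv]; gcongr
  refine h1.trans (h2.trans ?_)
  have h3 : (1 + (x / R) ^ 2) / 2 ≤ a ^ 2 := by
    have : (x / R) ^ 2 ≤ a ^ 2 := by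
      rw [div_pow, div_le_iff₀ (by positivity)]
      nlinarith [sq_nonneg y, sq_nonneg a]
    nlinarith
  have h4 : 1 ≤ a ^ (1 + δ) * (2 ^ ((1 + δ) / 2) * (1 + (x / R) ^ 2) ^ (-(1 + δ) / 2)) := by
    have := Real.rpow_le_rpow (by positivity) h3 (by positivity : 0 ≤ (1 + δ) / 2)
    rw [Real.div_rpow (by positivity) (by positivity), ← Real.rpow_natCast_mul ha0.le] at this
    rw [neg_div, Real.rpow_neg (by positivity)]
    have e : ((2 : ℕ) : ℝ) * ((1 + δ) / 2) = 1 + δ := by push_cast; ring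
    rw [e, div_le_iff₀ (by positivity)] at this
    rw [← mul_assoc, ← div_eq_mul_inv, le_div_iff₀ (by positivity)]
    linarith
  have h5 : a ^ (5 + δ) = a ^ 4 * a ^ (1 + δ) := by
    rw [← Real.rpow_natCast, ← Real.rpow_add ha0]; congr 1; push_cast; ring
  rw [h5]
  calc a ^ 3 * (2 * (R * a)) * (1 + y ^ 2)⁻¹ = (a ^ 4 * 2 * R * (1 + y ^ 2)⁻¹) * 1 := by ring
    _ ≤ (a ^ 4 * 2 * R * (1 + y ^ 2)⁻¹) * _ := mul_le_mul_of_nonneg_left h4 (by positivity)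
    _ = _ := by ring

lemma aux_int1 (δ R : ℝ) (hδ : 0 < δ) (hR : 0 < R) :
    ∫⁻ t : ℝ, ENNReal.ofReal ((1 + (t / R) ^ 2) ^ (-(1 + δ) / 2))
      = ENNReal.ofReal (R * ∫ t : ℝ, (1 + t ^ 2) ^ (-(1 + δ) / 2)) := by
  have hi : Integrable (fun t : ℝ => (1 + t ^ 2) ^ (-(1 + δ) / 2)) := by
    have := integrable_rpow_neg_one_add_norm_sq (E := ℝ) (μ := volume) (r := 1 + δ)
      (by simp; linarith)
    simpa using this
  have hi2 := hi.comp_div hR.ne'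
  rw [← ofReal_integral_eq_lintegral_ofReal hi2 (Filter.Eventually.of_forall fun t => by positivity)]
  rw [Measure.integral_comp_div (fun t : ℝ => (1 + t ^ 2) ^ (-(1 + δ) / 2)) R, abs_of_pos hR,
    smul_eq_mul]

lemma aux_int2 : ∫⁻ t : ℝ, ENNReal.ofReal ((1 + t ^ 2)⁻¹) = ENNReal.ofReal Real.pi := by
  rw [← ofReal_integral_eq_lintegral_ofReal integrable_inv_one_add_sq
    (Filter.Eventually.of_forall fun t => by positivity), integral_univ_inv_one_add_sq]

lemma aux_dir (ξ : EuclideanSpace ℝ (Fin 2)) :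
    ∃ e0 e1 : ℝ, e0 ^ 2 + e1 ^ 2 = 1 ∧ ξ 0 = ‖ξ‖ * e0 ∧ ξ 1 = ‖ξ‖ * e1 := by
  by_cases h : ξ = 0
  · exact ⟨1, 0, by simp, by simp [h], by simp [h]⟩
  have hn : ‖ξ‖ ≠ 0 := by simpa using h
  have h2 : ‖ξ‖ ^ 2 = ξ 0 ^ 2 + ξ 1 ^ 2 := by
    rw [EuclideanSpace.norm_sq_eq]; simp [Fin.sum_univ_two]
  refine ⟨ξ 0 / ‖ξ‖, ξ 1 / ‖ξ‖, ?_, by field_simp, by field_simp⟩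
  field_simp
  exact h2.symm

lemma pZero3_sq (p : EuclideanSpace ℝ (Fin 3)) :
    pZero3 p ^ 2 = 1 + p 0 ^ 2 + p 1 ^ 2 + p 2 ^ 2 := by
  rw [pZero3, Real.sq_sqrt (by positivity), EuclideanSpace.norm_sq_eq]
  simp [Fin.sum_univ_three]; ring

lemma pZero3_pos (p : EuclideanSpace ℝ (Fin 3)) : 0 < pZero3 p := by
  rw [pZero3]; positivity

lemma pZero3_meas : Measurable pZero3 := by
  unfold pZero3; fun_prop

lemma aux_core (δ C₀ : ℝ) (hδ : 0 < δ) (hC₀ : 0 < C₀)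
    (f : EuclideanSpace ℝ (Fin 3) → ℝ) (hf : Measurable f) (hf0 : ∀ p, 0 ≤ f p)
    (hb : ∀ p₁ p₂ : ℝ,
          (∫⁻ p₃ : ℝ, ENNReal.ofReal
              (f (vec3 p₁ p₂ p₃) * Real.sqrt (1 + p₃ ^ 2) ^ (5 + δ)))
            ≤ ENNReal.ofReal C₀)
    (ξ : EuclideanSpace ℝ (Fin 2)) (hξ : ‖ξ‖ ≤ 1) (k : ℕ) (c : ℝ) (hc : 0 < c)
    (hk : ∀ a P D R : ℝ, 0 < R → 1 ≤ a → 0 < P → a ≤ P → a ^ 2 / (2 * P) ≤ D →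
      P * (1 - ‖ξ‖ ^ 2) / 2 ≤ D → R * a ≤ P → a ^ 3 / D ≤ 2 / R ^ 3 * (c⁻¹ * P ^ k)) :
    (∫⁻ p, ENNReal.ofReal (f p * Real.sqrt (1 + (p 2) ^ 2) ^ 3 /
                (pZero3 p * (1 + (p 0 * ξ 0 + p 1 * ξ 1) / pZero3 p))))
      ≤ ENNReal.ofReal (C₀ * (2 * 2 ^ ((1 + δ) / 2) *
          ((∫ t : ℝ, (1 + t ^ 2) ^ (-(1 + δ) / 2)) * Real.pi)) + 2) *
        ((ENNReal.ofReal c)⁻¹ * ∫⁻ p, ENNReal.ofReal (pZero3 p ^ k * f p)) ^ ((2 : ℝ) / 5) := by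
  have hI : 0 ≤ ∫ t : ℝ, (1 + t ^ 2) ^ (-(1 + δ) / 2) := integral_nonneg fun t => by positivity
  refine aux_opt _ (by positivity) _ _ fun R hR => ?_
  obtain ⟨e0, e1, he, hx0, hx1⟩ := aux_dir ξ
  set g : ℝ → ℝ≥0∞ := fun t => ENNReal.ofReal ((1 + (t / R) ^ 2) ^ (-(1 + δ) / 2)) with hg
  set h : ℝ → ℝ≥0∞ := fun t => ENNReal.ofReal ((1 + t ^ 2)⁻¹) with hh
  have hgm : Measurable g := by rw [hg]; fun_prop
  have hhm : Measurable h := by rw [hh]; fun_prop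
  set K : ℝ := 2 * R * 2 ^ ((1 + δ) / 2) with hK
  have hK0 : 0 < K := by positivity
  have hpm := pZero3_meas
  have hpoint : ∀ p : EuclideanSpace ℝ (Fin 3),
      ENNReal.ofReal (f p * Real.sqrt (1 + (p 2) ^ 2) ^ 3 /
                (pZero3 p * (1 + (p 0 * ξ 0 + p 1 * ξ 1) / pZero3 p)))
      ≤ ENNReal.ofReal (f p * Real.sqrt (1 + (p 2) ^ 2) ^ (5 + δ)) *
          (ENNReal.ofReal K * (g (p 0 * e0 + p 1 * e1) * h (p 1 * e0 - p 0 * e1)))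
        + ENNReal.ofReal (2 / R ^ 3) * ((ENNReal.ofReal c)⁻¹ *
            ENNReal.ofReal (pZero3 p ^ k * f p)) := by
    intro p
    have hP := pZero3_pos p
    have ha : 1 ≤ Real.sqrt (1 + (p 2) ^ 2) := by
      rw [Real.one_le_sqrt]; nlinarith [sq_nonneg (p 2)]
    have ha2 : Real.sqrt (1 + (p 2) ^ 2) ^ 2 = 1 + (p 2) ^ 2 := Real.sq_sqrt (by positivity)
    set a := Real.sqrt (1 + (p 2) ^ 2)
    set x := p 0 * e0 + p 1 * e1
    set y := p 1 * e0 - p 0 * e1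
    have hPe : pZero3 p ^ 2 = a ^ 2 + x ^ 2 + y ^ 2 := by
      rw [pZero3_sq, ha2]
      have : x ^ 2 + y ^ 2 = (p 0 ^ 2 + p 1 ^ 2) * (e0 ^ 2 + e1 ^ 2) := by
        simp only [x, y]; ring
      rw [he] at this
      linarith
    set P := pZero3 p
    have hDe : P * (1 + (p 0 * ξ 0 + p 1 * ξ 1) / P) = P + ‖ξ‖ * x := by
      rw [hx0, hx1]; simp only [x]; field_simp
    rw [hDe]
    obtain ⟨hD1, hD2⟩ := aux_D P a x y ‖ξ‖ hP hPe (norm_nonneg _) hξ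
    set D := P + ‖ξ‖ * x
    have haP : a ≤ P := by
      apply le_of_sq_le_sq _ hP.le
      nlinarith [sq_nonneg x, sq_nonneg y]
    have hD3 : a ^ 2 / (2 * P) ≤ D := le_trans (by gcongr; nlinarith [sq_nonneg y]) hD1
    by_cases hB : P < R * a
    · refine le_trans ?_ le_self_add
      simp only [hg, hh]
      rw [← ENNReal.ofReal_mul (by positivity), ← ENNReal.ofReal_mul (by positivity),
        ← ENNReal.ofReal_mul (mul_nonneg (hf0 p) (by positivity))]
      refine ENNReal.ofReal_le_ofReal ?_
      rw [mul_div_assoc, mul_assoc]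
      exact mul_le_mul_of_nonneg_left (aux_point δ R P a x y D hδ hR ha hP hPe hD1 hB) (hf0 p)
    · refine le_trans ?_ le_add_self
      rw [← ENNReal.ofReal_inv_of_pos hc, ← ENNReal.ofReal_mul (by positivity),
        ← ENNReal.ofReal_mul (by positivity)]
      refine ENNReal.ofReal_le_ofReal ?_
      rw [mul_div_assoc]
      calc _ ≤ f p * (2 / R ^ 3 * (c⁻¹ * P ^ k)) :=
            mul_le_mul_of_nonneg_left (hk a P D R hR ha hP haP hD3 hD2 (not_lt.1 hB)) (hf0 p)
        _ = _ := by ring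
  refine (lintegral_mono hpoint).trans ?_
  rw [lintegral_add_right _ (by fun_prop), lintegral_const_mul _ (by fun_prop),
    lintegral_const_mul _ (by fun_prop)]
  gcongr
  rw [aux_fubini _ (by fun_prop)]
  have hin : ∀ q : ℝ × ℝ, (∫⁻ p₃ : ℝ, ENNReal.ofReal (f (vec3 q.1 q.2 p₃) *
        Real.sqrt (1 + (vec3 q.1 q.2 p₃ 2) ^ 2) ^ (5 + δ)) *
          (ENNReal.ofReal K * (g (vec3 q.1 q.2 p₃ 0 * e0 + vec3 q.1 q.2 p₃ 1 * e1) *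
            h (vec3 q.1 q.2 p₃ 1 * e0 - vec3 q.1 q.2 p₃ 0 * e1))))
      ≤ ENNReal.ofReal C₀ * (ENNReal.ofReal K *
        (g (q.1 * e0 + q.2 * e1) * h (q.2 * e0 - q.1 * e1))) := by
    intro q
    have e0' : ∀ t, vec3 q.1 q.2 t 0 = q.1 := fun t => rfl
    have e1' : ∀ t, vec3 q.1 q.2 t 1 = q.2 := fun t => rfl
    have e2' : ∀ t, vec3 q.1 q.2 t 2 = t := fun t => rfl
    simp only [e0', e1', e2']
    rw [lintegral_mul_const' _ _ (by simp [hg, hh, ENNReal.mul_eq_top])]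
    gcongr
    exact hb _ _
  refine (lintegral_mono hin).trans (le_of_eq ?_)
  rw [lintegral_const_mul _ (by fun_prop), lintegral_const_mul _ (by fun_prop),
    aux_rot e0 e1 he g h hgm hhm, aux_int1 δ R hδ hR, aux_int2,
    ← ENNReal.ofReal_mul (by positivity), ← ENNReal.ofReal_mul (by positivity),
    ← ENNReal.ofReal_mul (by positivity)]
  congr 1
  rw [hK]; ring

/-- **Momentum-singularity estimates in two-and-one-half dimensions** (Lemma 7.9).
Let `f : ℝ³ → [0,∞)` be measurable with `sup_{p₁,p₂} ∫ f ⟨p₃⟩^{5+δ} dp₃ ≤ C₀`, and let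
`ξ ∈ ℝ²`, `|ξ| ≤ 1`.  Then there is `C = C(C₀, δ)` such that, writing
`p̂·ξ = (p₁ξ₁ + p₂ξ₂)/p₀`:
(i) if `|ξ| < 1` then `∫ f ⟨p₃⟩³/(p₀(1+p̂·ξ)) dp ≤ C (1−|ξ|²)^{−2/5} (∫ p₀² f dp)^{2/5}`;
(ii) `∫ f ⟨p₃⟩³/(p₀(1+p̂·ξ)) dp ≤ C (∫ p₀⁴ f dp)^{2/5}`. -/
theorem singularity_estimates_2_5d (δ C₀ : ℝ) (hδ : 0 < δ) (hC₀ : 0 < C₀) :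
    ∃ C : ℝ≥0, 0 < C ∧
      ∀ (f : EuclideanSpace ℝ (Fin 3) → ℝ),
        Measurable f → (∀ p, 0 ≤ f p) →
        (∀ p₁ p₂ : ℝ,
          (∫⁻ p₃ : ℝ, ENNReal.ofReal
              (f (vec3 p₁ p₂ p₃) * Real.sqrt (1 + p₃ ^ 2) ^ (5 + δ)))
            ≤ ENNReal.ofReal C₀) →
        ∀ (ξ : EuclideanSpace ℝ (Fin 2)), ‖ξ‖ ≤ 1 →
          ((‖ξ‖ < 1 →
            (∫⁻ p, ENNReal.ofReal (f p * Real.sqrt (1 + (p 2) ^ 2) ^ 3 /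
                (pZero3 p * (1 + (p 0 * ξ 0 + p 1 * ξ 1) / pZero3 p))))
              ≤ C * ENNReal.ofReal (1 - ‖ξ‖ ^ 2) ^ (-(2 / 5) : ℝ)
                * (∫⁻ p, ENNReal.ofReal (pZero3 p ^ 2 * f p)) ^ ((2 : ℝ) / 5))
          ∧ (∫⁻ p, ENNReal.ofReal (f p * Real.sqrt (1 + (p 2) ^ 2) ^ 3 /
                (pZero3 p * (1 + (p 0 * ξ 0 + p 1 * ξ 1) / pZero3 p))))
              ≤ C * (∫⁻ p, ENNReal.ofReal (pZero3 p ^ 4 * f p)) ^ ((2 : ℝ) / 5)) := by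
  have hI : 0 ≤ ∫ t : ℝ, (1 + t ^ 2) ^ (-(1 + δ) / 2) := integral_nonneg fun t => by positivity
  have hA : 0 < C₀ * (2 * 2 ^ ((1 + δ) / 2) *
          ((∫ t : ℝ, (1 + t ^ 2) ^ (-(1 + δ) / 2)) * Real.pi)) + 2 := by positivity
  refine ⟨Real.toNNReal _, Real.toNNReal_pos.2 hA, ?_⟩
  intro f hf hf0 hb ξ hξ
  constructor
  · intro hξ1
    have hc : 0 < 1 - ‖ξ‖ ^ 2 := by nlinarith [norm_nonneg ξ]
    refine (aux_core δ C₀ hδ hC₀ f hf hf0 hb ξ hξ 2 (1 - ‖ξ‖ ^ 2) hc ?_).trans (le_of_eq ?_)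
    · intro a P D R hR ha hP haP _ hD hRa
      have ha0 : 0 < a := by linarith
      have h3 : (R * a) ^ 3 ≤ P ^ 3 := by gcongr
      calc a ^ 3 / D ≤ a ^ 3 / (P * (1 - ‖ξ‖ ^ 2) / 2) := by gcongr
        _ ≤ _ := by
          rw [div_le_iff₀ (by positivity)]
          have : 2 / R ^ 3 * ((1 - ‖ξ‖ ^ 2)⁻¹ * P ^ 2) * (P * (1 - ‖ξ‖ ^ 2) / 2)
              = P ^ 3 / R ^ 3 := by field_simp
          rw [this, le_div_iff₀ (by positivity)]
          nlinarith
    · rw [ENNReal.mul_rpow_of_nonneg _ _ (by norm_num), ENNReal.inv_rpow, ← ENNReal.rpow_neg,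
        ← mul_assoc]
      rfl
  · refine (aux_core δ C₀ hδ hC₀ f hf hf0 hb ξ hξ 4 1 one_pos ?_).trans (le_of_eq ?_)
    · intro a P D R hR ha hP haP hD _ hRa
      have ha0 : 0 < a := by linarith
      have h3 : (R * a) ^ 3 ≤ P ^ 3 := by gcongr
      have h4 : a ≤ a ^ 3 := le_self_pow₀ ha (by norm_num)
      calc a ^ 3 / D ≤ a ^ 3 / (a ^ 2 / (2 * P)) := by gcongr
        _ = 2 * P * a := by field_simp
        _ ≤ 2 * P * (P ^ 3 / R ^ 3) := by
          gcongr
          rw [le_div_iff₀ (by positivity)]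
          have : a * R ^ 3 ≤ a ^ 3 * R ^ 3 := by gcongr
          nlinarith
        _ = _ := by field_simp
    · simp [ENNReal.ofReal]
end
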